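/- For every integer d ≥ 1 there exists a constant c_d > 0 depending only on d such that for every integer n ≥ 1 and every integer N ≥ c_d·n^{2d(d+1)/(d+2)} there exist points x_1,…,x_N ∈ S^d forming a spherical n-design. -/

import Mathlib

open MeasureTheory Finset
open scoped RealInnerProductSpace

noncomputable section
attribute [local instance] Classical.propDecidable

/-- Euclidean space `ℝ^{d+1}`. -/
abbrev Euc (d : ℕ) := EuclideanSpace ℝ (Fin (d + 1))

/-- The unit sphere `S^d ⊆ ℝ^{d+1}`. -/
abbrev Sph (d : ℕ) := Metric.sphere (0 : Euc d) 1

/-- Real-valued functions on the sphere. -/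
abbrev SphFun (d : ℕ) := Sph d → ℝ

/-- The normalized surface measure `μ_d` on `S^d`. -/
noncomputable def muSph (d : ℕ) : Measure (Sph d) :=
  ((volume : Measure (Euc d)).toSphere Set.univ)⁻¹ • (volume : Measure (Euc d)).toSphere

/-- Gegenbauer polynomials `C_k^α`, normalized so that `C_k^α(1) = binom(2α+k-1, k)`,
defined by the standard three-term recurrence. -/
noncomputable def gegenbauer (α : ℝ) : ℕ → Polynomial ℝ
  | 0 => 1
  | 1 => Polynomial.C (2 * α) * Polynomial.X
  | n + 2 =>
      Polynomial.C (2 * ((n : ℝ) + 1 + α) / ((n : ℝ) + 2)) *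
          (Polynomial.X * gegenbauer α (n + 1)) -
        Polynomial.C (((n : ℝ) + 2 * α) / ((n : ℝ) + 2)) * gegenbauer α n

/-- `dim H_k = ((2k+d-1)/(k+d-1))·binom(d+k-1, k)`. -/
noncomputable def dimHarm (d k : ℕ) : ℝ :=
  ((2 * (k : ℝ) + d - 1) / ((k : ℝ) + d - 1)) * (Nat.choose (d + k - 1) k : ℝ)

/-- The kernel polynomial `g_w(t) = Σ_{k=1}^n dim H_k / (w_k G_k^α(1)) · G_k^α(t)`,
with `α = (d-1)/2` and `w_k = k(k+d-1)`. -/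
noncomputable def gw (d n : ℕ) : Polynomial ℝ :=
  ∑ k ∈ Finset.Icc 1 n,
    Polynomial.C (dimHarm d k /
        (((k : ℝ) * ((k : ℝ) + d - 1)) * (gegenbauer (((d : ℝ) - 1) / 2) k).eval 1)) *
      gegenbauer (((d : ℝ) - 1) / 2) k

/-- The Laplace operator on polynomials in `d+1` variables. -/
noncomputable def polyLaplacian (d : ℕ) (p : MvPolynomial (Fin (d + 1)) ℝ) :
    MvPolynomial (Fin (d + 1)) ℝ :=
  ∑ i : Fin (d + 1), MvPolynomial.pderiv i (MvPolynomial.pderiv i p)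

/-- The space `H_k` of spherical harmonics of degree `k` on `S^d`: restrictions to the
sphere of harmonic homogeneous polynomials of degree `k`. -/
def sphHarmonic (d k : ℕ) : Set (SphFun d) :=
  {f | ∃ p : MvPolynomial (Fin (d + 1)) ℝ, p.IsHomogeneous k ∧ polyLaplacian d p = 0 ∧
        ∀ x : Sph d, f x = MvPolynomial.eval (fun i => (x : Euc d) i) p}

/-- The space `P_n`: restrictions to `S^d` of polynomials of total degree at most `n`
having zero mean over the sphere. -/
def PolySph (d n : ℕ) : Set (SphFun d) :=
  {f | ∃ p : MvPolynomial (Fin (d + 1)) ℝ, p.totalDegree ≤ n ∧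
        (∀ x : Sph d, f x = MvPolynomial.eval (fun i => (x : Euc d) i) p) ∧
        ∫ x, f x ∂muSph d = 0}

/-- The `H_k`-component of `P ∈ P_n` in the decomposition `P_n = ⊕_{k=1}^n H_k`
(the decomposition is unique; an arbitrary one is chosen if it exists). -/
noncomputable def harmComponent (d n : ℕ) (P : SphFun d) (k : ℕ) : SphFun d :=
  if h : ∃ c : ℕ → SphFun d, (∀ j, c j ∈ sphHarmonic d j) ∧ P = ∑ j ∈ Finset.Icc 1 n, c j
  then h.choose k else 0

/-- The inner product `⟨P,Q⟩_w = Σ_{k=1}^n w_k ∫ P_k Q_k dμ_d` with `w_k = k(k+d-1)`. -/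
noncomputable def innerW (d n : ℕ) (P Q : SphFun d) : ℝ :=
  ∑ k ∈ Finset.Icc 1 n, ((k : ℝ) * ((k : ℝ) + d - 1)) *
    ∫ x, harmComponent d n P k x * harmComponent d n Q k x ∂muSph d

/-- The norm `‖P‖_w = ⟨P,P⟩_w^{1/2}`. -/
noncomputable def normW (d n : ℕ) (P : SphFun d) : ℝ :=
  Real.sqrt (innerW d n P P)

/-- The function `G_x(y) = g_w((x,y))` on the sphere, for `x ∈ ℝ^{d+1}`. -/
noncomputable def GxFun (d n : ℕ) (x : Euc d) : SphFun d :=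
  fun y => (gw d n).eval ⟪x, (y : Euc d)⟫

/-- The extension of a function on the sphere to `ℝ^{d+1} \ {0}` by `x ↦ f(x/‖x‖)`
(with value `0` at the origin). -/
noncomputable def extendSph (d : ℕ) (f : SphFun d) : Euc d → ℝ :=
  fun x =>
    if hx : x = 0 then 0
    else f ⟨‖x‖⁻¹ • x, by
      rw [mem_sphere_zero_iff_norm, norm_smul, norm_inv, norm_norm,
        inv_mul_cancel₀ (norm_ne_zero_iff.mpr hx)]⟩

/-- The spherical gradient `∇f(x) = (∂/∂x) f(x/‖x‖)`. -/
noncomputable def sphGrad (d : ℕ) (f : SphFun d) (x : Euc d) : Euc d :=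
  gradient (extendSph d f) x

/-- The spherical Hessian quadratic form `∇²f(x)·y·y`. -/
noncomputable def sphHessApply (d : ℕ) (f : SphFun d) (x y : Euc d) : ℝ :=
  iteratedFDeriv ℝ 2 (extendSph d f) x ![y, y]

/-- `‖∇²f(x₀)‖ = max { |∇²f(x₀)·y·y| : ‖y‖ = 1, (y,x₀) = 0 }`. -/
noncomputable def sphHessNorm (d : ℕ) (f : SphFun d) (x₀ : Sph d) : ℝ :=
  sSup {r : ℝ | ∃ y : Euc d, ‖y‖ = 1 ∧ ⟪y, (x₀ : Euc d)⟫ = 0 ∧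
    r = |sphHessApply d f (x₀ : Euc d) y|}

/-- `x_1, …, x_N ∈ S^d` form a spherical `n`-design. -/
def IsSphericalDesign (d n N : ℕ) (x : Fin N → Sph d) : Prop :=
  ∀ p : MvPolynomial (Fin (d + 1)) ℝ, p.totalDegree ≤ n →
    ∫ y, MvPolynomial.eval (fun j => (y : Euc d) j) p ∂muSph d =
      (N : ℝ)⁻¹ * ∑ i, MvPolynomial.eval (fun j => ((x i : Euc d)) j) p

/-- An area-regular partition `R_1, …, R_N` of `S^d`: closed sets with pairwise disjoint
interiors, covering the sphere, each of normalized measure `1/N`. -/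
def IsAreaRegularPartition (d N : ℕ) (R : Fin N → Set (Sph d)) : Prop :=
  (∀ i, IsClosed (R i)) ∧ (⋃ i, R i) = Set.univ ∧
    (∀ i j, i ≠ j → interior (R i) ∩ interior (R j) = ∅) ∧
    ∀ i, muSph d (R i) = 1 / N

/-- The Marcinkiewicz–Zygmund property of degree `m` for points `x_1, …, x_N ∈ S^d`. -/
def MZProperty (d m N : ℕ) (x : Fin N → Sph d) : Prop :=
  ∀ p : MvPolynomial (Fin (d + 1)) ℝ, p.totalDegree ≤ m →
    (1 / 2) * (∫ y, |MvPolynomial.eval (fun j => (y : Euc d) j) p| ∂muSph d) ≤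
        (N : ℝ)⁻¹ * ∑ i, |MvPolynomial.eval (fun j => ((x i : Euc d)) j) p| ∧
      (N : ℝ)⁻¹ * ∑ i, |MvPolynomial.eval (fun j => ((x i : Euc d)) j) p| ≤
        (3 / 2) * ∫ y, |MvPolynomial.eval (fun j => (y : Euc d) j) p| ∂muSph d

/-- The point `x_i(P)`: move `x` along the great circle in the direction of the spherical
gradient `∇P(x)` through angle `‖∇P(x)‖`. -/
noncomputable def movePoint (d : ℕ) (P : SphFun d) (x : Sph d) : Euc d :=
  if _h : sphGrad d P (x : Euc d) = 0 then (x : Euc d)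
  else Real.cos ‖sphGrad d P (x : Euc d)‖ • (x : Euc d) +
    Real.sin ‖sphGrad d P (x : Euc d)‖ • (‖sphGrad d P (x : Euc d)‖⁻¹ • sphGrad d P (x : Euc d))

/-- The map `L(P) = (1/N) Σ_i G_{x_i(P)}`. -/
noncomputable def Lmap (d n N : ℕ) (x : Fin N → Sph d) (P : SphFun d) : SphFun d :=
  (N : ℝ)⁻¹ • ∑ i, GxFun d n (movePoint d P (x i))

end

section

namespace SD

/-- Squared Euclidean norm of a coordinate vector. -/
noncomputable def q {d : ℕ} (z : Fin (d + 1) → ℝ) : ℝ := ∑ i, z i ^ 2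

/-- Normalization of a coordinate vector. -/
noncomputable def nz {d : ℕ} (z : Fin (d + 1) → ℝ) : Fin (d + 1) → ℝ := fun i => z i / √(q z)

/-- Degree-zero homogeneous extension of a polynomial. -/
noncomputable def H {d : ℕ} (P : MvPolynomial (Fin (d + 1)) ℝ) (z : Fin (d + 1) → ℝ) : ℝ :=
  MvPolynomial.eval (nz z) P

/-- Infinitesimal rotation operators. -/
noncomputable def Dop {d : ℕ} (a b : Fin (d + 1)) (P : MvPolynomial (Fin (d + 1)) ℝ) :
    MvPolynomial (Fin (d + 1)) ℝ :=
  MvPolynomial.X a * MvPolynomial.pderiv b P - MvPolynomial.X b * MvPolynomial.pderiv a P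

/-- The normalized surface measure as a measure on coordinate space. -/
noncomputable def nu (d : ℕ) : Measure (Fin (d + 1) → ℝ) :=
  (muSph d).map (fun (y : Sph d) i => (y : Euc d) i)

end SD

end

section

open MeasureTheory Finset
open scoped ENNReal

namespace SD

lemma q_nonneg {d : ℕ} (z : Fin (d + 1) → ℝ) : 0 ≤ q z := Finset.sum_nonneg fun _ _ => sq_nonneg _

lemma q_eq_norm {d : ℕ} (x : Euc d) : q (fun i => x i) = ‖x‖ ^ 2 := by
  rw [EuclideanSpace.norm_sq_eq]; simp [q]

lemma nz_eq {d : ℕ} (x : Euc d) : nz (fun i => x i) = fun i => (‖x‖⁻¹ • x) i := by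
  funext i
  simp [nz, q_eq_norm, div_eq_inv_mul]

lemma measurable_q {d : ℕ} : Measurable (q (d := d)) := by
  unfold q; fun_prop

lemma measurable_nz {d : ℕ} : Measurable (nz (d := d)) := by
  unfold nz
  refine measurable_pi_lambda _ fun i => ?_
  exact (measurable_pi_apply i).div (measurable_q.sqrt)

lemma measurable_coord {d : ℕ} : Measurable (fun (y : Sph d) i => (y : Euc d) i) := by
  refine measurable_pi_lambda _ fun i => ?_
  have : Continuous (fun y : Sph d => (y : Euc d) i) := by fun_prop
  exact this.measurable

lemma polar_aux {d : ℕ} (f : (Fin (d + 1) → ℝ) → ℝ≥0∞) (hf : Measurable f)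
    (w : ℝ → ℝ≥0∞) (hw : Measurable w) :
    ∫⁻ z : Fin (d + 1) → ℝ, f (nz z) * w (q z) =
      (∫⁻ y, f (fun i => (y : Euc d) i) ∂(volume : Measure (Euc d)).toSphere) *
      ∫⁻ r : Set.Ioi (0:ℝ), w (r.1 ^ 2) ∂(Measure.volumeIoiPow (Module.finrank ℝ (Euc d) - 1)) := by
  have h1 : ∫⁻ z : Fin (d + 1) → ℝ, f (nz z) * w (q z) =
      ∫⁻ x : Euc d, f (nz (fun i => x i)) * w (q (fun i => x i)) := by
    have := (PiLp.volume_preserving_ofLp (Fin (d+1))).lintegral_comp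
      (f := fun z => f (nz z) * w (q z))
      ((hf.comp measurable_nz).mul (hw.comp measurable_q))
    rw [← this]
  rw [h1]
  have h2 : ∫⁻ x : Euc d, f (nz (fun i => x i)) * w (q (fun i => x i)) =
      ∫⁻ x : ({0}ᶜ : Set (Euc d)), f (nz (fun i => x.1 i)) * w (q (fun i => x.1 i))
        ∂((volume : Measure (Euc d)).comap Subtype.val) := by
    rw [lintegral_subtype_comap (s := ({0}ᶜ : Set (Euc d))) (measurableSet_singleton _).compl
      (fun x => f (nz (fun i => x i)) * w (q (fun i => x i))),
      restrict_compl_singleton]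
  rw [h2]
  have h3 := ((volume : Measure (Euc d)).measurePreserving_homeomorphUnitSphereProd).lintegral_comp
    (f := fun p : Sph d × Set.Ioi (0:ℝ) => f (fun i => (p.1 : Euc d) i) * w (p.2.1 ^ 2)) (by
      refine ((hf.comp measurable_coord).comp measurable_fst).mul ?_
      exact hw.comp (by fun_prop))
  rw [← lintegral_prod_mul (by exact (hf.comp measurable_coord).aemeasurable)
    (by exact (hw.comp (by fun_prop)).aemeasurable)]
  rw [← h3]
  refine lintegral_congr fun x => ?_
  rw [nz_eq, q_eq_norm]
  simp [homeomorphUnitSphereProd]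

lemma toSphere_univ_ne_zero (d : ℕ) : (volume : Measure (Euc d)).toSphere Set.univ ≠ 0 := by
  rw [Measure.measure_univ_ne_zero]
  exact Measure.toSphere_ne_zero _

lemma lintegral_nu {d : ℕ} (f : (Fin (d + 1) → ℝ) → ℝ≥0∞) (hf : Measurable f) :
    ∫⁻ y, f y ∂nu d = ((volume : Measure (Euc d)).toSphere Set.univ)⁻¹ *
      ∫⁻ y, f (fun i => (y : Euc d) i) ∂(volume : Measure (Euc d)).toSphere := by
  rw [nu, lintegral_map hf measurable_coord, muSph, lintegral_smul_measure, smul_eq_mul]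

/-- Polar coordinates. -/
lemma polar {d : ℕ} (f : (Fin (d + 1) → ℝ) → ℝ≥0∞) (hf : Measurable f)
    (w : ℝ → ℝ≥0∞) (hw : Measurable w) :
    ∫⁻ z : Fin (d + 1) → ℝ, f (nz z) * w (q z) =
      (∫⁻ z : Fin (d + 1) → ℝ, w (q z)) * ∫⁻ y, f y ∂nu d := by
  have h1 := polar_aux (d := d) (fun _ => 1) measurable_const w hw
  simp only [one_mul, lintegral_const] at h1
  rw [polar_aux f hf w hw, h1, lintegral_nu f hf]
  have h0 := toSphere_univ_ne_zero d
  have h2 : (volume : Measure (Euc d)).toSphere Set.univ ≠ ⊤ := measure_ne_top _ _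
  rw [mul_right_comm, ← mul_assoc, ENNReal.mul_inv_cancel h0 h2, one_mul]

instance (d : ℕ) : IsProbabilityMeasure (nu d) := by
  constructor
  have := lintegral_nu (d := d) (fun _ => 1) measurable_const
  simp only [lintegral_one] at this
  rw [this, ENNReal.inv_mul_cancel (toSphere_univ_ne_zero d) (measure_ne_top _ _)]

instance (d : ℕ) : IsProbabilityMeasure (muSph d) := by
  constructor
  have := measure_univ (μ := nu d)
  rwa [nu, Measure.map_apply measurable_coord MeasurableSet.univ, Set.preimage_univ] at this

lemma nu_ae (d : ℕ) : ∀ᵐ y ∂nu d, q y = 1 := by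
  rw [nu, ae_map_iff measurable_coord.aemeasurable (show MeasurableSet {y : Fin (d+1) → ℝ | q y = 1} from measurable_q (measurableSet_singleton 1))]
  refine Filter.Eventually.of_forall fun y => ?_
  rw [q_eq_norm]
  have : ‖(y : Euc d)‖ = 1 := by simp
  rw [this]; norm_num

lemma nz_of_q {d : ℕ} {y : Fin (d + 1) → ℝ} (h : q y = 1) : nz y = y := by
  funext i; simp [nz, h]

/-- ball volume constants -/
lemma vol_q_lt_top (d : ℕ) (R : ℝ) : volume {z : Fin (d + 1) → ℝ | q z ≤ R} < ⊤ := by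
  refine (Bornology.IsBounded.measure_lt_top ?_)
  refine (Metric.isBounded_closedBall (x := (0 : Fin (d+1) → ℝ)) (r := √R)).subset fun z hz => ?_
  rw [mem_closedBall_zero_iff, pi_norm_le_iff_of_nonneg (Real.sqrt_nonneg _)]
  intro i
  rw [Real.norm_eq_abs]
  refine Real.abs_le_sqrt (le_trans ?_ hz)
  exact Finset.single_le_sum (f := fun i => z i ^ 2) (fun _ _ => sq_nonneg _) (Finset.mem_univ i)

lemma vol_q_pos (d : ℕ) {R : ℝ} (hR : 0 < R) : 0 < volume {z : Fin (d + 1) → ℝ | q z ≤ R} := by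
  have ho : IsOpen {z : Fin (d + 1) → ℝ | q z < R} := by
    have : Continuous (q (d := d)) := by unfold q; fun_prop
    exact isOpen_lt this continuous_const
  refine lt_of_lt_of_le (ho.measure_pos volume ⟨0, ?_⟩) (measure_mono fun z hz => le_of_lt (show q z < R from hz))
  simp [q, hR]

/-- polar coordinates on a ball -/
lemma polar_ball {d : ℕ} (f : (Fin (d + 1) → ℝ) → ℝ≥0∞) (hf : Measurable f) (R : ℝ) :
    ∫⁻ z in {z : Fin (d + 1) → ℝ | q z ≤ R}, f (nz z) =
      volume {z : Fin (d + 1) → ℝ | q z ≤ R} * ∫⁻ y, f y ∂nu d := by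
  have hm : MeasurableSet {z : Fin (d + 1) → ℝ | q z ≤ R} := measurable_q measurableSet_Iic
  have h := polar f hf ((Set.Iic R).indicator (fun _ => 1)) (measurable_one.indicator measurableSet_Iic)
  have e1 : ∀ z : Fin (d+1) → ℝ, (Set.Iic R).indicator (fun _ => (1:ℝ≥0∞)) (q z) =
    ({z : Fin (d + 1) → ℝ | q z ≤ R}).indicator (fun _ => 1) z := fun z => by
      simp [Set.indicator]
  simp only [e1] at h
  rw [lintegral_indicator hm, setLIntegral_one] at h
  rw [← h, ← lintegral_indicator hm]
  refine lintegral_congr fun z => ?_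
  by_cases hz : z ∈ {z : Fin (d + 1) → ℝ | q z ≤ R} <;> simp [hz]

end SD

end

section

open MeasureTheory Finset
open scoped ENNReal

namespace SD

lemma hasDerivAt_eval {σ : Type*} [Fintype σ] [DecidableEq σ] (P : MvPolynomial σ ℝ) (γ : ℝ → σ → ℝ) (γ' : σ → ℝ) (t : ℝ)
    (h : ∀ i, HasDerivAt (fun s => γ s i) (γ' i) t) :
    HasDerivAt (fun s => MvPolynomial.eval (γ s) P)
      (∑ i, MvPolynomial.eval (γ t) (MvPolynomial.pderiv i P) * γ' i) t := by
  induction P using MvPolynomial.induction_on with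
  | C a => simpa using hasDerivAt_const t a
  | add p q hp hq =>
    have := hp.add hq
    simp only [map_add, add_mul, Finset.sum_add_distrib]
    exact this
  | mul_X p i hp =>
    have := hp.mul (h i)
    simp only [map_mul, MvPolynomial.eval_X, Derivation.leibniz, map_add, smul_eq_mul, add_mul,
      Finset.sum_add_distrib, MvPolynomial.pderiv_X]
    refine this.congr_deriv ?_
    rw [add_comm]
    congr 1
    · rw [Finset.sum_eq_single i]
      · simp
      · intro b _ hb; simp [Pi.single_apply, hb.symm]
      · simp
    · rw [Finset.sum_mul]
      exact Finset.sum_congr rfl fun j _ => by ring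

/-- rotation in a coordinate plane -/
noncomputable def rot {d : ℕ} (a b : Fin (d + 1)) (t : ℝ) (z : Fin (d + 1) → ℝ) :
    Fin (d + 1) → ℝ := fun i =>
  if i = a then Real.cos t * z a - Real.sin t * z b
  else if i = b then Real.sin t * z a + Real.cos t * z b else z i

lemma rot_add {d : ℕ} {a b : Fin (d + 1)} (hab : a ≠ b) (s t : ℝ) (z : Fin (d + 1) → ℝ) :
    rot a b s (rot a b t z) = rot a b (s + t) z := by
  funext i
  simp only [rot, Real.cos_add, Real.sin_add, hab.symm, if_true, if_false]
  split_ifs <;> ring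

lemma rot_zero {d : ℕ} {a b : Fin (d + 1)} (z : Fin (d + 1) → ℝ) :
    rot a b 0 z = z := by
  funext i
  simp only [rot, Real.cos_zero, Real.sin_zero]
  split_ifs with h1 h2
  · subst h1; ring
  · subst h2; ring
  · rfl

lemma q_rot {d : ℕ} {a b : Fin (d + 1)} (hab : a ≠ b) (t : ℝ) (z : Fin (d + 1) → ℝ) :
    q (rot a b t z) = q z := by
  unfold q
  have e : ∀ f : Fin (d+1) → ℝ, ∑ i, f i = f a + (f b + ∑ i ∈ (univ.erase a).erase b, f i) := by
    intro f
    rw [Finset.add_sum_erase _ _ (Finset.mem_erase.2 ⟨hab.symm, Finset.mem_univ _⟩),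
      Finset.add_sum_erase _ _ (Finset.mem_univ _)]
  rw [e, e (fun i => z i ^ 2)]
  have : ∑ i ∈ (univ.erase a).erase b, rot a b t z i ^ 2 =
      ∑ i ∈ (univ.erase a).erase b, z i ^ 2 := by
    refine Finset.sum_congr rfl fun i hi => ?_
    simp only [Finset.mem_erase] at hi
    simp [rot, hi.1, hi.2.1]
  rw [this]
  simp only [rot, hab.symm, if_true, if_false]
  linear_combination (z a ^ 2 + z b ^ 2) * Real.sin_sq_add_cos_sq t

lemma rot_nz {d : ℕ} {a b : Fin (d + 1)} (hab : a ≠ b) (t : ℝ) (z : Fin (d + 1) → ℝ) :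
    rot a b t (nz z) = nz (rot a b t z) := by
  funext i
  simp only [nz, q_rot hab]
  simp only [rot, nz]
  split_ifs <;> ring

/-- rotation as a linear isometry -/
noncomputable def rotL {d : ℕ} {a b : Fin (d + 1)} (hab : a ≠ b) (t : ℝ) : Euc d ≃ₗᵢ[ℝ] Euc d where
  toFun x := WithLp.toLp 2 (rot a b t x.ofLp)
  invFun x := WithLp.toLp 2 (rot a b (-t) x.ofLp)
  map_add' x y := by
    ext i; simp only [rot, PiLp.add_apply]; split_ifs <;> ring
  map_smul' c x := by
    ext i; simp only [rot, PiLp.smul_apply, smul_eq_mul, RingHom.id_apply]; split_ifs <;> ring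
  left_inv x := by simp [rot_add hab, rot_zero]
  right_inv x := by simp [rot_add hab, rot_zero]
  norm_map' x := by
    have h1 := q_eq_norm x
    have h2 := q_eq_norm (WithLp.toLp 2 (rot a b t x.ofLp) : Euc d)
    have h3 := q_rot hab t x.ofLp
    have : ‖(WithLp.toLp 2 (rot a b t x.ofLp) : Euc d)‖ ^ 2 = ‖x‖ ^ 2 := by
      rw [← h1, ← h2]; exact h3
    exact (pow_left_inj₀ (norm_nonneg _) (norm_nonneg _) two_ne_zero).1 this

lemma rot_volume {d : ℕ} {a b : Fin (d + 1)} (hab : a ≠ b) (t : ℝ) :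
    MeasurePreserving (rot a b t) (volume : Measure (Fin (d+1) → ℝ)) volume := by
  have := ((PiLp.volume_preserving_ofLp (Fin (d+1))).comp
    ((rotL hab t).measurePreserving)).comp (PiLp.volume_preserving_toLp (Fin (d+1)))
  exact this

lemma measurable_rot {d : ℕ} {a b : Fin (d + 1)} (t : ℝ) : Measurable (rot a b t) := by
  refine measurable_pi_lambda _ fun i => ?_
  unfold rot
  split_ifs <;> fun_prop

lemma lintegral_rot {d : ℕ} {a b : Fin (d + 1)} (hab : a ≠ b) (t : ℝ)
    (f : (Fin (d + 1) → ℝ) → ℝ≥0∞) (hf : Measurable f) :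
    ∫⁻ y, f (rot a b t y) ∂nu d = ∫⁻ y, f y ∂nu d := by
  have h1 := polar_ball f hf 1
  have h2 := polar_ball (fun y => f (rot a b t y)) (hf.comp (measurable_rot t)) 1
  have hm : MeasurableSet {z : Fin (d + 1) → ℝ | q z ≤ 1} := measurable_q measurableSet_Iic
  have h3 : ∫⁻ z in {z : Fin (d + 1) → ℝ | q z ≤ 1}, f (rot a b t (nz z)) =
      ∫⁻ z in {z : Fin (d + 1) → ℝ | q z ≤ 1}, f (nz z) := by
    have := (rot_volume hab t).setLIntegral_comp_preimage hm (f := fun z => f (nz z))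
      (hf.comp measurable_nz)
    rw [← this]
    have e : rot a b t ⁻¹' {z : Fin (d + 1) → ℝ | q z ≤ 1} = {z : Fin (d + 1) → ℝ | q z ≤ 1} := by
      ext z; simp [q_rot hab]
    rw [e]
    refine lintegral_congr fun z => ?_
    rw [rot_nz hab]
  rw [h2, h1] at h3
  exact (ENNReal.mul_right_inj (vol_q_pos d one_pos).ne' (vol_q_lt_top d 1).ne).1 h3

/-! ### trigonometric polynomials -/

/-- trigonometric polynomials of degree at most `n` -/
noncomputable def trigS (n : ℕ) : Submodule ℂ (ℝ → ℂ) :=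
  Submodule.span ℂ {f | ∃ j : ℤ, |j| ≤ n ∧ f = fun t : ℝ => Complex.exp (Complex.I * j * t)}

lemma trigS_mono {m n : ℕ} (h : m ≤ n) : trigS m ≤ trigS n := by
  refine Submodule.span_mono ?_
  rintro f ⟨j, hj, rfl⟩
  exact ⟨j, hj.trans (by exact_mod_cast h), rfl⟩

lemma trigS_mul {m n : ℕ} {f g : ℝ → ℂ} (hf : f ∈ trigS m) (hg : g ∈ trigS n) :
    f * g ∈ trigS (m + n) := by
  have : f * g ∈ trigS m * trigS n := Submodule.mul_mem_mul hf hg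
  rw [trigS, trigS, Submodule.span_mul_span] at this
  refine Submodule.span_mono ?_ this
  rintro _ ⟨_, ⟨j, hj, rfl⟩, _, ⟨k, hk, rfl⟩, rfl⟩
  refine ⟨j + k, ?_, ?_⟩
  · push_cast; exact (abs_add_le j k).trans (add_le_add hj hk)
  · funext t
    simp only [Pi.mul_apply, ← Complex.exp_add]
    congr 1; push_cast; ring

lemma trigS_const (n : ℕ) (c : ℂ) : (fun _ => c) ∈ trigS n := by
  have : (fun t : ℝ => Complex.exp (Complex.I * (0 : ℤ) * t)) ∈ trigS n :=
    Submodule.subset_span ⟨0, by simp, rfl⟩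
  have h2 := Submodule.smul_mem _ c this
  convert h2 using 1
  funext t; simp

lemma trigS_cos : (fun t : ℝ => ((Real.cos t : ℝ) : ℂ)) ∈ trigS 1 := by
  have h1 : (fun t : ℝ => Complex.exp (Complex.I * (1 : ℤ) * t)) ∈ trigS 1 :=
    Submodule.subset_span ⟨1, by simp, rfl⟩
  have h2 : (fun t : ℝ => Complex.exp (Complex.I * (-1 : ℤ) * t)) ∈ trigS 1 :=
    Submodule.subset_span ⟨-1, by simp, rfl⟩
  have h3 := Submodule.smul_mem _ (1/2 : ℂ) (Submodule.add_mem _ h1 h2)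
  convert h3 using 1
  funext t
  simp [Complex.cos]
  ring_nf

lemma trigS_sin : (fun t : ℝ => ((Real.sin t : ℝ) : ℂ)) ∈ trigS 1 := by
  have h1 : (fun t : ℝ => Complex.exp (Complex.I * (1 : ℤ) * t)) ∈ trigS 1 :=
    Submodule.subset_span ⟨1, by simp, rfl⟩
  have h2 : (fun t : ℝ => Complex.exp (Complex.I * (-1 : ℤ) * t)) ∈ trigS 1 :=
    Submodule.subset_span ⟨-1, by simp, rfl⟩
  have h3 := Submodule.smul_mem _ (Complex.I/2 : ℂ) (Submodule.sub_mem _ h2 h1)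
  convert h3 using 1
  funext t
  simp [Complex.sin]
  ring_nf

lemma trigS_rot {d : ℕ} (a b : Fin (d + 1)) (z : Fin (d + 1) → ℝ) (i : Fin (d + 1)) :
    (fun t : ℝ => ((rot a b t z i : ℝ) : ℂ)) ∈ trigS 1 := by
  have hc : ∀ c : ℝ, (fun t : ℝ => ((Real.cos t * c : ℝ) : ℂ)) ∈ trigS 1 := fun c => by
    have := Submodule.smul_mem _ (c : ℂ) trigS_cos
    convert this using 1; funext t; simp [mul_comm]
  have hs : ∀ c : ℝ, (fun t : ℝ => ((Real.sin t * c : ℝ) : ℂ)) ∈ trigS 1 := fun c => by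
    have := Submodule.smul_mem _ (c : ℂ) trigS_sin
    convert this using 1; funext t; simp [mul_comm]
  unfold rot
  split_ifs
  · have := Submodule.sub_mem _ (hc (z a)) (hs (z b))
    convert this using 1; funext t; simp
  · have := Submodule.add_mem _ (hs (z a)) (hc (z b))
    convert this using 1; funext t; simp
  · exact trigS_const 1 _

lemma trigS_eval {d n : ℕ} (a b : Fin (d + 1)) (z : Fin (d + 1) → ℝ)
    (P : MvPolynomial (Fin (d + 1)) ℝ) (hP : P.totalDegree ≤ n) :
    (fun t : ℝ => ((MvPolynomial.eval (rot a b t z) P : ℝ) : ℂ)) ∈ trigS n := by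
  have hpow : ∀ (i : Fin (d+1)) (k : ℕ), (fun t : ℝ => ((rot a b t z i : ℝ) : ℂ) ^ k) ∈ trigS k := by
    intro i k
    induction k with
    | zero => simpa using trigS_const 0 1
    | succ k ih => simp only [pow_succ]; exact trigS_mul ih (trigS_rot a b z i)
  have hprod : ∀ (m : Fin (d+1) →₀ ℕ) (s : Finset (Fin (d+1))),
      (fun t : ℝ => ∏ i ∈ s, ((rot a b t z i : ℝ) : ℂ) ^ (m i)) ∈ trigS (∑ i ∈ s, m i) := by
    intro m s
    induction s using Finset.induction_on with
    | empty => simpa using trigS_const 0 1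
    | insert i s hi ih =>
      simp only [Finset.prod_insert hi, Finset.sum_insert hi]
      exact trigS_mul (hpow i _) ih
  have : (fun t : ℝ => ((MvPolynomial.eval (rot a b t z) P : ℝ) : ℂ)) =
      ∑ m ∈ P.support, ((MvPolynomial.coeff m P : ℝ) : ℂ) •
        (fun t : ℝ => ∏ i, ((rot a b t z i : ℝ) : ℂ) ^ (m i)) := by
    funext t
    rw [MvPolynomial.eval_eq']
    simp
  rw [this]
  refine Submodule.sum_mem _ fun m hm => Submodule.smul_mem _ _ (trigS_mono ?_ (hprod m univ))
  refine le_trans (le_of_eq ?_) ((MvPolynomial.le_totalDegree hm).trans hP)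
  rw [Finsupp.sum_fintype _ _ (fun _ => rfl)]

lemma sum_roots (M : ℕ) (hM : 0 < M) (l : ℤ) (hl : |l| < M) :
    ∑ k ∈ Finset.range M, Complex.exp (Complex.I * l * ((2 * Real.pi * k / M : ℝ) : ℂ)) =
      if l = 0 then (M : ℂ) else 0 := by
  have hM' : (M : ℂ) ≠ 0 := by exact_mod_cast hM.ne'
  split_ifs with h
  · simp [h]
  · set x := Complex.exp (2 * Real.pi * Complex.I * l / M) with hx
    have e : ∀ k : ℕ, Complex.exp (Complex.I * l * ((2 * Real.pi * k / M : ℝ) : ℂ)) = x ^ k := by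
      intro k
      rw [hx, ← Complex.exp_nat_mul]
      congr 1; push_cast; ring
    simp only [e]
    have hx1 : x ≠ 1 := by
      intro hx1
      rw [hx, Complex.exp_eq_one_iff] at hx1
      obtain ⟨m, hm⟩ := hx1
      have h2 : (2 * Real.pi * Complex.I : ℂ) ≠ 0 := Complex.two_pi_I_ne_zero
      have h3 : (l : ℂ) = m * M := by
        field_simp at hm
        have := mul_left_cancel₀ h2 (show 2 * Real.pi * Complex.I * (l:ℂ) = 2 * Real.pi * Complex.I * (m * M) by linear_combination (2 * Real.pi * Complex.I) * hm)
        exact this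
      have h4 : l = m * M := by exact_mod_cast h3
      have hm0 : m ≠ 0 := by rintro rfl; simp at h4; exact h h4
      have : (M : ℤ) ≤ |l| := by
        rw [h4, abs_mul, Nat.abs_cast]
        have := Int.one_le_abs hm0
        nlinarith [Int.natCast_nonneg M]
      omega
    have hxM : x ^ M = 1 := by
      rw [hx, ← Complex.exp_nat_mul, Complex.exp_eq_one_iff]
      exact ⟨l, by field_simp⟩
    rw [geom_sum_eq hx1, hxM]; simp

lemma cnt (n : ℕ) (m : ℤ) (hm : |m| ≤ 2 * n) :
    ((∑ p ∈ range n, ∑ r ∈ range n, if (p : ℤ) - r = m then 1 else 0 : ℕ) : ℤ) = max 0 (n - |m|) := by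
  have key : ∀ k : ℕ, (∑ p ∈ range n, ∑ r ∈ range n, if (p : ℤ) - r = k then 1 else 0 : ℕ) = n - k := by
    intro k
    have : ∀ r ∈ range n, (∑ p ∈ range n, if (p : ℤ) - r = k then 1 else 0 : ℕ) =
        if r < n - k then 1 else 0 := by
      intro r hr
      have e : ∀ p : ℕ, ((p : ℤ) - r = k) ↔ p = r + k := by intro p; omega
      simp only [e, Finset.sum_ite_eq', Finset.mem_range]
      congr 1
      simp at hr ⊢; omega
    rw [Finset.sum_comm, Finset.sum_congr rfl this, Finset.sum_ite]
    simp only [Finset.sum_const, smul_eq_mul, mul_one, mul_zero, add_zero]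
    have : (range n).filter (fun r => r < n - k) = range (n - k) := by
      ext r; simp; omega
    rw [this, Finset.card_range]
  rcases le_total 0 m with h | h
  · obtain ⟨k, rfl⟩ := Int.eq_ofNat_of_zero_le h
    have := key k
    simp only [this]
    rw [abs_of_nonneg h]
    omega
  · obtain ⟨k, hk⟩ := Int.eq_ofNat_of_zero_le (show 0 ≤ -m by omega)
    have := key k
    rw [Finset.sum_comm] at this
    have e : ∀ p r : ℕ, ((p : ℤ) - r = m) ↔ ((r:ℤ) - p = k) := by intro p r; omega
    simp only [e, this]
    rw [abs_of_nonpos h]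
    omega

end SD

end

section

open MeasureTheory Finset
open scoped ENNReal

namespace SD

/-- quadrature nodes -/
noncomputable def tk (n k : ℕ) : ℝ := 2 * Real.pi * k / (4 * n : ℕ)

/-- Fejer kernel at the nodes -/
noncomputable def fej (n k : ℕ) : ℝ :=
  Complex.normSq (∑ p ∈ range n, Complex.exp (Complex.I * p * (tk n k : ℝ)))

/-- Bernstein weights -/
noncomputable def bw (n k : ℕ) : ℝ := (4 * n : ℝ)⁻¹ * (2 * Real.sin (n * tk n k)) * fej n k

lemma fej_eq (n k : ℕ) : (fej n k : ℂ) = ∑ p ∈ range n, ∑ r ∈ range n,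
    Complex.exp (Complex.I * ((p - r : ℤ) : ℂ) * (tk n k : ℝ)) := by
  unfold fej
  rw [Complex.normSq_eq_conj_mul_self, map_sum, Finset.sum_mul_sum, Finset.sum_comm]
  refine Finset.sum_congr rfl fun p _ => Finset.sum_congr rfl fun r _ => ?_
  rw [← Complex.exp_conj, ← Complex.exp_add]
  congr 1
  simp only [map_mul, Complex.conj_I, Complex.conj_ofReal, map_natCast]
  push_cast; ring

lemma fej_sum (n : ℕ) (hn : 1 ≤ n) (l : ℤ) (hl : |l| ≤ 2 * n) :
    ∑ k ∈ range (4 * n), Complex.exp (Complex.I * l * (tk n k : ℝ)) * fej n k =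
      (4 * n : ℂ) * ((max 0 (n - |l|) : ℤ) : ℂ) := by
  simp only [fej_eq, Finset.mul_sum]
  rw [Finset.sum_comm]
  have : ∀ p ∈ range n, ∑ k ∈ range (4 * n), ∑ r ∈ range n,
      Complex.exp (Complex.I * l * (tk n k : ℝ)) *
        Complex.exp (Complex.I * ((p - r : ℤ) : ℂ) * (tk n k : ℝ)) =
      ∑ r ∈ range n, if ((p:ℤ) - r = -l) then (4 * n : ℂ) else 0 := by
    intro p hp
    rw [Finset.sum_comm]
    refine Finset.sum_congr rfl fun r hr => ?_
    have h := sum_roots (4 * n) (by omega) (l + (p - r)) (by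
      simp at hp hr
      rw [abs_lt]; rw [abs_le] at hl
      push_cast; constructor <;> omega)
    have e : (l + ((p:ℤ) - r) = 0) ↔ ((p:ℤ) - r = -l) := by constructor <;> intro h <;> omega
    simp only [e] at h
    push_cast at h ⊢
    rw [← h]
    refine Finset.sum_congr rfl fun k _ => ?_
    rw [← Complex.exp_add]
    congr 1
    simp only [tk]
    push_cast
    ring
  rw [Finset.sum_congr rfl this]
  have h := cnt n (-l) (by simpa using hl)
  rw [abs_neg] at h
  rw [← h]
  push_cast
  rw [Finset.mul_sum]
  refine Finset.sum_congr rfl fun p _ => ?_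
  rw [Finset.mul_sum]
  refine Finset.sum_congr rfl fun r _ => ?_
  split_ifs <;> simp

lemma fej_nonneg (n k : ℕ) : 0 ≤ fej n k := Complex.normSq_nonneg _

lemma bw_abs (n : ℕ) (hn : 1 ≤ n) : ∑ k ∈ range (4 * n), |bw n k| ≤ 2 * n := by
  have h := fej_sum n hn 0 (by simp)
  simp at h
  have h' : ∑ k ∈ range (4 * n), fej n k = 4 * n * n := by exact_mod_cast h
  have hn' : (0:ℝ) < n := by exact_mod_cast hn
  calc ∑ k ∈ range (4 * n), |bw n k| ≤ ∑ k ∈ range (4 * n), (4 * n : ℝ)⁻¹ * 2 * fej n k := by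
        refine Finset.sum_le_sum fun k _ => ?_
        unfold bw
        rw [abs_mul, abs_of_nonneg (fej_nonneg n k), abs_mul, abs_of_nonneg (by positivity : (0:ℝ) ≤ (4 * n : ℝ)⁻¹), abs_mul, abs_two]
        have := Real.abs_sin_le_one (n * tk n k)
        have := fej_nonneg n k
        gcongr
        linarith
    _ = 2 * n := by rw [← Finset.mul_sum, h']; field_simp

lemma bw_sum (n : ℕ) (hn : 1 ≤ n) (j : ℤ) (hj : |j| ≤ n) :
    ∑ k ∈ range (4 * n), (bw n k : ℂ) * Complex.exp (Complex.I * j * (tk n k : ℝ)) =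
      Complex.I * j := by
  have hn' : (n : ℂ) ≠ 0 := by exact_mod_cast (by omega : n ≠ 0)
  rw [abs_le] at hj
  have h1 := fej_sum n hn (n + j) (by rw [abs_le]; constructor <;> omega)
  have h2 := fej_sum n hn (-n + j) (by rw [abs_le]; constructor <;> omega)
  have e : ∀ k, (bw n k : ℂ) * Complex.exp (Complex.I * j * (tk n k : ℝ)) =
      (4 * n : ℂ)⁻¹ * (-Complex.I) * (Complex.exp (Complex.I * (n + j : ℤ) * (tk n k : ℝ)) * fej n k
       - Complex.exp (Complex.I * (-n + j : ℤ) * (tk n k : ℝ)) * fej n k) := by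
    intro k
    unfold bw
    push_cast
    rw [Complex.sin]
    rw [show Complex.I * (n + j) * (tk n k : ℂ) = n * tk n k * Complex.I + Complex.I * j * tk n k by ring,
      show Complex.I * (-n + j) * (tk n k : ℂ) = -(n * tk n k) * Complex.I + Complex.I * j * tk n k by ring,
      Complex.exp_add, Complex.exp_add]
    ring
  rw [Finset.sum_congr rfl fun k _ => e k, ← Finset.mul_sum, Finset.sum_sub_distrib, h1, h2]
  rw [← mul_sub]
  have : ((max 0 (n - |(n:ℤ) + j|) : ℤ) - (max 0 (n - |-(n:ℤ) + j|) : ℤ) : ℂ) = -j := by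
    rw [← Int.cast_sub, ← Int.cast_neg]
    congr 1
    rw [abs_of_nonneg (by omega : 0 ≤ (n:ℤ) + j), abs_of_nonpos (by omega : -(n:ℤ) + j ≤ 0)]
    omega
  rw [this]
  field_simp

lemma bw_deriv (n : ℕ) (hn : 1 ≤ n) (f : ℝ → ℂ) (hf : f ∈ trigS n) :
    HasDerivAt f (∑ k ∈ range (4 * n), (bw n k : ℂ) * f (tk n k)) 0 := by
  refine Submodule.span_induction (p := fun f _ => HasDerivAt f (∑ k ∈ range (4 * n), (bw n k : ℂ) * f (tk n k)) 0) ?_ ?_ ?_ ?_ hf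
  · rintro _ ⟨j, hj, rfl⟩
    rw [bw_sum n hn j hj]
    have h := (Complex.hasDerivAt_exp (Complex.I * j * ((0:ℝ):ℂ))).comp_of_eq (0:ℝ) 
      ((Complex.ofRealCLM.hasDerivAt (x := (0:ℝ))).const_mul (Complex.I * j)) rfl
    simpa [Function.comp_def] using h
  · simpa using hasDerivAt_const (0:ℝ) (0:ℂ)
  · intro f g _ _ hf hg
    have := hf.add hg
    simpa only [Pi.add_apply, mul_add, Finset.sum_add_distrib] using this
  · intro c f _ hf
    have := hf.const_smul c
    refine this.congr_deriv ?_
    simp only [Pi.smul_apply, smul_eq_mul, Finset.mul_sum]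
    exact Finset.sum_congr rfl fun _ _ => by ring

lemma hasDerivAt_rot {d : ℕ} (a b : Fin (d + 1)) (z : Fin (d + 1) → ℝ) (t : ℝ) (hab : a ≠ b)
    (P : MvPolynomial (Fin (d + 1)) ℝ) :
    HasDerivAt (fun s => MvPolynomial.eval (rot a b s z) P)
      (MvPolynomial.eval (rot a b t z) (Dop a b P)) t := by
  have h := hasDerivAt_eval P (fun s => rot a b s z)
    (fun i => if i = a then - rot a b t z b else if i = b then rot a b t z a else 0) t (by
      intro i
      simp only [rot, hab.symm, if_false, if_true]
      split_ifs
      · have := ((Real.hasDerivAt_cos t).mul_const (z a)).sub ((Real.hasDerivAt_sin t).mul_const (z b))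
        exact this.congr_deriv (by ring)
      · have := ((Real.hasDerivAt_sin t).mul_const (z a)).add ((Real.hasDerivAt_cos t).mul_const (z b))
        exact this.congr_deriv (by ring)
      · exact hasDerivAt_const _ _)
  refine h.congr_deriv ?_
  have e : ∀ f : Fin (d+1) → ℝ, ∑ i, f i = f a + (f b + ∑ i ∈ (univ.erase a).erase b, f i) := by
    intro f
    rw [Finset.add_sum_erase _ _ (Finset.mem_erase.2 ⟨hab.symm, Finset.mem_univ _⟩),
      Finset.add_sum_erase _ _ (Finset.mem_univ _)]
  rw [e, Finset.sum_eq_zero]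
  · simp only [hab.symm, if_true, if_false, Dop, map_sub, map_mul, MvPolynomial.eval_X]
    ring
  · intro i hi
    simp only [Finset.mem_erase] at hi
    simp [hi.1, hi.2.1]

lemma Dop_self {d : ℕ} (a : Fin (d + 1)) (P : MvPolynomial (Fin (d + 1)) ℝ) : Dop a a P = 0 := by
  simp [Dop]

lemma Dop_bw {d n : ℕ} (hn : 1 ≤ n) (a b : Fin (d + 1)) (z : Fin (d + 1) → ℝ) (hab : a ≠ b)
    (P : MvPolynomial (Fin (d + 1)) ℝ) (hP : P.totalDegree ≤ n) :
    MvPolynomial.eval z (Dop a b P) =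
      ∑ k ∈ range (4 * n), bw n k * MvPolynomial.eval (rot a b (tk n k) z) P := by
  have h1 := bw_deriv n hn _ (trigS_eval a b z P hP)
  have h2 := (hasDerivAt_rot a b z 0 hab P).ofReal_comp
  have := h1.unique h2
  rw [rot_zero] at this
  exact_mod_cast this.symm

lemma Dop_degree {d n : ℕ} (a b : Fin (d + 1)) 
    (P : MvPolynomial (Fin (d + 1)) ℝ) (hP : P.totalDegree ≤ n) : (Dop a b P).totalDegree ≤ n := by
  have key : ∀ a b : Fin (d+1), (MvPolynomial.X a * MvPolynomial.pderiv b P).totalDegree ≤ n := by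
    intro a b
    have hsup : ∀ m ∈ (MvPolynomial.pderiv b P).support, (m.sum fun _ e => e) + 1 ≤ n := by
      intro m hm
      rw [MvPolynomial.mem_support_iff, MvPolynomial.coeff_pderiv] at hm
      have h1 : m + Finsupp.single b 1 ∈ P.support := by
        rw [MvPolynomial.mem_support_iff]; exact fun h => hm (by rw [h]; ring)
      have h2 := (MvPolynomial.le_totalDegree h1).trans hP
      rw [Finsupp.sum_add_index' (fun _ => rfl) (fun _ _ _ => rfl)] at h2
      simpa using h2
    by_cases h0 : MvPolynomial.pderiv b P = 0
    · simp [h0]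
    refine (MvPolynomial.totalDegree_mul _ _).trans ?_
    rw [MvPolynomial.totalDegree_X]
    obtain ⟨m, hm⟩ := MvPolynomial.support_nonempty.2 h0
    have hm' := hsup m hm
    have : (MvPolynomial.pderiv b P).totalDegree ≤ n - 1 := by
      refine Finset.sup_le fun m hm => ?_
      have := hsup m hm
      omega
    omega
  exact (MvPolynomial.totalDegree_sub _ _).trans (max_le (key a b) (key b a))

lemma measurable_eval {d : ℕ} (P : MvPolynomial (Fin (d + 1)) ℝ) :
    Measurable (fun z : Fin (d+1) → ℝ => MvPolynomial.eval z P) :=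
  (MvPolynomial.continuous_eval P).measurable

/-- L1 norm on the sphere -/
noncomputable def I1 {d : ℕ} (P : MvPolynomial (Fin (d + 1)) ℝ) : ℝ≥0∞ :=
  ∫⁻ y, ENNReal.ofReal |MvPolynomial.eval y P| ∂nu d

lemma bernstein {d n : ℕ} (hn : 1 ≤ n) (a b : Fin (d + 1))
    (P : MvPolynomial (Fin (d + 1)) ℝ) (hP : P.totalDegree ≤ n) :
    I1 (Dop a b P) ≤ ENNReal.ofReal (2 * n) * I1 P := by
  by_cases hab : a = b
  · subst hab; simp [Dop_self, I1]
  have hm : Measurable (fun y : Fin (d+1) → ℝ => ENNReal.ofReal |MvPolynomial.eval y P|) :=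
    (measurable_eval P).abs.ennreal_ofReal
  calc I1 (Dop a b P) ≤ ∫⁻ y, ∑ k ∈ range (4 * n), ENNReal.ofReal |bw n k| *
        ENNReal.ofReal |MvPolynomial.eval (rot a b (tk n k) y) P| ∂nu d := by
        refine lintegral_mono fun y => ?_
        dsimp only
        rw [Dop_bw hn a b y hab P hP]
        simp only [← ENNReal.ofReal_mul (abs_nonneg _), ← abs_mul]
        rw [← ENNReal.ofReal_sum_of_nonneg (fun _ _ => abs_nonneg _)]
        exact ENNReal.ofReal_le_ofReal (Finset.abs_sum_le_sum_abs _ _)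
    _ = ∑ k ∈ range (4 * n), ENNReal.ofReal |bw n k| * I1 P := by
        have hm' : ∀ k, Measurable (fun y : Fin (d+1) → ℝ =>
            ENNReal.ofReal |MvPolynomial.eval (rot a b (tk n k) y) P|) :=
          fun k => hm.comp (measurable_rot (tk n k))
        rw [lintegral_finsetSum _ (fun k _ => (hm' k).const_mul _)]
        refine Finset.sum_congr rfl fun k _ => ?_
        rw [lintegral_const_mul _ (hm' k), lintegral_rot hab (tk n k) _ hm]
        rfl
    _ ≤ _ := by
        rw [← Finset.sum_mul, ← ENNReal.ofReal_sum_of_nonneg (fun _ _ => abs_nonneg _)]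
        gcongr
        exact bw_abs n hn

end SD

end

section

open MeasureTheory Finset
open scoped ENNReal

namespace SD

lemma nu_rot {d : ℕ} {a b : Fin (d + 1)} (hab : a ≠ b) (t : ℝ) :
    MeasurePreserving (rot a b t) (nu d) (nu d) := by
  refine ⟨measurable_rot t, ?_⟩
  refine Measure.ext_of_lintegral _ fun f hf => ?_
  rw [lintegral_map hf (measurable_rot t), lintegral_rot hab t f hf]

lemma integrable_eval {d : ℕ} (P : MvPolynomial (Fin (d + 1)) ℝ) :
    Integrable (fun z => MvPolynomial.eval z P) (nu d) := by
  unfold nu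
  rw [integrable_map_measure (measurable_eval P).aestronglyMeasurable measurable_coord.aemeasurable]
  have hc : Continuous ((fun z => MvPolynomial.eval z P) ∘ fun (y : Sph d) i => (y : Euc d) i) := by
    refine (MvPolynomial.continuous_eval P).comp ?_
    fun_prop
  refine hc.integrable_of_hasCompactSupport ?_
  exact HasCompactSupport.of_compactSpace _

lemma integral_muSph {d : ℕ} (P : MvPolynomial (Fin (d + 1)) ℝ) :
    ∫ y, MvPolynomial.eval (fun j => (y : Euc d) j) P ∂muSph d = ∫ z, MvPolynomial.eval z P ∂nu d := by
  unfold nu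
  rw [integral_map measurable_coord.aemeasurable (measurable_eval P).aestronglyMeasurable]

/-- build a sphere point from coordinates -/
noncomputable def mkS {d : ℕ} (z : Fin (d + 1) → ℝ) (h : q z = 1) : Sph d :=
  ⟨WithLp.toLp 2 z, by
    rw [mem_sphere_zero_iff_norm]
    have := q_eq_norm (WithLp.toLp 2 z : Euc d)
    simp only [] at this
    rw [h] at this
    have h2 : ‖(WithLp.toLp 2 z : Euc d)‖ ^ 2 = 1 ^ 2 := by rw [← this]; norm_num
    exact (pow_left_inj₀ (norm_nonneg _) zero_le_one two_ne_zero).1 h2⟩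

lemma mkS_apply {d : ℕ} (z : Fin (d + 1) → ℝ) (h : q z = 1) : (fun j => (mkS z h : Euc d) j) = z := rfl

lemma trig_shift (n N : ℕ) (hN : n < N) (f : ℝ → ℂ) (hf : f ∈ trigS n) (s : ℝ) :
    ∑ k ∈ range N, f ((2 * Real.pi * k / N : ℝ) + s) = ∑ k ∈ range N, f (2 * Real.pi * k / N : ℝ) := by
  refine Submodule.span_induction (p := fun f _ => ∑ k ∈ range N, f ((2 * Real.pi * k / N : ℝ) + s) = ∑ k ∈ range N, f (2 * Real.pi * k / N : ℝ)) ?_ ?_ ?_ ?_ hf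
  · rintro _ ⟨j, hj, rfl⟩
    have h := sum_roots N (by omega) j (by omega)
    have : ∀ k : ℕ, Complex.exp (Complex.I * j * (((2 * Real.pi * k / N : ℝ) + s : ℝ) : ℂ)) =
        Complex.exp (Complex.I * j * s) * Complex.exp (Complex.I * j * ((2 * Real.pi * k / N : ℝ) : ℂ)) := by
      intro k
      rw [← Complex.exp_add]; congr 1; push_cast; ring
    simp only [this]
    rw [← Finset.mul_sum, h]
    split_ifs with h0
    · simp [h0]
    · simp
  · simp
  · intro f g _ _ hf hg
    simp only [Pi.add_apply, Finset.sum_add_distrib, hf, hg]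
  · intro c f _ hf
    simp only [Pi.smul_apply, ← Finset.smul_sum, hf]

theorem case_one : ∃ c : ℝ, 0 < c ∧ ∀ n N : ℕ, 1 ≤ n →
      c * (n : ℝ) ^ ((2 * ((1:ℕ) : ℝ) * ((1:ℕ) + 1)) / ((1:ℕ) + 2)) ≤ (N : ℝ) →
      ∃ x : Fin N → Sph 1, IsSphericalDesign 1 n N x := by
  refine ⟨2, two_pos, fun n N hn hN => ?_⟩
  have hn1 : (1:ℝ) ≤ n := by exact_mod_cast hn
  have hnN : n < N := by
    have h1 : (n:ℝ) ^ (1:ℝ) ≤ (n : ℝ) ^ ((2 * ((1:ℕ) : ℝ) * ((1:ℕ) + 1)) / ((1:ℕ) + 2)) :=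
      Real.rpow_le_rpow_of_exponent_le hn1 (by norm_num)
    rw [Real.rpow_one] at h1
    have : (n:ℝ) < N := by nlinarith
    exact_mod_cast this
  have h01 : (0 : Fin (1+1)) ≠ 1 := by decide
  set e : Fin (1+1) → ℝ := ![1, 0] with he
  have hqe : q e = 1 := by simp [q, he, Fin.sum_univ_two]
  refine ⟨fun k => mkS (rot 0 1 (2 * Real.pi * (k:ℕ) / N : ℝ) e) (by rw [q_rot h01, hqe]), ?_⟩
  intro p hp
  simp only [mkS_apply]
  rw [integral_muSph]
  rw [Fin.sum_univ_eq_sum_range (fun k => MvPolynomial.eval (rot 0 1 (2 * Real.pi * (k:ℕ) / N : ℝ) e) p)]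
  set S := ∑ k ∈ range N, MvPolynomial.eval (rot 0 1 (2 * Real.pi * (k:ℕ) / N : ℝ) e) p with hS
  have hN0 : (N:ℝ) ≠ 0 := by exact_mod_cast (by omega : N ≠ 0)
  have key : ∀ᵐ y ∂nu 1, ∑ k ∈ range N, MvPolynomial.eval (rot 0 1 (2 * Real.pi * (k:ℕ) / N : ℝ) y) p = S := by
    filter_upwards [nu_ae 1] with y hy
    have hrot : ∃ s, y = rot 0 1 s e := by
      have hq : y 0 ^ 2 + y 1 ^ 2 = 1 := by simpa [q, Fin.sum_univ_two] using hy
      set w : ℂ := ⟨y 0, y 1⟩ with hw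
      have hnorm : ‖w‖ = 1 := by
        rw [Complex.norm_def, Complex.normSq_mk]
        rw [show y 0 * y 0 + y 1 * y 1 = 1 by nlinarith]; simp
      have hw0 : w ≠ 0 := by intro h; rw [h] at hnorm; simp at hnorm
      refine ⟨Complex.arg w, ?_⟩
      funext i
      fin_cases i
      · have h1 : Real.cos w.arg = y 0 := by rw [Complex.cos_arg hw0, hnorm]; simp [hw]
        simp [rot, he, h1]
      · have h1 : Real.sin w.arg = y 1 := by rw [Complex.sin_arg, hnorm]; simp [hw]
        simp [rot, he, h1]
    obtain ⟨s, rfl⟩ := hrot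
    simp only [rot_add h01]
    have := trig_shift n N hnN _ (trigS_eval 0 1 e p hp) s
    rw [hS]
    exact_mod_cast this
  have hintg := integral_congr_ae key
  rw [integral_finsetSum] at hintg
  · have h2 : ∀ k ∈ range N, ∫ y, MvPolynomial.eval (rot 0 1 (2 * Real.pi * (k:ℕ) / N : ℝ) y) p ∂nu 1 =
        ∫ y, MvPolynomial.eval y p ∂nu 1 := by
      intro k _
      have hm := nu_rot h01 (2 * Real.pi * (k:ℕ) / N : ℝ)
      have := integral_map (μ := nu 1) (φ := rot 0 1 (2 * Real.pi * (k:ℕ) / N : ℝ)) hm.measurable.aemeasurable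
        (measurable_eval p).aestronglyMeasurable
      rw [hm.map_eq] at this
      exact this.symm
    rw [Finset.sum_congr rfl h2] at hintg
    simp at hintg
    rw [← hintg]
    field_simp
  · intro k _
    exact (nu_rot h01 _).integrable_comp_of_integrable (integrable_eval p)

end SD

end

section

open MeasureTheory Finset
open scoped ENNReal

namespace SD

/-- gradient of `H P` -/
noncomputable def Bv {d : ℕ} (P : MvPolynomial (Fin (d + 1)) ℝ) (z : Fin (d + 1) → ℝ) (a : Fin (d + 1)) : ℝ :=
  ∑ b, z b / q z * H (Dop b a P) z

/-- first order size -/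
noncomputable def G1 {d : ℕ} (P : MvPolynomial (Fin (d + 1)) ℝ) (z : Fin (d + 1) → ℝ) : ℝ :=
  ∑ a, ∑ b, |H (Dop a b P) z|

/-- second order size -/
noncomputable def G2 {d : ℕ} (P : MvPolynomial (Fin (d + 1)) ℝ) (z : Fin (d + 1) → ℝ) : ℝ :=
  ∑ a, ∑ b, G1 (Dop a b P) z

lemma G1_nonneg {d : ℕ} (P : MvPolynomial (Fin (d + 1)) ℝ) (z : Fin (d + 1) → ℝ) : 0 ≤ G1 P z :=
  Finset.sum_nonneg fun _ _ => Finset.sum_nonneg fun _ _ => abs_nonneg _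

lemma G2_nonneg {d : ℕ} (P : MvPolynomial (Fin (d + 1)) ℝ) (z : Fin (d + 1) → ℝ) : 0 ≤ G2 P z :=
  Finset.sum_nonneg fun _ _ => Finset.sum_nonneg fun _ _ => G1_nonneg _ _

lemma sqrt_q_pos {d : ℕ} {z : Fin (d + 1) → ℝ} (hz : q z ≠ 0) : 0 < √(q z) :=
  Real.sqrt_pos.2 (lt_of_le_of_ne (q_nonneg z) hz.symm)

lemma nz_sq {d : ℕ} {z : Fin (d + 1) → ℝ} (hz : q z ≠ 0) : ∑ b, nz z b * nz z b = 1 := by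
  simp only [nz, div_mul_div_comm, ← Finset.sum_div, Real.mul_self_sqrt (q_nonneg z)]
  rw [div_eq_one_iff_eq hz]
  simp [q, sq]

lemma Bv_eq {d : ℕ} (P : MvPolynomial (Fin (d + 1)) ℝ) (z : Fin (d + 1) → ℝ) (hz : q z ≠ 0)
    (a : Fin (d + 1)) : Bv P z a = (MvPolynomial.eval (nz z) (MvPolynomial.pderiv a P) - nz z a *
      ∑ c, nz z c * MvPolynomial.eval (nz z) (MvPolynomial.pderiv c P)) / √(q z) := by
  have hs := sqrt_q_pos hz
  have h1 := nz_sq hz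
  have e : ∀ b, z b / q z * H (Dop b a P) z = (nz z b * nz z b * MvPolynomial.eval (nz z) (MvPolynomial.pderiv a P) -
      nz z a * (nz z b * MvPolynomial.eval (nz z) (MvPolynomial.pderiv b P))) / √(q z) := by
    intro b
    simp only [H, Dop, map_sub, map_mul, MvPolynomial.eval_X]
    have : z b / q z = nz z b / √(q z) := by
      rw [nz, div_div, Real.mul_self_sqrt (q_nonneg z)]
    rw [this]; ring
  unfold Bv
  rw [Finset.sum_congr rfl fun b _ => e b, ← Finset.sum_div, Finset.sum_sub_distrib, ← Finset.sum_mul, h1,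
    one_mul, ← Finset.mul_sum]

lemma hasDerivAt_q {d : ℕ} (γ : ℝ → Fin (d + 1) → ℝ) (γ' : Fin (d + 1) → ℝ) (t : ℝ)
    (h : ∀ i, HasDerivAt (fun s => γ s i) (γ' i) t) :
    HasDerivAt (fun s => q (γ s)) (2 * ∑ i, γ t i * γ' i) t := by
  unfold q
  have := HasDerivAt.fun_sum (u := univ) (fun i _ => (h i).pow 2)
  refine this.congr_deriv ?_
  rw [Finset.mul_sum]
  exact Finset.sum_congr rfl fun i _ => by simp; ring

lemma hasDerivAt_H {d : ℕ} (P : MvPolynomial (Fin (d + 1)) ℝ) (γ : ℝ → Fin (d + 1) → ℝ) (γ' : Fin (d + 1) → ℝ) (t : ℝ)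
    (h : ∀ i, HasDerivAt (fun s => γ s i) (γ' i) t) (hz : q (γ t) ≠ 0) :
    HasDerivAt (fun s => H P (γ s)) (∑ a, γ' a * Bv P (γ t) a) t := by
  have hs := sqrt_q_pos hz
  have hq := (hasDerivAt_q γ γ' t h).sqrt hz
  have := hasDerivAt_eval P (fun s => nz (γ s))
    (fun i => (γ' i * √(q (γ t)) - γ t i * ((2 * ∑ i, γ t i * γ' i) / (2 * √(q (γ t))))) / √(q (γ t)) ^ 2) t
    (fun i => (h i).div hq hs.ne')
  refine this.congr_deriv ?_
  simp only [Bv_eq P _ hz]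
  set s := √(q (γ t)) with hsdef
  have e : ∀ i, γ t i = s * nz (γ t) i := fun i => by simp only [nz]; rw [← hsdef]; field_simp
  have e2 : ∑ i, γ t i * γ' i = s * ∑ i, nz (γ t) i * γ' i := by
    rw [Finset.mul_sum]; exact Finset.sum_congr rfl fun i _ => by rw [e i]; ring
  rw [e2]
  simp only [e]
  generalize nz (γ t) = y
  set U := ∑ i, y i * γ' i with hU
  set T := ∑ c, y c * MvPolynomial.eval y (MvPolynomial.pderiv c P) with hT
  have l1 : ∀ i, MvPolynomial.eval y (MvPolynomial.pderiv i P) *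
      ((γ' i * s - s * y i * (2 * (s * U) / (2 * s))) / s ^ 2) =
      (MvPolynomial.eval y (MvPolynomial.pderiv i P) * γ' i - 
       U * (y i * MvPolynomial.eval y (MvPolynomial.pderiv i P))) / s := by
    intro i; field_simp
  have l2 : ∀ i, γ' i * ((MvPolynomial.eval y (MvPolynomial.pderiv i P) - y i * T) / s) =
      (MvPolynomial.eval y (MvPolynomial.pderiv i P) * γ' i - T * (y i * γ' i)) / s := by
    intro i; ring
  rw [Finset.sum_congr rfl fun i _ => l1 i, Finset.sum_congr rfl fun i _ => l2 i, ← Finset.sum_div,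
    ← Finset.sum_div, Finset.sum_sub_distrib, Finset.sum_sub_distrib, ← Finset.mul_sum, ← Finset.mul_sum,
    ← hU, ← hT, mul_comm U T]

lemma H_Dop {d : ℕ} (P : MvPolynomial (Fin (d + 1)) ℝ) (z : Fin (d + 1) → ℝ) (hz : q z ≠ 0)
    (a b : Fin (d + 1)) : H (Dop a b P) z = z a * Bv P z b - z b * Bv P z a := by
  have hs := sqrt_q_pos hz
  have e : ∀ i, z i = √(q z) * nz z i := fun i => by simp only [nz]; field_simp
  rw [Bv_eq P z hz, Bv_eq P z hz, e a, e b]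
  simp only [H, Dop, map_sub, map_mul, MvPolynomial.eval_X]
  field_simp
  ring

lemma sum_z_Bv {d : ℕ} (P : MvPolynomial (Fin (d + 1)) ℝ) (z : Fin (d + 1) → ℝ) (hz : q z ≠ 0) :
    ∑ a, z a * Bv P z a = 0 := by
  have hs := sqrt_q_pos hz
  have h1 := nz_sq hz
  have e : ∀ i, z i = √(q z) * nz z i := fun i => by simp only [nz]; field_simp
  have l : ∀ a, z a * Bv P z a = nz z a * MvPolynomial.eval (nz z) (MvPolynomial.pderiv a P) -
     (nz z a * nz z a) * ∑ c, nz z c * MvPolynomial.eval (nz z) (MvPolynomial.pderiv c P) := by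
    intro a
    rw [Bv_eq P z hz, e a]; field_simp
  rw [Finset.sum_congr rfl fun a _ => l a, Finset.sum_sub_distrib, ← Finset.sum_mul, h1]
  ring

lemma abs_le_q {d : ℕ} (z : Fin (d + 1) → ℝ) (hz : 1 ≤ q z) (b : Fin (d + 1)) : |z b / q z| ≤ 1 := by
  have h : z b ^ 2 ≤ q z := Finset.single_le_sum (f := fun i => z i ^ 2) (fun i _ => sq_nonneg _) (Finset.mem_univ b)
  rw [abs_div, abs_of_nonneg (q_nonneg z), div_le_one (by linarith)]
  rw [← sq_abs] at h
  nlinarith [abs_nonneg (z b)]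

lemma Bv_le {d : ℕ} (P : MvPolynomial (Fin (d + 1)) ℝ) (z : Fin (d + 1) → ℝ) (hz : 1 ≤ q z)
    (a : Fin (d + 1)) : |Bv P z a| ≤ ∑ b, |H (Dop b a P) z| := by
  unfold Bv
  refine (Finset.abs_sum_le_sum_abs _ _).trans (Finset.sum_le_sum fun b _ => ?_)
  rw [abs_mul]
  exact mul_le_of_le_one_left (abs_nonneg _) (abs_le_q z hz b)

lemma Bv_sum_le {d : ℕ} (P : MvPolynomial (Fin (d + 1)) ℝ) (z : Fin (d + 1) → ℝ) (hz : 1 ≤ q z) :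
    ∑ a, |Bv P z a| ≤ G1 P z := by
  unfold G1
  rw [Finset.sum_comm]
  exact Finset.sum_le_sum fun a _ => Bv_le P z hz a

lemma dir_le {d : ℕ} (P : MvPolynomial (Fin (d + 1)) ℝ) (z w : Fin (d + 1) → ℝ) (hz : 1 ≤ q z) (r : ℝ)
    (hw : ∀ a, |w a| ≤ r) : |∑ a, w a * Bv P z a| ≤ r * G1 P z := by
  have hr : 0 ≤ r := (abs_nonneg _).trans (hw 0)
  calc _ ≤ ∑ a, |w a * Bv P z a| := Finset.abs_sum_le_sum_abs _ _
    _ ≤ ∑ a, r * |Bv P z a| := Finset.sum_le_sum fun a _ => by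
        rw [abs_mul]; exact mul_le_mul_of_nonneg_right (hw a) (abs_nonneg _)
    _ ≤ _ := by rw [← Finset.mul_sum]; exact mul_le_mul_of_nonneg_left (Bv_sum_le P z hz) hr

/-- lower bound of the gradient along a face -/
lemma face_grad {d : ℕ} (P : MvPolynomial (Fin (d + 1)) ℝ) (z : Fin (d + 1) → ℝ) (i : Fin (d + 1))
    (hi : |z i| = 1) (hz : ∀ a, |z a| ≤ 3) :
    G1 P z ≤ 24 * (d + 1) * ∑ a ∈ univ.erase i, |Bv P z a| := by
  have h : z i ^ 2 ≤ q z := Finset.single_le_sum (f := fun i => z i ^ 2) (fun i _ => sq_nonneg _) (Finset.mem_univ i)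
  rw [← sq_abs, hi] at h
  have hq : q z ≠ 0 := by intro h0; rw [h0] at h; norm_num at h
  set S := ∑ a ∈ univ.erase i, |Bv P z a| with hS
  have hS0 : 0 ≤ S := Finset.sum_nonneg fun _ _ => abs_nonneg _
  have h1 : |Bv P z i| ≤ 3 * S := by
    have h2 := sum_z_Bv P z hq
    rw [← Finset.add_sum_erase _ _ (Finset.mem_univ i)] at h2
    have h3 : |z i * Bv P z i| ≤ 3 * S := by
      rw [eq_neg_of_add_eq_zero_left h2, abs_neg, hS, Finset.mul_sum]
      refine (Finset.abs_sum_le_sum_abs _ _).trans (Finset.sum_le_sum fun a _ => ?_)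
      rw [abs_mul]; exact mul_le_mul_of_nonneg_right (hz a) (abs_nonneg _)
    rwa [abs_mul, hi, one_mul] at h3
  have h4 : ∑ a, |Bv P z a| ≤ 4 * S := by
    rw [← Finset.add_sum_erase _ _ (Finset.mem_univ i)]; linarith
  have h5 : ∑ a : Fin (d+1), |z a| ≤ 3 * (d + 1) := by
    refine (Finset.sum_le_sum fun a _ => hz a).trans ?_
    simp; linarith
  calc G1 P z ≤ ∑ a, ∑ b, (|z a| * |Bv P z b| + |Bv P z a| * |z b|) := by
        refine Finset.sum_le_sum fun a _ => Finset.sum_le_sum fun b _ => ?_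
        rw [H_Dop P z hq, ← abs_mul, ← abs_mul, mul_comm (Bv P z a)]
        exact abs_sub _ _
    _ = 2 * ((∑ a, |z a|) * ∑ b, |Bv P z b|) := by
        simp only [Finset.sum_add_distrib, ← Finset.mul_sum, ← Finset.sum_mul]; ring
    _ ≤ 2 * ((3 * (d + 1)) * (4 * S)) := by gcongr
    _ = _ := by ring

end SD

end

section

open MeasureTheory Finset
open scoped ENNReal

namespace SD

/-- point on a line -/
def ln {d : ℕ} (z w : Fin (d + 1) → ℝ) (t : ℝ) : Fin (d + 1) → ℝ := fun i => z i + t * w i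

lemma ln_zero {d : ℕ} (z w : Fin (d + 1) → ℝ) : ln z w 0 = z := by funext i; simp [ln]

lemma hasDerivAt_ln {d : ℕ} (z w : Fin (d + 1) → ℝ) (t : ℝ) (i : Fin (d + 1)) :
    HasDerivAt (fun s => ln z w s i) (w i) t := by
  have := ((hasDerivAt_id t).mul_const (w i)).const_add (z i)
  simpa [ln] using this

lemma mvt {f f' : ℝ → ℝ} {C : ℝ} (h : ∀ t ∈ Set.Icc (0:ℝ) 1, HasDerivAt f (f' t) t)
    (hC : ∀ t ∈ Set.Icc (0:ℝ) 1, |f' t| ≤ C) (t : ℝ) (ht : t ∈ Set.Icc (0:ℝ) 1) : |f t - f 0| ≤ C := by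
  have := (convex_Icc (0:ℝ) 1).norm_image_sub_le_of_norm_hasDerivWithin_le (f := f) (f' := f')
    (fun x hx => (h x hx).hasDerivWithinAt) (fun x hx => hC x hx) (by simp : (0:ℝ) ∈ Set.Icc (0:ℝ) 1) ht
  have hC0 : 0 ≤ C := (abs_nonneg _).trans (hC t ht)
  refine this.trans ?_
  rw [sub_zero, Real.norm_of_nonneg ht.1]
  exact mul_le_of_le_one_right hC0 ht.2

lemma hasDerivAt_dir {d : ℕ} (P : MvPolynomial (Fin (d + 1)) ℝ) (z w : Fin (d + 1) → ℝ) (r : ℝ)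
    (hw : ∀ a, |w a| ≤ r) (t : ℝ) (hq : 1 ≤ q (ln z w t)) :
    ∃ D, HasDerivAt (fun s => ∑ a, w a * Bv P (ln z w s) a) D t ∧
      |D| ≤ r ^ 2 * ((2 * d + 3) * G1 P (ln z w t) + G2 P (ln z w t)) := by
  have hr : 0 ≤ r := (abs_nonneg _).trans (hw 0)
  have hq0 : q (ln z w t) ≠ 0 := by linarith
  set u := ln z w t with hu
  have hqd := hasDerivAt_q (ln z w) w t (hasDerivAt_ln z w t)
  have hd : ∀ a b, HasDerivAt (fun s => ln z w s b / q (ln z w s) * H (Dop b a P) (ln z w s))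
      ((w b * q u - u b * (2 * ∑ i, u i * w i)) / q u ^ 2 * H (Dop b a P) u +
        u b / q u * ∑ c, w c * Bv (Dop b a P) u c) t := by
    intro a b
    exact ((hasDerivAt_ln z w t b).div hqd hq0).mul (hasDerivAt_H (Dop b a P) (ln z w) w t (hasDerivAt_ln z w t) hq0)
  refine ⟨_, HasDerivAt.fun_sum (u := univ) (fun a _ => (HasDerivAt.fun_sum (u := univ) (fun b _ => hd a b)).const_mul (w a)), ?_⟩
  have hA : ∀ b, |(w b * q u - u b * (2 * ∑ i, u i * w i)) / q u ^ 2| ≤ r * (2 * d + 3) := by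
    intro b
    have h1 : |w b / q u| ≤ r := by
      rw [abs_div, abs_of_nonneg (q_nonneg u)]
      exact (div_le_self (abs_nonneg _) hq).trans (hw b)
    have h2 : |∑ i, u i / q u * w i| ≤ (d + 1) * r := by
      refine (Finset.abs_sum_le_sum_abs _ _).trans ?_
      have : ∀ i ∈ (univ : Finset (Fin (d+1))), |u i / q u * w i| ≤ r := fun i _ => by
        rw [abs_mul]
        exact (mul_le_of_le_one_left (abs_nonneg _) (abs_le_q u hq i)).trans (hw i)
      refine (Finset.sum_le_sum this).trans ?_
      simp
    have e : (w b * q u - u b * (2 * ∑ i, u i * w i)) / q u ^ 2 =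
        w b / q u - (u b / q u) * (2 * ∑ i, u i / q u * w i) := by
      have : ∑ i, u i / q u * w i = (∑ i, u i * w i) / q u := by
        rw [Finset.sum_div]; exact Finset.sum_congr rfl fun i _ => by ring
      rw [this]; field_simp
    rw [e]
    refine (abs_sub _ _).trans ?_
    rw [abs_mul, abs_mul, abs_two]
    have h3 := abs_le_q u hq b
    have h4 : |u b / q u| * (2 * |∑ i, u i / q u * w i|) ≤ 2 * ((d + 1) * r) := by
      refine (mul_le_of_le_one_left (by positivity) h3).trans ?_
      linarith
    linarith
  have hB : ∀ a b, |(w b * q u - u b * (2 * ∑ i, u i * w i)) / q u ^ 2 * H (Dop b a P) u +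
        u b / q u * ∑ c, w c * Bv (Dop b a P) u c| ≤
        r * ((2 * d + 3) * |H (Dop b a P) u| + G1 (Dop b a P) u) := by
    intro a b
    refine (abs_add_le _ _).trans ?_
    rw [abs_mul, abs_mul]
    have h1 := mul_le_mul_of_nonneg_right (hA b) (abs_nonneg (H (Dop b a P) u))
    have h2 : |u b / q u| * |∑ c, w c * Bv (Dop b a P) u c| ≤ r * G1 (Dop b a P) u :=
      (mul_le_of_le_one_left (abs_nonneg _) (abs_le_q u hq b)).trans (dir_le _ u w hq r hw)
    linarith
  calc _ ≤ ∑ a, r * ∑ b, r * ((2 * d + 3) * |H (Dop b a P) u| + G1 (Dop b a P) u) := by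
        refine (Finset.abs_sum_le_sum_abs _ _).trans (Finset.sum_le_sum fun a _ => ?_)
        rw [abs_mul]
        refine mul_le_mul (hw a) ?_ (abs_nonneg _) hr
        exact (Finset.abs_sum_le_sum_abs _ _).trans (Finset.sum_le_sum fun b _ => hB a b)
    _ = _ := by
        rw [G1, G2, Finset.sum_comm (f := fun a b => |H (Dop a b P) u|), Finset.sum_comm (f := fun a b => G1 (Dop a b P) u)]
        simp only [← Finset.mul_sum, Finset.sum_add_distrib]
        ring

lemma taylor {d : ℕ} (P : MvPolynomial (Fin (d + 1)) ℝ) (z w : Fin (d + 1) → ℝ) (r K : ℝ)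
    (hw : ∀ a, |w a| ≤ r) (hq : ∀ t ∈ Set.Icc (0:ℝ) 1, 1 ≤ q (ln z w t))
    (hK : ∀ t ∈ Set.Icc (0:ℝ) 1, G1 P (ln z w t) + G2 P (ln z w t) ≤ K) :
    |H P (ln z w 1) - H P z - ∑ a, w a * Bv P z a| ≤ r ^ 2 * (2 * d + 3) * K := by
  choose! D hD1 hD2 using fun t ht => hasDerivAt_dir P z w r hw t (hq t ht)
  have h1 := mvt hD1 (C := r ^ 2 * (2 * d + 3) * K) (fun t ht => (hD2 t ht).trans (by
    have := hK t ht
    have h1 := G1_nonneg P (ln z w t)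
    have h2 := G2_nonneg P (ln z w t)
    rw [mul_assoc]
    refine mul_le_mul_of_nonneg_left ?_ (sq_nonneg r)
    have hd : (0:ℝ) ≤ d := by positivity
    nlinarith [mul_nonneg hd h2, mul_le_mul_of_nonneg_left this (by positivity : (0:ℝ) ≤ 2 * d + 3)]))
  have h2 := mvt (f := fun t => H P (ln z w t) - t * ∑ a, w a * Bv P z a)
    (f' := fun t => (∑ a, w a * Bv P (ln z w t) a) - ∑ a, w a * Bv P z a) (C := r ^ 2 * (2 * d + 3) * K)
    (fun t ht => by
      have := (hasDerivAt_H P (ln z w) w t (hasDerivAt_ln z w t) (by linarith [hq t ht])).sub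
        ((hasDerivAt_id t).mul_const (∑ a, w a * Bv P z a))
      refine this.congr_deriv ?_
      ring) (fun t ht => by simpa only [ln_zero] using h1 t ht) 1 (by simp)
  simp only [ln_zero, one_mul, zero_mul, sub_zero] at h2
  rw [sub_right_comm] at h2
  exact h2

lemma lip {d : ℕ} (P : MvPolynomial (Fin (d + 1)) ℝ) (z w : Fin (d + 1) → ℝ) (r K : ℝ)
    (hw : ∀ a, |w a| ≤ r) (hq : ∀ t ∈ Set.Icc (0:ℝ) 1, 1 ≤ q (ln z w t))
    (hK : ∀ t ∈ Set.Icc (0:ℝ) 1, G1 P (ln z w t) ≤ K) :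
    |H P (ln z w 1) - H P z| ≤ r * K := by
  have hr : 0 ≤ r := (abs_nonneg _).trans (hw 0)
  have h2 := mvt (f := fun t => H P (ln z w t)) 
    (f' := fun t => (∑ a, w a * Bv P (ln z w t) a)) (C := r * K)
    (fun t ht => hasDerivAt_H P (ln z w) w t (hasDerivAt_ln z w t) (by linarith [hq t ht]))
    (fun t ht => (dir_le P _ w (hq t ht) r hw).trans (mul_le_mul_of_nonneg_left (hK t ht) hr)) 1 (by simp)
  simpa only [ln_zero] using h2

end SD

end

section

open MeasureTheory Finset
open scoped ENNReal

namespace SD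

lemma measurable_H {d : ℕ} (P : MvPolynomial (Fin (d + 1)) ℝ) : Measurable (H P) :=
  (measurable_eval P).comp measurable_nz

lemma continuous_q {d : ℕ} : Continuous (q (d := d)) := by
  unfold q; fun_prop

lemma continuousAt_H {d : ℕ} (P : MvPolynomial (Fin (d + 1)) ℝ) {z : Fin (d + 1) → ℝ} (hz : q z ≠ 0) :
    ContinuousAt (H P) z := by
  refine (MvPolynomial.continuous_eval P).continuousAt.comp ?_
  refine continuousAt_pi.2 fun i => ?_
  exact (continuous_apply i).continuousAt.div (Real.continuous_sqrt.comp continuous_q).continuousAt (sqrt_q_pos hz).ne'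

lemma continuousAt_Bv {d : ℕ} (P : MvPolynomial (Fin (d + 1)) ℝ) {z : Fin (d + 1) → ℝ} (hz : q z ≠ 0)
    (a : Fin (d + 1)) : ContinuousAt (fun z => Bv P z a) z := by
  unfold Bv
  refine tendsto_finsetSum _ fun b _ => ?_
  exact ((continuous_apply b).continuousAt.div continuous_q.continuousAt hz).mul (continuousAt_H _ hz)

lemma continuousAt_G1 {d : ℕ} (P : MvPolynomial (Fin (d + 1)) ℝ) {z : Fin (d + 1) → ℝ} (hz : q z ≠ 0) :
    ContinuousAt (G1 P) z := by
  unfold G1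
  exact tendsto_finsetSum _ fun a _ => tendsto_finsetSum _ fun b _ => (continuousAt_H _ hz).abs

lemma continuousAt_G2 {d : ℕ} (P : MvPolynomial (Fin (d + 1)) ℝ) {z : Fin (d + 1) → ℝ} (hz : q z ≠ 0) :
    ContinuousAt (G2 P) z := by
  unfold G2
  exact tendsto_finsetSum _ fun a _ => tendsto_finsetSum _ fun b _ => (continuousAt_G1 _ hz)

lemma ftc_le {f f' : ℝ → ℝ} {a b : ℝ} (h : ∀ t ∈ Set.Icc a b, HasDerivAt f (f' t) t)
    (hc : ContinuousOn f' (Set.Icc a b)) {s t : ℝ} (hs : s ∈ Set.Icc a b) (ht : t ∈ Set.Icc a b) :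
    ENNReal.ofReal |f t - f s| ≤ ∫⁻ x in Set.Icc a b, ENNReal.ofReal |f' x| := by
  wlog hst : s ≤ t generalizing s t
  · rw [abs_sub_comm]; exact this ht hs (le_of_not_ge hst)
  have hsub : Set.uIcc s t ⊆ Set.Icc a b := by
    rw [Set.uIcc_of_le hst]; exact Set.Icc_subset_Icc hs.1 ht.2
  have h1 := intervalIntegral.integral_eq_sub_of_hasDerivAt (fun x hx => h x (hsub hx))
    ((hc.mono hsub).intervalIntegrable)
  rw [← h1, intervalIntegral.integral_of_le hst]
  have h2 := enorm_integral_le_lintegral_enorm (μ := volume.restrict (Set.Ioc s t)) f'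
  simp only [← ofReal_norm, Real.norm_eq_abs] at h2
  refine h2.trans (lintegral_mono_set ?_)
  exact (Set.Ioc_subset_Icc_self).trans (Set.Icc_subset_Icc hs.1 ht.2)

lemma oned {f f' : ℝ → ℝ} {a ℓ : ℝ} (hℓ : 0 < ℓ) (h : ∀ t ∈ Set.Icc a (a + ℓ), HasDerivAt f (f' t) t)
    (hc : ContinuousOn f' (Set.Icc a (a + ℓ))) {s : ℝ} (hs : s ∈ Set.Icc a (a + ℓ)) :
    ENNReal.ofReal |f s| ≤ ENNReal.ofReal ℓ⁻¹ * ((∫⁻ x in Set.Icc a (a + ℓ), ENNReal.ofReal |f x|) +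
      ENNReal.ofReal ℓ * ∫⁻ x in Set.Icc a (a + ℓ), ENNReal.ofReal |f' x|) := by
  set J := ∫⁻ x in Set.Icc a (a + ℓ), ENNReal.ofReal |f' x| with hJ
  have hv : volume (Set.Icc a (a + ℓ)) = ENNReal.ofReal ℓ := by rw [Real.volume_Icc]; congr 1; ring
  have h1 : ENNReal.ofReal ℓ * ENNReal.ofReal |f s| ≤
      (∫⁻ x in Set.Icc a (a + ℓ), ENNReal.ofReal |f x|) + ENNReal.ofReal ℓ * J := by
    have e : ENNReal.ofReal ℓ * ENNReal.ofReal |f s| = ∫⁻ x in Set.Icc a (a + ℓ), ENNReal.ofReal |f s| := by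
      rw [setLIntegral_const, hv, mul_comm]
    have e2 : ENNReal.ofReal ℓ * J = ∫⁻ x in Set.Icc a (a + ℓ), J := by
      rw [setLIntegral_const, hv, mul_comm]
    rw [e, e2, ← lintegral_add_right _ measurable_const]
    refine setLIntegral_mono' measurableSet_Icc fun t ht => ?_
    refine le_trans ?_ (add_le_add_right (ftc_le h hc ht hs) _)
    rw [← ENNReal.ofReal_add (abs_nonneg _) (abs_nonneg _)]
    refine ENNReal.ofReal_le_ofReal ?_
    have := abs_add_le (f t) (f s - f t)
    simpa using this
  calc ENNReal.ofReal |f s| = ENNReal.ofReal ℓ⁻¹ * (ENNReal.ofReal ℓ * ENNReal.ofReal |f s|) := by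
        rw [← mul_assoc, ← ENNReal.ofReal_mul (by positivity), inv_mul_cancel₀ hℓ.ne']; simp
    _ ≤ _ := by gcongr

/-- Sobolev type majorant -/
noncomputable def V {d : ℕ} (h : ℝ) : ℕ → MvPolynomial (Fin (d + 1)) ℝ → (Fin (d + 1) → ℝ) → ℝ≥0∞
  | 0, Q, y => ENNReal.ofReal |MvPolynomial.eval y Q|
  | k + 1, Q, y => V h k Q y + ENNReal.ofReal h * ∑ a, ∑ b, V h k (Dop a b Q) y

lemma measurable_V {d : ℕ} (h : ℝ) (k : ℕ) (Q : MvPolynomial (Fin (d + 1)) ℝ) : Measurable (V h k Q) := by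
  induction k generalizing Q with
  | zero => exact (measurable_eval Q).abs.ennreal_ofReal
  | succ k ih =>
    have : Measurable fun y => ∑ a, ∑ b, V h k (Dop a b Q) y :=
      Finset.measurable_fun_sum _ fun a _ => Finset.measurable_fun_sum _ fun b _ => ih _
    exact (ih Q).add (this.const_mul _)

lemma V_int {d n : ℕ} (hn : 1 ≤ n) (h : ℝ) (hh : 0 ≤ h) (k : ℕ) (Q : MvPolynomial (Fin (d + 1)) ℝ) (hQ : Q.totalDegree ≤ n) :
    ∫⁻ y, V h k Q y ∂nu d ≤ ENNReal.ofReal ((1 + h * (d + 1) ^ 2 * (2 * n)) ^ k) * I1 Q := by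
  induction k generalizing Q with
  | zero => simp [V, I1]
  | succ k ih =>
    unfold V
    have hm : ∀ a, Measurable fun y => ∑ b, V h k (Dop a b Q) y := fun a => 
      Finset.measurable_fun_sum _ fun b _ => measurable_V _ _ _
    have hm2 : Measurable fun y => ∑ a, ∑ b, V h k (Dop a b Q) y :=
      Finset.measurable_fun_sum _ fun a _ => hm a
    rw [lintegral_add_left (measurable_V _ _ _), lintegral_const_mul _ hm2, lintegral_finsetSum _ (fun a _ => hm a)]
    set A := ENNReal.ofReal ((1 + h * (d + 1) ^ 2 * (2 * n)) ^ k) with hA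
    have h1 : ∀ a, ∫⁻ y, ∑ b, V h k (Dop a b Q) y ∂nu d ≤ ∑ b : Fin (d+1), A * (ENNReal.ofReal (2 * n) * I1 Q) := by
      intro a
      rw [lintegral_finsetSum _ (fun b _ => measurable_V _ _ _)]
      refine Finset.sum_le_sum fun b _ => (ih _ (Dop_degree a b Q hQ)).trans ?_
      gcongr
      exact bernstein hn a b Q hQ
    calc _ ≤ A * I1 Q + ENNReal.ofReal h * ∑ a : Fin (d+1), ∑ b : Fin (d+1), A * (ENNReal.ofReal (2 * n) * I1 Q) := by
          gcongr with a
          · exact ih Q hQ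
          · exact h1 a
      _ = _ := by
          simp only [Finset.sum_const, Finset.card_univ, Fintype.card_fin, nsmul_eq_mul]
          have hsplit : ENNReal.ofReal ((1 + h * (d + 1) ^ 2 * (2 * n)) ^ (k + 1)) =
              A * (1 + ENNReal.ofReal h * ENNReal.ofReal (d + 1 : ℝ) ^ 2 * ENNReal.ofReal (2 * n)) := by
            rw [pow_succ, ENNReal.ofReal_mul (by positivity), ← hA, ENNReal.ofReal_add (by positivity) (by positivity),
              ENNReal.ofReal_mul (by positivity), ENNReal.ofReal_mul hh, ENNReal.ofReal_pow (by positivity), ENNReal.ofReal_one]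
          rw [hsplit]
          have : ENNReal.ofReal (d + 1 : ℝ) = ((d + 1 : ℕ) : ℝ≥0∞) := by
            rw [← ENNReal.ofReal_natCast]; push_cast; rfl
          rw [this]
          ring

lemma sobolev {d : ℕ} (h ℓ : ℝ) (hℓ : 0 < ℓ) (hh : ℓ ≤ h) (α : Fin (d + 1) → ℝ) (i : Fin (d + 1))
    (s : Finset (Fin (d + 1))) (his : i ∉ s) (Q : MvPolynomial (Fin (d + 1)) ℝ) (u : Fin (d + 1) → ℝ)
    (hi : 1 ≤ |u i|) (hu : ∀ j ∈ s, u j ∈ Set.Icc (α j) (α j + ℓ)) :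
    ENNReal.ofReal |H Q u| ≤ ENNReal.ofReal ℓ⁻¹ ^ s.card *
      lmarginal (fun j => volume.restrict (Set.Icc (α j) (α j + ℓ))) s (fun z => V h s.card Q (nz z)) u := by
  induction s using Finset.induction_on generalizing Q u with
  | empty => simp [V, H]
  | insert j s hj ih =>
    have hij : i ≠ j := fun h => his (h ▸ Finset.mem_insert_self _ _)
    have his' : i ∉ s := fun h => his (Finset.mem_insert_of_mem h)
    have hq : ∀ t, 1 ≤ q (Function.update u j t) := by
      intro t
      have h : (Function.update u j t) i ^ 2 ≤ q (Function.update u j t) :=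
        Finset.single_le_sum (f := fun i => (Function.update u j t) i ^ 2) (fun i _ => sq_nonneg _) (Finset.mem_univ i)
      rw [Function.update_of_ne hij, ← sq_abs] at h
      nlinarith
    have hder : ∀ t, HasDerivAt (fun t => H Q (Function.update u j t)) (Bv Q (Function.update u j t) j) t := by
      intro t
      have := hasDerivAt_H Q (fun t => Function.update u j t) (Pi.single j 1) t (by
        intro c
        by_cases hc : c = j
        · subst hc; simpa using hasDerivAt_id' t
        · simpa [Function.update_of_ne hc, hc] using hasDerivAt_const t (u c)) (by linarith [hq t])
      refine this.congr_deriv ?_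
      rw [Finset.sum_eq_single j]
      · simp
      · intro b _ hb; simp [hb]
      · simp
    have hcont : Continuous (fun t => Bv Q (Function.update u j t) j) := by
      refine continuous_iff_continuousAt.2 fun t => ?_
      have h1 : ContinuousAt (fun t => Function.update u j t) t :=
        (continuous_const.update j continuous_id).continuousAt
      exact ContinuousAt.comp (g := fun z => Bv Q z j) (continuousAt_Bv Q (by linarith [hq t]) j) h1
    have h1 := oned (s := u j) hℓ (fun t _ => hder t) hcont.continuousOn (hu j (Finset.mem_insert_self _ _))
    rw [Function.update_eq_self] at h1
    refine h1.trans ?_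
    have hfm : Measurable (fun z : Fin (d+1) → ℝ => V h (insert j s).card Q (nz z)) := (measurable_V _ _ _).comp measurable_nz
    rw [lmarginal_insert _ hfm hj]
    rw [Finset.card_insert_of_notMem hj, pow_succ', mul_assoc]
    gcongr
    rw [← lintegral_const_mul' _ _ ENNReal.ofReal_ne_top, ← lintegral_const_mul' _ _ (by finiteness)]
    have hup : Measurable (fun t => Function.update u j t) := measurable_update u
    have hHm : Measurable (fun t => ENNReal.ofReal |H Q (Function.update u j t)|) :=
      ((measurable_H Q).comp hup).abs.ennreal_ofReal
    rw [← lintegral_add_left hHm]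
    refine lintegral_mono fun t => ?_
    dsimp only
    set v := Function.update u j t with hv
    have hvi : 1 ≤ |v i| := by rw [hv, Function.update_of_ne hij]; exact hi
    have hvu : ∀ c ∈ s, v c ∈ Set.Icc (α c) (α c + ℓ) := by
      intro c hc
      have hcj : c ≠ j := by rintro rfl; exact hj hc
      rw [hv, Function.update_of_ne hcj]
      exact hu c (Finset.mem_insert_of_mem hc)
    have hV : ∀ R : MvPolynomial (Fin (d+1)) ℝ, ∀ k, Measurable fun y : s → ℝ => V h k R (nz (Function.updateFinset v s y)) := by
      intro R k
      exact (measurable_V _ _ _).comp (measurable_nz.comp measurable_updateFinset)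
    have hlin : lmarginal (fun j => volume.restrict (Set.Icc (α j) (α j + ℓ))) s (fun z => V h (s.card + 1) Q (nz z)) v =
        lmarginal (fun j => volume.restrict (Set.Icc (α j) (α j + ℓ))) s (fun z => V h (s.card) Q (nz z)) v +
        ENNReal.ofReal h * ∑ a, ∑ b,
          lmarginal (fun j => volume.restrict (Set.Icc (α j) (α j + ℓ))) s (fun z => V h (s.card) (Dop a b Q) (nz z)) v := by
      simp only [lmarginal, V]
      rw [lintegral_add_left (hV _ _), lintegral_const_mul' _ _ ENNReal.ofReal_ne_top, lintegral_finsetSum]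
      · congr 2
        refine Finset.sum_congr rfl fun a _ => ?_
        rw [lintegral_finsetSum]
        exact fun b _ => hV _ _
      · exact fun a _ => Finset.measurable_fun_sum _ fun b _ => hV _ _
    rw [hlin, mul_add]
    refine add_le_add (ih his' Q v hvi hvu) ?_
    have hB := Bv_le Q v (hq t) j
    calc ENNReal.ofReal ℓ * ENNReal.ofReal |Bv Q v j| ≤ ENNReal.ofReal h * ∑ a, ∑ b, ENNReal.ofReal |H (Dop a b Q) v| := by
          refine mul_le_mul' (ENNReal.ofReal_le_ofReal hh) ?_
          refine (ENNReal.ofReal_le_ofReal hB).trans ?_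
          rw [ENNReal.ofReal_sum_of_nonneg (fun _ _ => abs_nonneg _)]
          refine Finset.sum_le_sum fun a _ => ?_
          exact Finset.single_le_sum (f := fun b => ENNReal.ofReal |H (Dop a b Q) v|) (fun _ _ => zero_le) (Finset.mem_univ j)
      _ ≤ ENNReal.ofReal h * ∑ a, ∑ b, ENNReal.ofReal ℓ⁻¹ ^ s.card * 
          lmarginal (fun j => volume.restrict (Set.Icc (α j) (α j + ℓ))) s (fun z => V h (s.card) (Dop a b Q) (nz z)) v := by
          gcongr with a _ b _
          exact ih his' (Dop a b Q) v hvi hvu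
      _ = _ := by
          simp only [← Finset.mul_sum]
          ring

end SD

end

section

open MeasureTheory Finset
open scoped ENNReal

namespace SD

lemma nz_smul {d : ℕ} (u : Fin (d + 1) → ℝ) {τ : ℝ} (hτ : 0 < τ) : nz (fun j => τ * u j) = nz u := by
  have : √(q (fun j => τ * u j)) = τ * √(q u) := by
    have : q (fun j => τ * u j) = τ ^ 2 * q u := by
      simp only [q, Finset.mul_sum, mul_pow]
    rw [this, Real.sqrt_mul (sq_nonneg τ), Real.sqrt_sq hτ.le]
  funext i
  simp only [nz, this]
  rw [mul_div_mul_left _ _ hτ.ne']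

/-- cone region over a box in a face -/
def Om {d : ℕ} (i : Fin (d + 1)) (σ ℓ : ℝ) (β : Fin (d + 1) → ℝ) : Set (Fin (d + 1) → ℝ) :=
  {x | σ * x i ∈ Set.Icc (1:ℝ) 2 ∧ ∀ j, j ≠ i → x j ∈ Set.Icc (σ * x i * β j) (σ * x i * β j + σ * x i * ℓ)}

lemma measurableSet_Om {d : ℕ} (i : Fin (d + 1)) (σ ℓ : ℝ) (β : Fin (d + 1) → ℝ) : MeasurableSet (Om i σ ℓ β) := by
  have : Om i σ ℓ β = {x | σ * x i ∈ Set.Icc (1:ℝ) 2} ∩ ⋂ j, {x | j ≠ i → x j ∈ Set.Icc (σ * x i * β j) (σ * x i * β j + σ * x i * ℓ)} := by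
    ext x; simp [Om]
  rw [this]
  refine IsClosed.measurableSet (IsClosed.inter ?_ (isClosed_iInter fun j => ?_))
  · exact isClosed_Icc.preimage (by fun_prop)
  · by_cases hj : j = i
    · simp [hj]
    · simp only [ne_eq, hj, not_false_eq_true, forall_const, Set.mem_Icc]
      have h1 : IsClosed {x : Fin (d + 1) → ℝ | σ * x i * β j ≤ x j} := isClosed_le (by fun_prop) (by fun_prop)
      have h2 : IsClosed {x : Fin (d + 1) → ℝ | x j ≤ σ * x i * β j + σ * x i * ℓ} := isClosed_le (by fun_prop) (by fun_prop)
      exact h1.inter h2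

lemma vol_sign {σ : ℝ} (hσ : σ = 1 ∨ σ = -1) : volume {t : ℝ | σ * t ∈ Set.Icc (1:ℝ) 2} = 1 := by
  rcases hσ with rfl | rfl
  · have : {t : ℝ | 1 * t ∈ Set.Icc (1:ℝ) 2} = Set.Icc 1 2 := by ext; simp
    rw [this, Real.volume_Icc]; norm_num
  · have : {t : ℝ | -1 * t ∈ Set.Icc (1:ℝ) 2} = Set.Icc (-2) (-1) := by
      ext t; simp only [Set.mem_ofPred_eq, Set.mem_Icc]; constructor <;> rintro ⟨h1, h2⟩ <;> constructor <;> linarith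
    rw [this, Real.volume_Icc]; norm_num

lemma cone_sobolev {d : ℕ} (h ℓ : ℝ) (hℓ : 0 < ℓ) (hh : 2 * ℓ ≤ h) (β : Fin (d + 1) → ℝ) (i : Fin (d + 1))
    (σ : ℝ) (hσ : σ = 1 ∨ σ = -1) (Q : MvPolynomial (Fin (d + 1)) ℝ) (u : Fin (d + 1) → ℝ)
    (hi : u i = σ) (hu : ∀ j, j ≠ i → u j ∈ Set.Icc (β j) (β j + ℓ)) :
    ENNReal.ofReal |H Q u| ≤ ENNReal.ofReal ℓ⁻¹ ^ d * ∫⁻ x in Om i σ ℓ β, V h d Q (nz x) := by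
  have hσσ : σ * σ = 1 := by rcases hσ with rfl | rfl <;> norm_num
  have hσa : |σ| = 1 := by rcases hσ with rfl | rfl <;> norm_num
  have hm : Measurable ((Om i σ ℓ β).indicator fun x => V h d Q (nz x)) :=
    ((measurable_V _ _ _).comp measurable_nz).indicator (measurableSet_Om _ _ _ _)
  have hT : MeasurableSet {t : ℝ | σ * t ∈ Set.Icc (1:ℝ) 2} :=
    (isClosed_Icc.preimage (by fun_prop : Continuous fun t : ℝ => σ * t)).measurableSet
  rw [← lintegral_indicator (measurableSet_Om _ _ _ _)]
  rw [show (volume : Measure (Fin (d+1) → ℝ)) = Measure.pi (fun _ => volume) from rfl,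
    lintegral_eq_lmarginal_univ (μ := fun _ => volume) u,
    lmarginal_erase _ hm (Finset.mem_univ i)]
  have hcard : (univ.erase i : Finset (Fin (d+1))).card = d := by
    rw [Finset.card_erase_of_mem (Finset.mem_univ i)]; simp
  calc ENNReal.ofReal |H Q u| = ∫⁻ t in {t : ℝ | σ * t ∈ Set.Icc (1:ℝ) 2}, ENNReal.ofReal |H Q u| := by
        rw [setLIntegral_const, vol_sign hσ, mul_one]
    _ ≤ ∫⁻ t in {t : ℝ | σ * t ∈ Set.Icc (1:ℝ) 2}, ENNReal.ofReal ℓ⁻¹ ^ d *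
        lmarginal (fun _ => volume) (univ.erase i) ((Om i σ ℓ β).indicator fun x => V h d Q (nz x)) (Function.update u i t) := by
        refine setLIntegral_mono' hT fun t ht => ?_
        set τ := σ * t with hτ
        have hτ1 : 1 ≤ τ := ht.1
        have hτ0 : 0 < τ := by linarith
        have hτ2 : τ ≤ 2 := ht.2
        have e1 : H Q u = H Q (fun j => τ * u j) := by rw [H, H, nz_smul u hτ0]
        have h1 := sobolev h (τ * ℓ) (by positivity) (by nlinarith) (fun j => τ * β j) i (univ.erase i)
          (by simp) Q (fun j => τ * u j) (by rw [hi, abs_mul, hσa, abs_of_pos hτ0]; linarith) (by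
            intro j hj
            have := hu j (by simpa using hj)
            exact ⟨by nlinarith [this.1], by nlinarith [this.2]⟩)
        rw [e1]
        refine h1.trans ?_
        rw [hcard]
        refine mul_le_mul' ?_ ?_
        · gcongr
          exact le_mul_of_one_le_left hℓ.le hτ1
        · simp only [lmarginal]
          rw [← Measure.restrict_pi_pi, ← lintegral_indicator (MeasurableSet.univ_pi fun _ => measurableSet_Icc)]
          refine lintegral_mono fun y => ?_
          by_cases hy : y ∈ Set.univ.pi fun j : (univ.erase i : Finset (Fin (d+1))) => Set.Icc (τ * β j) (τ * β j + τ * ℓ)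
          swap
          · rw [Set.indicator_of_notMem hy]; exact zero_le
          rw [Set.indicator_of_mem hy]
          have e2 : Function.updateFinset (fun j => τ * u j) (univ.erase i) y =
              Function.updateFinset (Function.update u i t) (univ.erase i) y := by
            funext j
            simp only [Function.updateFinset]
            split_ifs with hj
            · rfl
            · have : j = i := by simpa using hj
              subst this
              rw [hi, Function.update_self, hτ]
              linear_combination t * hσσ
          rw [e2]
          set x := Function.updateFinset (Function.update u i t) (univ.erase i) y with hx
          have hxi : x i = t := by simp [hx, Function.updateFinset]
          have hmem : x ∈ Om i σ ℓ β := by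
            refine ⟨by rw [hxi]; exact ht, fun j hj => ?_⟩
            rw [hxi]
            have := hy ⟨j, by simpa using hj⟩ (Set.mem_univ _)
            have hxj : x j = y ⟨j, by simpa using hj⟩ := by simp [hx, Function.updateFinset, hj]
            rw [hxj]
            exact this
          rw [Set.indicator_of_mem hmem]
    _ ≤ _ := by
        rw [lintegral_const_mul' _ _ (by finiteness)]
        gcongr
        exact Measure.restrict_le_self

/-- cell labels -/
noncomputable def Lab (d m : ℕ) : Finset (Fin (d + 1) × (Fin (d + 1) → ℤ)) :=
  (univ ×ˢ Fintype.piFinset (fun _ => Finset.Icc (-(m:ℤ)) m)).filter (fun c => |c.2 c.1| = m)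

/-- enlarged cells in a face -/
def Kc {d : ℕ} (m : ℕ) (c : Fin (d + 1) × (Fin (d + 1) → ℤ)) : Set (Fin (d + 1) → ℝ) :=
  {u | u c.1 = c.2 c.1 / m ∧ ∀ j, j ≠ c.1 → u j ∈ Set.Icc (((c.2 j : ℝ) - 1) / m) (((c.2 j : ℝ) + 2) / m)}

lemma Lab_mem {d m : ℕ} {c : Fin (d + 1) × (Fin (d + 1) → ℤ)} :
    c ∈ Lab d m ↔ (∀ j, -(m:ℤ) ≤ c.2 j ∧ c.2 j ≤ m) ∧ |c.2 c.1| = m := by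
  simp [Lab]

lemma Lab_sign {d m : ℕ} (hm : 1 ≤ m) {c : Fin (d + 1) × (Fin (d + 1) → ℤ)} (hc : c ∈ Lab d m) :
    (c.2 c.1 / m : ℝ) = 1 ∨ (c.2 c.1 / m : ℝ) = -1 := by
  have hm' : (m:ℝ) ≠ 0 := by exact_mod_cast (by omega : m ≠ 0)
  rcases eq_or_eq_neg_of_abs_eq (Lab_mem.1 hc).2 with h | h
  · left; rw [h]; push_cast; field_simp
  · right; rw [h]; push_cast; field_simp

open Classical in
/-- multiplicative constant of overlap -/
lemma overlap {d m : ℕ} (hm : 1 ≤ m) (x : Fin (d + 1) → ℝ) :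
    ((Lab d m).filter (fun c : Fin (d + 1) × (Fin (d + 1) → ℤ) => x ∈ Om c.1 (c.2 c.1 / m) (3 / m) (fun j => ((c.2 j : ℝ) - 1) / m))).card ≤
      (d + 1) * 4 ^ (d + 1) := by
  have hm0 : (0:ℝ) < m := by exact_mod_cast (by omega : 0 < m)
  have hsub : (Lab d m).filter (fun c : Fin (d + 1) × (Fin (d + 1) → ℤ) => x ∈ Om c.1 (c.2 c.1 / m) (3 / m) (fun j => ((c.2 j : ℝ) - 1) / m)) ⊆
      (Finset.univ.sigma (fun i : Fin (d+1) => Fintype.piFinset (fun j => Finset.Icc ⌈m * x j / |x i| - 2⌉ ⌊m * x j / |x i| + 1⌋))).image (fun p => (p.1, p.2)) := by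
    intro c hc
    rw [Finset.mem_filter] at hc
    obtain ⟨hc, h1, h2⟩ := hc
    have hs := Lab_sign hm hc
    set σ : ℝ := c.2 c.1 / m with hσ
    have hτ : σ * x c.1 = |x c.1| := by
      rcases hs with h | h
      · rw [h] at h1 ⊢; rw [one_mul] at h1 ⊢; rw [abs_of_nonneg]; linarith [h1.1]
      · rw [h] at h1 ⊢; rw [abs_of_nonpos] ; ring; linarith [h1.1]
    rw [hτ] at h1 h2
    have hpos : 0 < |x c.1| := by linarith [h1.1]
    rw [Finset.mem_image]
    refine ⟨⟨c.1, c.2⟩, ?_, rfl⟩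
    simp only [Finset.mem_sigma, Finset.mem_univ, true_and, Fintype.mem_piFinset, Finset.mem_Icc, Int.ceil_le, Int.le_floor]
    intro j
    by_cases hj : j = c.1
    · rw [hj]
      have : m * x c.1 / |x c.1| = c.2 c.1 := by
        have hc2 : (c.2 c.1 : ℝ) = σ * m := by rw [hσ]; field_simp
        rw [hc2, div_eq_iff hpos.ne', ← hτ]
        have hσσ : σ * σ = 1 := by rcases hs with h | h <;> rw [h] <;> norm_num
        linear_combination (- (m:ℝ) * x c.1) * hσσ
      rw [this]; constructor <;> linarith
    · have := h2 j hj
      constructor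
      · rw [sub_le_iff_le_add, div_le_iff₀ hpos]
        have h3 := mul_le_mul_of_nonneg_left this.2 hm0.le
        have e : m * (|x c.1| * (((c.2 j : ℝ) - 1) / m) + |x c.1| * (3 / m)) = (c.2 j + 2) * |x c.1| := by
          field_simp; ring
        linarith
      · rw [← sub_le_iff_le_add, le_div_iff₀ hpos]
        have h3 := mul_le_mul_of_nonneg_left this.1 hm0.le
        have e : m * (|x c.1| * (((c.2 j : ℝ) - 1) / m)) = (c.2 j - 1) * |x c.1| := by
          field_simp
        linarith
  refine (Finset.card_le_card hsub).trans (Finset.card_image_le.trans ?_)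
  rw [Finset.card_sigma]
  have : ∀ i ∈ (univ : Finset (Fin (d+1))), (Fintype.piFinset (fun j => Finset.Icc ⌈m * x j / |x i| - 2⌉ ⌊m * x j / |x i| + 1⌋)).card ≤ 4 ^ (d + 1) := by
    intro i _
    rw [Fintype.card_piFinset]
    refine (Finset.prod_le_pow_card _ _ 4 fun j _ => ?_).trans (by simp)
    rw [Int.card_Icc]
    have h1 : ⌊m * x j / |x i| + 1⌋ < ⌈m * x j / |x i| - 2⌉ + 4 := by
      rw [Int.floor_lt]
      push_cast
      have := Int.le_ceil (m * x j / |x i| - 2)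
      linarith
    omega
  refine (Finset.sum_le_sum this).trans ?_
  simp

lemma Om_sub {d m : ℕ} (hm : 1 ≤ m) {c : Fin (d + 1) × (Fin (d + 1) → ℤ)} (hc : c ∈ Lab d m) :
    Om c.1 (c.2 c.1 / m) (3 / m) (fun j => ((c.2 j : ℝ) - 1) / m) ⊆ {x | q x ≤ 36 * (d + 1)} := by
  intro x ⟨h1, h2⟩
  have hm1 : (1:ℝ) ≤ m := by exact_mod_cast hm
  have hm0 : (0:ℝ) < m := by linarith
  have hs := Lab_sign hm hc
  have hb : ∀ j, x j ^ 2 ≤ 36 := by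
    intro j
    by_cases hj : j = c.1
    · subst hj
      have : x c.1 ^ 2 = ((c.2 c.1 / m : ℝ) * x c.1) ^ 2 := by
        rcases hs with h | h <;> rw [h] <;> ring
      rw [this]
      nlinarith [h1.1, h1.2]
    · have := h2 j hj
      set τ := (c.2 c.1 / m : ℝ) * x c.1
      have hk := (Lab_mem.1 hc).1 j
      have hk1 : -(m:ℝ) ≤ c.2 j := by exact_mod_cast hk.1
      have hk2 : (c.2 j : ℝ) ≤ m := by exact_mod_cast hk.2
      have a1 : -2 ≤ ((c.2 j : ℝ) - 1) / m := by rw [le_div_iff₀ hm0]; linarith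
      have a2 : ((c.2 j : ℝ) - 1) / m + 3 / m ≤ 3 := by rw [← add_div, div_le_iff₀ hm0]; linarith
      have b1 : -6 ≤ x j := by nlinarith [this.1, h1.1, h1.2]
      have b2 : x j ≤ 6 := by nlinarith [this.2, h1.1, h1.2]
      nlinarith
  simp only [Set.mem_ofPred_eq, q]
  refine (Finset.sum_le_sum fun j _ => hb j).trans ?_
  simp; linarith

lemma MZ (d : ℕ) : ∃ C : ℝ, 0 < C ∧ ∀ m n : ℕ, 1 ≤ n → n ≤ m → ∀ u : Fin (d + 1) × (Fin (d + 1) → ℤ) → Fin (d + 1) → ℝ,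
    (∀ c ∈ Lab d m, u c ∈ Kc m c) → ∀ Q : MvPolynomial (Fin (d + 1)) ℝ, Q.totalDegree ≤ n →
    ∑ c ∈ Lab d m, ENNReal.ofReal |H Q (u c)| ≤ ENNReal.ofReal (C * m ^ d) * I1 Q := by
  set R := {x : Fin (d+1) → ℝ | q x ≤ 36 * (d + 1)} with hR
  have hRm : MeasurableSet R := measurable_q measurableSet_Iic
  set v := (volume R).toReal with hv
  have hv0 : 0 ≤ v := ENNReal.toReal_nonneg
  have hvR : volume R = ENNReal.ofReal v := by
    rw [hv, ENNReal.ofReal_toReal (vol_q_lt_top d _).ne]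
  obtain ⟨A, hA⟩ : ∃ A : ℝ, A = ((d:ℝ) + 1) * 4 ^ (d + 1) := ⟨_, rfl⟩
  have hA0 : 0 ≤ A := by rw [hA]; positivity
  clear_value v
  refine ⟨A * v * (1 + 12 * (d + 1) ^ 2) ^ d + 1, by positivity, fun m n hn hnm u hu Q hQ => ?_⟩
  have hm : 1 ≤ m := hn.trans hnm
  have hm1 : (1:ℝ) ≤ m := by exact_mod_cast hm
  have hm0 : (0:ℝ) < m := by linarith
  set F := fun x : Fin (d+1) → ℝ => V (6 / m) d Q (nz x) with hF
  have hFm : Measurable F := (measurable_V _ _ _).comp measurable_nz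
  have h1 : ∀ c ∈ Lab d m, ENNReal.ofReal |H Q (u c)| ≤ ENNReal.ofReal (m / 3 : ℝ) ^ d *
      ∫⁻ x, (Om c.1 (c.2 c.1 / m) (3 / m) (fun j => ((c.2 j : ℝ) - 1) / m)).indicator F x := by
    intro c hc
    have h2 := cone_sobolev (6 / m : ℝ) (3 / m) (by positivity) (by field_simp; norm_num) (fun j => ((c.2 j : ℝ) - 1) / m) c.1
      (c.2 c.1 / m) (Lab_sign hm hc) Q (u c) (hu c hc).1 (fun j hj => by
        have := (hu c hc).2 j hj
        refine ⟨this.1, this.2.trans (le_of_eq ?_)⟩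
        rw [← add_div]; ring)
    rwa [inv_div, ← lintegral_indicator (measurableSet_Om _ _ _ _)] at h2
  have h3 : ∑ c ∈ Lab d m, ENNReal.ofReal |H Q (u c)| ≤ ENNReal.ofReal (m / 3 : ℝ) ^ d *
      ∫⁻ x, ∑ c ∈ Lab d m, (Om c.1 (c.2 c.1 / m) (3 / m) (fun j => ((c.2 j : ℝ) - 1) / m)).indicator F x := by
    rw [lintegral_finsetSum _ (fun c _ => hFm.indicator (measurableSet_Om _ _ _ _)), Finset.mul_sum]
    exact Finset.sum_le_sum h1
  have h4 : ∀ x, ∑ c ∈ Lab d m, (Om c.1 (c.2 c.1 / m) (3 / m) (fun j => ((c.2 j : ℝ) - 1) / m)).indicator F x ≤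
      ENNReal.ofReal A * R.indicator F x := by
    intro x
    classical
    simp only [Set.indicator_apply]
    rw [← Finset.sum_filter, Finset.sum_const]
    by_cases hx : x ∈ R
    · rw [if_pos hx, nsmul_eq_mul]
      gcongr
      rw [← ENNReal.ofReal_natCast]
      refine ENNReal.ofReal_le_ofReal ?_
      have := overlap hm x
      rw [hA]
      exact_mod_cast this
    · rw [Finset.filter_eq_empty_iff.2]
      · simp
      · intro c hc hxc
        exact hx (Om_sub hm hc hxc)
  have hVn := V_int hn (6 / m : ℝ) (by positivity) d Q hQ
  have hpb := polar_ball (V (6 / m : ℝ) d Q) (measurable_V _ _ _) (36 * ((d:ℝ) + 1))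
  calc _ ≤ ENNReal.ofReal (m / 3 : ℝ) ^ d * ∫⁻ x, ENNReal.ofReal A * R.indicator F x :=
        h3.trans (mul_le_mul' le_rfl (lintegral_mono h4))
    _ = ENNReal.ofReal (m / 3 : ℝ) ^ d * (ENNReal.ofReal A * (ENNReal.ofReal v * ∫⁻ y, V (6 / m : ℝ) d Q y ∂nu d)) := by
        rw [lintegral_const_mul' _ _ ENNReal.ofReal_ne_top, lintegral_indicator hRm, ← hvR, ← hpb]
    _ ≤ ENNReal.ofReal (m / 3 : ℝ) ^ d * (ENNReal.ofReal A * (ENNReal.ofReal v * 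
        (ENNReal.ofReal ((1 + 6 / m * (d + 1) ^ 2 * (2 * n)) ^ d) * I1 Q))) := by gcongr
    _ = ENNReal.ofReal ((m / 3 : ℝ) ^ d * (A * (v * (1 + 6 / m * (d + 1) ^ 2 * (2 * n)) ^ d))) * I1 Q := by
        rw [ENNReal.ofReal_mul (p := (m / 3 : ℝ) ^ d) (by positivity), ENNReal.ofReal_mul (p := A) hA0, ENNReal.ofReal_mul (p := v) hv0,
          ENNReal.ofReal_pow (p := (m / 3 : ℝ)) (by positivity)]
        ring
    _ ≤ _ := by
        refine mul_le_mul' (ENNReal.ofReal_le_ofReal ?_) le_rfl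
        have e1 : (m / 3 : ℝ) ^ d ≤ m ^ d := by gcongr; linarith
        have e2 : (1 + 6 / m * (d + 1) ^ 2 * (2 * n) : ℝ) ≤ 1 + 12 * (d + 1) ^ 2 := by
          have : (n:ℝ) / m ≤ 1 := by rw [div_le_one hm0]; exact_mod_cast hnm
          have : 6 / m * (d + 1) ^ 2 * (2 * n) = 12 * ((d:ℝ) + 1) ^ 2 * (n / m) := by ring
          rw [this]
          nlinarith [sq_nonneg ((d:ℝ) + 1)]
        calc (m / 3 : ℝ) ^ d * (A * (v * (1 + 6 / m * (d + 1) ^ 2 * (2 * n)) ^ d)) ≤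
            m ^ d * (A * (v * (1 + 12 * (d + 1) ^ 2) ^ d)) := by gcongr
          _ ≤ _ := by
            have : (0:ℝ) < (m:ℝ) ^ d := by positivity
            nlinarith

end SD

end

section

open MeasureTheory Finset
open scoped ENNReal

namespace SD

lemma norm_sq_le_q {d : ℕ} (z : Fin (d + 1) → ℝ) : ‖z‖ ≤ √(q z) := by
  rw [pi_norm_le_iff_of_nonneg (Real.sqrt_nonneg _)]
  intro i
  rw [Real.norm_eq_abs]
  refine Real.abs_le_sqrt ?_
  exact Finset.single_le_sum (f := fun i => z i ^ 2) (fun i _ => sq_nonneg _) (Finset.mem_univ i)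

lemma gB {d : ℕ} (hd : 1 ≤ d) : ∫⁻ z : Fin (d + 1) → ℝ, ENNReal.ofReal ((√(q z))⁻¹ * Real.exp (-(q z / 2))) < ⊤ := by
  have h1 : Integrable (fun z : Fin (d + 1) → ℝ => (fun r : ℝ => r⁻¹ * Real.exp (-(1/2) * r ^ 2)) ‖z‖) := by
    rw [integrable_fun_norm_addHaar volume (f := fun r : ℝ => r⁻¹ * Real.exp (-(1/2) * r ^ 2))]
    have h2 := integrableOn_rpow_mul_exp_neg_mul_sq (b := 1/2) (by norm_num) (s := (d:ℝ) - 1) (by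
      have : (1:ℝ) ≤ d := by exact_mod_cast hd
      linarith)
    refine h2.congr_fun (fun r hr => ?_) measurableSet_Ioi
    have hr0 : (0:ℝ) < r := hr
    simp only [Module.finrank_fintype_fun_eq_card, Fintype.card_fin, add_tsub_cancel_right, smul_eq_mul]
    rw [Real.rpow_sub_one hr0.ne', Real.rpow_natCast]
    ring
  refine lt_of_le_of_lt ?_ h1.lintegral_lt_top
  refine lintegral_mono fun z => ENNReal.ofReal_le_ofReal ?_
  have hn := norm_sq_le_q z
  rcases eq_or_ne z 0 with rfl | hz
  · simp [q]
  · have hp : 0 < ‖z‖ := norm_pos_iff.2 hz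
    have : ‖z‖ ^ 2 ≤ q z := by
      rw [← Real.sq_sqrt (q_nonneg z)]; gcongr
    refine mul_le_mul (inv_anti₀ hp hn) (Real.exp_le_exp.2 (by linarith)) (Real.exp_pos _).le (by positivity)

lemma gM {d : ℕ} (hd : 1 ≤ d) (k : ℕ) (hk : k ≤ 2) : 
    ∫⁻ z : Fin (d + 1) → ℝ, ENNReal.ofReal ((√(q z))⁻¹ * (√(q z)) ^ k * Real.exp (-(q z))) < ⊤ := by
  have h : ∀ z : Fin (d + 1) → ℝ, ENNReal.ofReal ((√(q z))⁻¹ * (√(q z)) ^ k * Real.exp (-(q z))) ≤ 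
      ENNReal.ofReal 2 * ENNReal.ofReal ((√(q z))⁻¹ * Real.exp (-(q z / 2))) := by
    intro z
    rw [← ENNReal.ofReal_mul (by norm_num)]
    refine ENNReal.ofReal_le_ofReal ?_
    have hq := q_nonneg z
    set s := √(q z) with hs
    have hs0 : 0 ≤ s := Real.sqrt_nonneg _
    have hsq : s ^ 2 = q z := Real.sq_sqrt hq
    have e : Real.exp (-(q z)) = Real.exp (-(q z / 2)) * Real.exp (-(q z / 2)) := by
      rw [← Real.exp_add]; ring_nf
    have h1 : q z / 2 + 1 ≤ Real.exp (q z / 2) := Real.add_one_le_exp _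
    have h2 : s ^ k ≤ 2 * Real.exp (q z / 2) := by
      interval_cases k
      · simp; linarith
      · nlinarith [sq_nonneg (s - 1)]
      · linarith
    have h3 : s ^ k * Real.exp (-(q z / 2)) ≤ 2 := by
      rw [Real.exp_neg, ← div_eq_mul_inv, div_le_iff₀ (Real.exp_pos _)]; exact h2
    rw [e]
    calc s⁻¹ * s ^ k * (Real.exp (-(q z / 2)) * Real.exp (-(q z / 2))) = 
        (s ^ k * Real.exp (-(q z / 2))) * (s⁻¹ * Real.exp (-(q z / 2))) := by ring
      _ ≤ 2 * (s⁻¹ * Real.exp (-(q z / 2))) := by gcongr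
  refine lt_of_le_of_lt (lintegral_mono h) ?_
  rw [lintegral_const_mul' _ _ ENNReal.ofReal_ne_top]
  exact ENNReal.mul_lt_top ENNReal.ofReal_lt_top (gB hd)

lemma gM_pos (d : ℕ) : ∫⁻ z : Fin (d + 1) → ℝ, ENNReal.ofReal (Real.exp (-(q z))) ≠ 0 := by
  refine ne_of_gt ?_
  have hm : Measurable (fun z : Fin (d + 1) → ℝ => ENNReal.ofReal (Real.exp (-(q z)))) := (measurable_q.neg.exp).ennreal_ofReal
  rw [lintegral_pos_iff_support hm]
  have : Function.support (fun z : Fin (d + 1) → ℝ => ENNReal.ofReal (Real.exp (-(q z)))) = Set.univ := by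
    ext z; simp [Real.exp_pos]
  rw [this]
  exact isOpen_univ.measure_pos _ ⟨0, trivial⟩

/-- double rotation -/
noncomputable def dr {d : ℕ} (t : ℝ) (p : (Fin (d + 1) → ℝ) × (Fin (d + 1) → ℝ)) :
    (Fin (d + 1) → ℝ) × (Fin (d + 1) → ℝ) :=
  (fun i => Real.cos t * p.1 i + Real.sin t * p.2 i, fun i => -Real.sin t * p.1 i + Real.cos t * p.2 i)

lemma rot2 (t : ℝ) : MeasurePreserving (fun p : ℝ × ℝ => (Real.cos t * p.1 + Real.sin t * p.2, -Real.sin t * p.1 + Real.cos t * p.2)) := by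
  have h1 := Complex.volume_preserving_equiv_real_prod
  have h2 : MeasurePreserving (fun z : ℂ => rotation (Circle.exp (-t)) z) := 
    (rotation (Circle.exp (-t))).measurePreserving
  have h := (h1.comp h2).comp (h1.symm _)
  convert h using 1
  funext p
  show _ = ((rotation (Circle.exp (-t)) ⟨p.1, p.2⟩).re, (rotation (Circle.exp (-t)) ⟨p.1, p.2⟩).im)
  rw [rotation_apply, Circle.coe_exp, Complex.mul_re, Complex.mul_im, Complex.exp_ofReal_mul_I_re, Complex.exp_ofReal_mul_I_im]
  simp only [Real.cos_neg, Real.sin_neg]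
  refine Prod.ext ?_ ?_ <;> simp only <;> ring

lemma dr_mp {d : ℕ} (t : ℝ) : MeasurePreserving (dr (d := d) t) := by
  have h0 := volume_measurePreserving_arrowProdEquivProdArrow ℝ ℝ (Fin (d+1))
  have h1 := volume_preserving_pi (fun _ : Fin (d+1) => rot2 t)
  exact (h0.comp h1).comp (h0.symm _)

lemma dr_q {d : ℕ} (t : ℝ) (p : (Fin (d + 1) → ℝ) × (Fin (d + 1) → ℝ)) : q (dr t p).1 + q (dr t p).2 = q p.1 + q p.2 := by
  simp only [q, dr, ← Finset.sum_add_distrib]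
  refine Finset.sum_congr rfl fun i _ => ?_
  linear_combination (p.1 i ^ 2 + p.2 i ^ 2) * Real.sin_sq_add_cos_sq t

lemma good {d : ℕ} (hd : 1 ≤ d) : ∀ᵐ x : Fin (d + 1) → ℝ, ∀ᵐ y : Fin (d + 1) → ℝ, ∀ t, q (dr t (x, y)).1 ≠ 0 := by
  have hx : ∀ᵐ x : Fin (d + 1) → ℝ, x ≠ 0 := by
    rw [ae_iff]; simp
  filter_upwards [hx] with x hx
  have hs : Submodule.span ℝ {x} ≠ ⊤ := by
    intro h
    have h1 := finrank_span_singleton (K := ℝ) hx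
    rw [h, finrank_top] at h1
    simp at h1; omega
  have h0 := Measure.addHaar_submodule volume _ hs
  rw [ae_iff]
  refine measure_mono_null (fun y hy => ?_) h0
  simp only [ne_eq, not_forall, not_not, Set.mem_ofPred_eq] at hy
  obtain ⟨t, ht⟩ := hy
  have hz : ∀ i, Real.cos t * x i + Real.sin t * y i = 0 := by
    intro i
    have h1 := (Finset.sum_eq_zero_iff_of_nonneg (fun i _ => sq_nonneg _)).1 ht i (Finset.mem_univ i)
    simpa [dr] using h1
  have hsin : Real.sin t ≠ 0 := by
    intro h
    have hc : Real.cos t ≠ 0 := by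
      intro hc; have := Real.sin_sq_add_cos_sq t; rw [h, hc] at this; norm_num at this
    apply hx; funext i
    have := hz i; rw [h] at this; simpa [hc] using this
  rw [SetLike.mem_coe, Submodule.mem_span_singleton]
  refine ⟨-(Real.cos t / Real.sin t), ?_⟩
  funext i
  simp only [Pi.smul_apply, smul_eq_mul]
  field_simp
  linarith [hz i]

lemma dir_le2 {d : ℕ} (P : MvPolynomial (Fin (d + 1)) ℝ) (z w : Fin (d + 1) → ℝ) (hz : q z ≠ 0) :
    |∑ a, w a * Bv P z a| ≤ √(q w) * (√(q z))⁻¹ * G1 P z := by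
  have hs := sqrt_q_pos hz
  have hc : ∀ (v : Fin (d+1) → ℝ) a, |v a| ≤ √(q v) := fun v a => by
    refine Real.abs_le_sqrt ?_
    exact Finset.single_le_sum (f := fun i => v i ^ 2) (fun i _ => sq_nonneg _) (Finset.mem_univ a)
  have hb : ∀ b, |z b / q z| ≤ (√(q z))⁻¹ := by
    intro b
    rw [abs_div, abs_of_nonneg (q_nonneg z)]
    have e : q z = √(q z) * √(q z) := (Real.mul_self_sqrt (q_nonneg z)).symm
    rw [div_le_iff₀ (lt_of_le_of_ne (q_nonneg z) hz.symm)]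
    refine (hc z b).trans (le_of_eq ?_)
    rw [eq_inv_mul_iff_mul_eq₀ hs.ne']; exact e.symm
  calc _ ≤ ∑ a, |w a * Bv P z a| := Finset.abs_sum_le_sum_abs _ _
    _ ≤ ∑ a, √(q w) * ∑ b, ((√(q z))⁻¹ * |H (Dop b a P) z|) := by
        refine Finset.sum_le_sum fun a _ => ?_
        rw [abs_mul]
        refine mul_le_mul (hc w a) ?_ (abs_nonneg _) (Real.sqrt_nonneg _)
        refine (Finset.abs_sum_le_sum_abs _ _).trans (Finset.sum_le_sum fun b _ => ?_)
        rw [abs_mul]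
        exact mul_le_mul_of_nonneg_right (hb b) (abs_nonneg _)
    _ = _ := by
        rw [G1, Finset.sum_comm (f := fun a b => |H (Dop a b P) z|)]
        simp only [Finset.mul_sum, mul_assoc]

end SD

end

section

open MeasureTheory Finset
open scoped ENNReal

namespace SD

lemma measurable_G1 {d : ℕ} (P : MvPolynomial (Fin (d + 1)) ℝ) : Measurable (G1 P) := by
  unfold G1
  refine Finset.measurable_fun_sum _ fun a _ => Finset.measurable_fun_sum _ fun b _ => ?_
  exact (measurable_H _).abs

lemma G1_nz {d : ℕ} (P : MvPolynomial (Fin (d + 1)) ℝ) (z : Fin (d + 1) → ℝ) :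
    G1 P z = ∑ a, ∑ b, |MvPolynomial.eval (nz z) (Dop a b P)| := rfl

/-- sphere version of `G1` -/
noncomputable def g1 {d : ℕ} (P : MvPolynomial (Fin (d + 1)) ℝ) (y : Fin (d + 1) → ℝ) : ℝ :=
  ∑ a, ∑ b, |MvPolynomial.eval y (Dop a b P)|

lemma measurable_g1 {d : ℕ} (P : MvPolynomial (Fin (d + 1)) ℝ) : Measurable (g1 P) := by
  unfold g1
  refine Finset.measurable_fun_sum _ fun a _ => Finset.measurable_fun_sum _ fun b _ => ?_
  exact (measurable_eval _).abs

lemma poin_up {d : ℕ} (hd : 1 ≤ d) (P : MvPolynomial (Fin (d + 1)) ℝ) :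
    ∀ᵐ x : Fin (d + 1) → ℝ, ∀ᵐ y : Fin (d + 1) → ℝ, ENNReal.ofReal |H P y - H P x| ≤
      ∫⁻ t in Set.Icc 0 (Real.pi / 2), ENNReal.ofReal (√(q (dr t (x, y)).2) * (√(q (dr t (x, y)).1))⁻¹ * G1 P (dr t (x, y)).1) := by
  filter_upwards [good hd] with x hx
  filter_upwards [hx] with y hy
  have hder : ∀ t, HasDerivAt (fun s => H P (dr s (x, y)).1) (∑ a, (dr t (x, y)).2 a * Bv P (dr t (x, y)).1 a) t := by
    intro t
    refine hasDerivAt_H P (fun s => (dr s (x, y)).1) (dr t (x, y)).2 t (fun i => ?_) (hy t)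
    exact ((Real.hasDerivAt_cos t).mul_const (x i)).add ((Real.hasDerivAt_sin t).mul_const (y i))
  have hcd : Continuous fun t => dr t (x, y) := by
    unfold dr; fun_prop
  have hcont : Continuous (fun t => ∑ a, (dr t (x, y)).2 a * Bv P (dr t (x, y)).1 a) := by
    rw [continuous_iff_continuousAt]
    intro t
    refine tendsto_finsetSum _ fun a _ => ?_
    have h1 : ContinuousAt (fun t => (dr t (x, y)).2 a) t := ((continuous_apply a).comp (continuous_snd.comp hcd)).continuousAt
    have h2 : ContinuousAt (fun t => Bv P (dr t (x, y)).1 a) t :=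
      ContinuousAt.comp (f := fun t => (dr t (x, y)).1) (g := fun z => Bv P z a) (continuousAt_Bv P (hy t) a) (continuous_fst.comp hcd).continuousAt
    exact h1.mul h2
  have hpi : 0 ≤ Real.pi / 2 := by positivity
  have h := ftc_le (a := 0) (b := Real.pi / 2) (fun t _ => hder t) hcont.continuousOn (s := 0) (t := Real.pi / 2) ⟨le_rfl, hpi⟩ ⟨hpi, le_rfl⟩
  have e0 : (dr 0 (x, y)).1 = x := by simp [dr]
  have e1 : (dr (Real.pi / 2) (x, y)).1 = y := by simp [dr]
  rw [e0, e1] at h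
  refine h.trans (lintegral_mono fun t => ENNReal.ofReal_le_ofReal ?_)
  exact dir_le2 P _ _ (hy t)

lemma poincare {d : ℕ} (hd : 1 ≤ d) : ∃ C : ℝ, 0 < C ∧ ∀ P : MvPolynomial (Fin (d + 1)) ℝ,
    ∫ z, MvPolynomial.eval z P ∂nu d = 0 → I1 P ≤ ENNReal.ofReal C * ∫⁻ z, ENNReal.ofReal (g1 P z) ∂nu d := by
  obtain ⟨M, hM⟩ : ∃ M, M = ∫⁻ z : Fin (d + 1) → ℝ, ENNReal.ofReal (Real.exp (-(q z))) := ⟨_, rfl⟩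
  obtain ⟨A, hA⟩ : ∃ M, M = ∫⁻ z : Fin (d + 1) → ℝ, ENNReal.ofReal (√(q z) * Real.exp (-(q z))) := ⟨_, rfl⟩
  obtain ⟨B, hB⟩ : ∃ M, M = ∫⁻ z : Fin (d + 1) → ℝ, ENNReal.ofReal ((√(q z))⁻¹ * Real.exp (-(q z))) := ⟨_, rfl⟩
  have hnz : ∀ᵐ x : Fin (d + 1) → ℝ, q x ≠ 0 := by
    have hx : ∀ᵐ x : Fin (d + 1) → ℝ, x ≠ 0 := by
      rw [ae_iff]; simp
    filter_upwards [hx] with x hx h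
    apply hx; funext i
    simpa using (Finset.sum_eq_zero_iff_of_nonneg (fun i _ => sq_nonneg (x i))).1 h i (Finset.mem_univ i)
  have hMt : M < ⊤ := by
    have := gM hd 1 (by norm_num)
    rw [hM]
    refine lt_of_le_of_lt (lintegral_mono_ae ?_) this
    filter_upwards [hnz] with x hx
    rw [pow_one, inv_mul_cancel₀ (sqrt_q_pos hx).ne', one_mul]
  have hAt : A < ⊤ := by
    have := gM hd 2 (by norm_num)
    rw [hA]
    refine lt_of_le_of_lt (lintegral_mono_ae ?_) this
    filter_upwards [hnz] with x hx
    rw [pow_two, inv_mul_cancel_left₀ (sqrt_q_pos hx).ne']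
  have hBt : B < ⊤ := by
    have := gM hd 0 (by norm_num)
    rw [hB]
    simpa using this
  have hM0 : M ≠ 0 := by rw [hM]; exact gM_pos d
  have hm1 : Measurable fun r : ℝ => ENNReal.ofReal (Real.exp (-r)) := by fun_prop
  have key : ∀ P : MvPolynomial (Fin (d + 1)) ℝ,
    ∫ z, MvPolynomial.eval z P ∂nu d = 0 → M * (M * I1 P) ≤ ENNReal.ofReal (Real.pi / 2) * (A * (B * ∫⁻ z, ENNReal.ofReal (g1 P z) ∂nu d)) := by
    intro P hP
    have hmE : Measurable fun z : Fin (d+1) → ℝ => ENNReal.ofReal (Real.exp (-(q z))) := hm1.comp measurable_q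
    have L1 : ∀ x, M * ENNReal.ofReal |H P x| ≤ ∫⁻ y, ENNReal.ofReal |H P y - H P x| * ENNReal.ofReal (Real.exp (-(q y))) := by
      intro x
      have := polar (d := d) (fun y => ENNReal.ofReal |MvPolynomial.eval y P - H P x|) (((measurable_eval P).sub_const _).abs.ennreal_ofReal) _ hm1
      have e : ∫⁻ y, ENNReal.ofReal |H P y - H P x| * ENNReal.ofReal (Real.exp (-(q y))) = 
          ∫⁻ z, (fun y => ENNReal.ofReal |MvPolynomial.eval y P - H P x|) (nz z) * ENNReal.ofReal (Real.exp (-(q z))) := rfl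
      rw [e, this, ← hM]
      gcongr
      have h1 := enorm_integral_le_lintegral_enorm (μ := nu d) (fun y => MvPolynomial.eval y P - H P x)
      rw [integral_sub (integrable_eval P) (integrable_const _), hP] at h1
      simpa [← ofReal_norm] using h1
    have L2 : M * (M * I1 P) = ∫⁻ x, M * ENNReal.ofReal |H P x| * ENNReal.ofReal (Real.exp (-(q x))) := by
      have := polar (d := d) (fun y => ENNReal.ofReal |MvPolynomial.eval y P|) ((measurable_eval P).abs.ennreal_ofReal) _ hm1
      rw [← hM] at this
      rw [I1, ← this, ← lintegral_const_mul' _ _ hMt.ne]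
      simp only [mul_assoc]
      rfl
    rw [L2]
    set Ψ : (Fin (d + 1) → ℝ) × (Fin (d + 1) → ℝ) → ℝ≥0∞ := fun p =>
      ENNReal.ofReal (√(q p.2) * (√(q p.1))⁻¹ * G1 P p.1) with hΨ
    set EE : (Fin (d + 1) → ℝ) × (Fin (d + 1) → ℝ) → ℝ≥0∞ := fun p =>
      ENNReal.ofReal (Real.exp (-(q p.2))) * ENNReal.ofReal (Real.exp (-(q p.1))) with hEE
    have hΨm : Measurable Ψ := by
      have h1 : Measurable fun p : (Fin (d + 1) → ℝ) × (Fin (d + 1) → ℝ) => q p.2 := measurable_q.comp measurable_snd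
      have h2 : Measurable fun p : (Fin (d + 1) → ℝ) × (Fin (d + 1) → ℝ) => q p.1 := measurable_q.comp measurable_fst
      exact ((h1.sqrt.mul h2.sqrt.inv).mul ((measurable_G1 P).comp measurable_fst)).ennreal_ofReal
    have hEEm : Measurable EE := (hmE.comp measurable_snd).mul (hmE.comp measurable_fst)
    have hdrm : Measurable fun p : ((Fin (d + 1) → ℝ) × (Fin (d + 1) → ℝ)) × ℝ => dr p.2 p.1 := by
      refine Continuous.measurable ?_
      unfold dr; fun_prop
    have hEEdr : ∀ t p, EE (dr t p) = EE p := by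
      intro t p
      simp only [hEE]
      rw [← ENNReal.ofReal_mul (Real.exp_pos _).le, ← ENNReal.ofReal_mul (Real.exp_pos _).le, ← Real.exp_add, ← Real.exp_add]
      congr 2
      linarith [dr_q t p]
    have hjm : Measurable (Function.uncurry fun (p : (Fin (d + 1) → ℝ) × (Fin (d + 1) → ℝ)) (t : ℝ) => Ψ (dr t p) * EE (dr t p)) :=
      (hΨm.comp hdrm).mul (hEEm.comp hdrm)
    set ρ : Measure ℝ := volume.restrict (Set.Icc 0 (Real.pi / 2)) with hρ
    calc _ ≤ ∫⁻ x, ∫⁻ y, ∫⁻ t, Ψ (dr t (x, y)) * EE (dr t (x, y)) ∂ρ := by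
          refine lintegral_mono_ae ?_
          filter_upwards [poin_up hd P] with x hx
          calc _ ≤ (∫⁻ y, ENNReal.ofReal |H P y - H P x| * ENNReal.ofReal (Real.exp (-(q y)))) * ENNReal.ofReal (Real.exp (-(q x))) := by
                gcongr; exact L1 x
            _ = ∫⁻ y, ENNReal.ofReal |H P y - H P x| * EE (x, y) := by
                rw [← lintegral_mul_const' _ _ ENNReal.ofReal_ne_top]
                simp only [hEE, mul_assoc]
            _ ≤ _ := by
                refine lintegral_mono_ae ?_
                filter_upwards [hx] with y hy
                simp only [hEEdr]
                rw [lintegral_mul_const' _ _ (by simp only [hEE]; finiteness)]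
                gcongr
      _ = ∫⁻ p, ∫⁻ t, Ψ (dr t p) * EE (dr t p) ∂ρ := by
          rw [Measure.volume_eq_prod, lintegral_prod]
          exact (hjm.lintegral_prod_right').aemeasurable
      _ = ∫⁻ t, (∫⁻ p, Ψ (dr t p) * EE (dr t p)) ∂ρ := by
          rw [lintegral_lintegral_swap hjm.aemeasurable]
      _ = ∫⁻ t, (∫⁻ p, Ψ p * EE p) ∂ρ := by
          refine lintegral_congr fun t => ?_
          exact (dr_mp t).lintegral_comp (f := fun p => Ψ p * EE p) (hΨm.mul hEEm)
      _ = ENNReal.ofReal (Real.pi / 2) * ∫⁻ p, Ψ p * EE p := by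
          rw [lintegral_const, hρ, Measure.restrict_apply_univ, Real.volume_Icc, sub_zero, mul_comm]
      _ = _ := by
          congr 1
          have e : ∀ z w, Ψ (z, w) * EE (z, w) = ENNReal.ofReal ((√(q z))⁻¹ * G1 P z * Real.exp (-(q z))) * ENNReal.ofReal (√(q w) * Real.exp (-(q w))) := by
            intro z w
            simp only [hΨ, hEE]
            have := G1_nonneg P z
            rw [← ENNReal.ofReal_mul (by positivity), ← ENNReal.ofReal_mul (by positivity), ← ENNReal.ofReal_mul (by positivity)]
            congr 1; ring
          rw [Measure.volume_eq_prod, lintegral_prod (fun p => Ψ p * EE p) (hΨm.mul hEEm).aemeasurable]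
          simp only [e]
          have e2 : ∀ z : Fin (d+1) → ℝ, ∫⁻ w : Fin (d+1) → ℝ, ENNReal.ofReal ((√(q z))⁻¹ * G1 P z * Real.exp (-(q z))) * ENNReal.ofReal (√(q w) * Real.exp (-(q w))) =
              A * ENNReal.ofReal ((√(q z))⁻¹ * G1 P z * Real.exp (-(q z))) := by
            intro z
            rw [lintegral_const_mul' _ _ ENNReal.ofReal_ne_top, ← hA, mul_comm]
          simp only [e2]
          rw [lintegral_const_mul' _ _ hAt.ne]
          congr 1
          have := polar (d := d) (fun y => ENNReal.ofReal (g1 P y)) ((measurable_g1 P).ennreal_ofReal) (fun r => ENNReal.ofReal ((√r)⁻¹ * Real.exp (-r))) (by fun_prop)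
          rw [← hB] at this
          rw [← this]
          refine lintegral_congr fun z => ?_
          have := G1_nonneg P z
          have e3 : g1 P (nz z) = G1 P z := rfl
          rw [e3, ← ENNReal.ofReal_mul this]
          congr 1; ring
  refine ⟨(ENNReal.ofReal (Real.pi / 2) * (A * B) / (M * M)).toReal + 1, by positivity, fun P hP => ?_⟩
  have hne : ENNReal.ofReal (Real.pi / 2) * (A * B) / (M * M) ≠ ⊤ := by
    refine ENNReal.div_ne_top (by finiteness) (mul_ne_zero hM0 hM0)
  have h := key P hP
  calc I1 P ≤ (ENNReal.ofReal (Real.pi / 2) * (A * (B * ∫⁻ z, ENNReal.ofReal (g1 P z) ∂nu d))) / (M * M) := by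
        rw [ENNReal.le_div_iff_mul_le (Or.inl (mul_ne_zero hM0 hM0)) (Or.inl (by finiteness))]
        calc _ = M * (M * I1 P) := by ring
          _ ≤ _ := h
    _ = ENNReal.ofReal (Real.pi / 2) * (A * B) / (M * M) * ∫⁻ z, ENNReal.ofReal (g1 P z) ∂nu d := by
        simp only [div_eq_mul_inv]; ring
    _ ≤ _ := by
        gcongr
        calc _ = ENNReal.ofReal (ENNReal.ofReal (Real.pi / 2) * (A * B) / (M * M)).toReal := (ENNReal.ofReal_toReal hne).symm
          _ ≤ _ := ENNReal.ofReal_le_ofReal (by linarith)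

end SD

end

section

open MeasureTheory Finset
open scoped ENNReal

namespace SD

/-- real `L1` norm -/
noncomputable def J {d : ℕ} (P : MvPolynomial (Fin (d + 1)) ℝ) : ℝ := ∫ y, |MvPolynomial.eval y P| ∂nu d

/-- total first order `L1` norm -/
noncomputable def S {d : ℕ} (P : MvPolynomial (Fin (d + 1)) ℝ) : ℝ := ∑ a, ∑ b, J (Dop a b P)

lemma J_nonneg {d : ℕ} (P : MvPolynomial (Fin (d + 1)) ℝ) : 0 ≤ J P := integral_nonneg fun _ => abs_nonneg _

lemma S_nonneg {d : ℕ} (P : MvPolynomial (Fin (d + 1)) ℝ) : 0 ≤ S P :=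
  Finset.sum_nonneg fun _ _ => Finset.sum_nonneg fun _ _ => J_nonneg _

lemma I1_eq {d : ℕ} (P : MvPolynomial (Fin (d + 1)) ℝ) : I1 P = ENNReal.ofReal (J P) := by
  rw [I1, J, ofReal_integral_eq_lintegral_ofReal (integrable_eval P).abs (Filter.Eventually.of_forall fun _ => abs_nonneg _)]

lemma integrable_g1 {d : ℕ} (P : MvPolynomial (Fin (d + 1)) ℝ) : Integrable (g1 P) (nu d) := by
  unfold g1
  exact integrable_finsetSum _ fun a _ => integrable_finsetSum _ fun b _ => (integrable_eval _).abs

lemma integral_g1 {d : ℕ} (P : MvPolynomial (Fin (d + 1)) ℝ) : ∫ y, g1 P y ∂nu d = S P := by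
  unfold g1 S J
  rw [integral_finsetSum _ fun a _ => integrable_finsetSum _ fun b _ => (integrable_eval _).abs]
  refine Finset.sum_congr rfl fun a _ => ?_
  rw [integral_finsetSum _ fun b _ => (integrable_eval _).abs]

lemma g1_nonneg {d : ℕ} (P : MvPolynomial (Fin (d + 1)) ℝ) (y : Fin (d + 1) → ℝ) : 0 ≤ g1 P y :=
  Finset.sum_nonneg fun _ _ => Finset.sum_nonneg fun _ _ => abs_nonneg _

lemma bernsteinR {d n : ℕ} (hn : 1 ≤ n) (a b : Fin (d + 1))
    (P : MvPolynomial (Fin (d + 1)) ℝ) (hP : P.totalDegree ≤ n) : J (Dop a b P) ≤ 2 * n * J P := by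
  have h := bernstein hn a b P hP
  rw [I1_eq, I1_eq, ← ENNReal.ofReal_mul (by positivity)] at h
  exact (ENNReal.ofReal_le_ofReal_iff (mul_nonneg (by positivity) (J_nonneg P))).1 h

lemma poincareR {d : ℕ} (hd : 1 ≤ d) : ∃ C : ℝ, 0 < C ∧ ∀ P : MvPolynomial (Fin (d + 1)) ℝ,
    ∫ z, MvPolynomial.eval z P ∂nu d = 0 → J P ≤ C * S P := by
  obtain ⟨C, hC, h⟩ := poincare hd
  refine ⟨C, hC, fun P hP => ?_⟩
  have h1 := h P hP
  rw [I1_eq, ← ofReal_integral_eq_lintegral_ofReal (integrable_g1 P) (Filter.Eventually.of_forall fun _ => g1_nonneg _ _),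
    integral_g1, ← ENNReal.ofReal_mul hC.le] at h1
  exact (ENNReal.ofReal_le_ofReal_iff (mul_nonneg hC.le (S_nonneg P))).1 h1

lemma MZR (d : ℕ) : ∃ C : ℝ, 0 < C ∧ ∀ m n : ℕ, 1 ≤ n → n ≤ m → ∀ u : Fin (d + 1) × (Fin (d + 1) → ℤ) → Fin (d + 1) → ℝ,
    (∀ c ∈ Lab d m, u c ∈ Kc m c) → ∀ Q : MvPolynomial (Fin (d + 1)) ℝ, Q.totalDegree ≤ n →
    ∑ c ∈ Lab d m, |H Q (u c)| ≤ C * m ^ d * J Q := by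
  obtain ⟨C, hC, h⟩ := MZ d
  refine ⟨C, hC, fun m n hn hnm u hu Q hQ => ?_⟩
  have h1 := h m n hn hnm u hu Q hQ
  rw [I1_eq, ← ENNReal.ofReal_mul (by positivity), ← ENNReal.ofReal_sum_of_nonneg (fun _ _ => abs_nonneg _)] at h1
  exact (ENNReal.ofReal_le_ofReal_iff (mul_nonneg (by positivity) (J_nonneg Q))).1 h1

lemma MZ1 {d : ℕ} {C : ℝ} (_hC : 0 < C) {m n : ℕ} (_hn : 1 ≤ n) (u : Fin (d + 1) × (Fin (d + 1) → ℤ) → Fin (d + 1) → ℝ)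
    (h : ∀ Q : MvPolynomial (Fin (d + 1)) ℝ, Q.totalDegree ≤ n →
    ∑ c ∈ Lab d m, |H Q (u c)| ≤ C * m ^ d * J Q) (P : MvPolynomial (Fin (d + 1)) ℝ) (hP : P.totalDegree ≤ n) :
    ∑ c ∈ Lab d m, G1 P (u c) ≤ C * m ^ d * S P := by
  unfold G1 S
  rw [Finset.sum_comm, Finset.mul_sum]
  refine Finset.sum_le_sum fun a _ => ?_
  rw [Finset.sum_comm, Finset.mul_sum]
  exact Finset.sum_le_sum fun b _ => h _ (Dop_degree a b P hP)

lemma MZ2 {d : ℕ} {C : ℝ} (hC : 0 < C) {m n : ℕ} (hn : 1 ≤ n) (u : Fin (d + 1) × (Fin (d + 1) → ℤ) → Fin (d + 1) → ℝ)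
    (h : ∀ Q : MvPolynomial (Fin (d + 1)) ℝ, Q.totalDegree ≤ n →
    ∑ c ∈ Lab d m, |H Q (u c)| ≤ C * m ^ d * J Q) (P : MvPolynomial (Fin (d + 1)) ℝ) (hP : P.totalDegree ≤ n) :
    ∑ c ∈ Lab d m, G2 P (u c) ≤ C * m ^ d * ((d + 1) ^ 2 * (2 * n) * S P) := by
  have h1 : ∀ a b, S (Dop a b P) ≤ (d + 1) ^ 2 * (2 * n) * J (Dop a b P) := by
    intro a b
    calc S (Dop a b P) ≤ ∑ _a' : Fin (d+1), ∑ _b' : Fin (d+1), 2 * n * J (Dop a b P) := 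
          Finset.sum_le_sum fun a' _ => Finset.sum_le_sum fun b' _ => bernsteinR hn a' b' _ (Dop_degree a b P hP)
      _ = _ := by simp; ring
  have h2 : ∑ a, ∑ b, S (Dop a b P) ≤ (d + 1) ^ 2 * (2 * n) * S P := by
    unfold S
    simp only [Finset.mul_sum]
    exact Finset.sum_le_sum fun a _ => Finset.sum_le_sum fun b _ => by simpa only [S, Finset.mul_sum] using h1 a b
  calc ∑ c ∈ Lab d m, G2 P (u c) = ∑ a, ∑ b, ∑ c ∈ Lab d m, G1 (Dop a b P) (u c) := by
        unfold G2
        rw [Finset.sum_comm]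
        exact Finset.sum_congr rfl fun a _ => Finset.sum_comm
    _ ≤ ∑ a, ∑ b, C * m ^ d * S (Dop a b P) := 
        Finset.sum_le_sum fun a _ => Finset.sum_le_sum fun b _ => MZ1 hC hn u h _ (Dop_degree a b P hP)
    _ = C * m ^ d * ∑ a, ∑ b, S (Dop a b P) := by simp only [Finset.mul_sum]
    _ ≤ _ := by gcongr

end SD

end

section

open MeasureTheory Finset
open scoped ENNReal

namespace SD

/-- cones over the cells -/
def Cell {d : ℕ} (m : ℕ) (c : Fin (d + 1) × (Fin (d + 1) → ℤ)) : Set (Fin (d + 1) → ℝ) :=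
  {z | 0 < (c.2 c.1 / m : ℝ) * z c.1 ∧ ∀ j, j ≠ c.1 →
    z j ∈ Set.Icc ((c.2 c.1 / m : ℝ) * z c.1 * (c.2 j / m)) ((c.2 c.1 / m : ℝ) * z c.1 * ((c.2 j + 1) / m))}

/-- inner cells -/
def Ic {d : ℕ} (m : ℕ) (c : Fin (d + 1) × (Fin (d + 1) → ℤ)) : Set (Fin (d + 1) → ℝ) :=
  {u | u c.1 = c.2 c.1 / m ∧ ∀ j, j ≠ c.1 → u j ∈ Set.Icc ((c.2 j : ℝ) / m) (((c.2 j : ℝ) + 1) / m)}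

lemma measurableSet_Cell {d : ℕ} (m : ℕ) (c : Fin (d + 1) × (Fin (d + 1) → ℤ)) : MeasurableSet (Cell m c) := by
  have : Cell m c = {z | 0 < (c.2 c.1 / m : ℝ) * z c.1} ∩ ⋂ j, {z | j ≠ c.1 →
    z j ∈ Set.Icc ((c.2 c.1 / m : ℝ) * z c.1 * (c.2 j / m)) ((c.2 c.1 / m : ℝ) * z c.1 * ((c.2 j + 1) / m))} := by
    ext x; simp [Cell]
  rw [this]
  refine MeasurableSet.inter ?_ (MeasurableSet.iInter fun j => ?_)
  · exact (isOpen_lt continuous_const (by fun_prop)).measurableSet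
  · by_cases hj : j = c.1
    · simp [hj]
    · simp only [ne_eq, hj, not_false_eq_true, forall_const, Set.mem_Icc]
      have h1 : IsClosed {z : Fin (d + 1) → ℝ | (c.2 c.1 / m : ℝ) * z c.1 * (c.2 j / m) ≤ z j} := isClosed_le (by fun_prop) (by fun_prop)
      have h2 : IsClosed {z : Fin (d + 1) → ℝ | z j ≤ (c.2 c.1 / m : ℝ) * z c.1 * ((c.2 j + 1) / m)} := isClosed_le (by fun_prop) (by fun_prop)
      exact (h1.inter h2).measurableSet

lemma Cell_smul {d m : ℕ} {c : Fin (d + 1) × (Fin (d + 1) → ℤ)} {z : Fin (d + 1) → ℝ} {s : ℝ} (hs : 0 < s) (h : z ∈ Cell m c) :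
    (fun j => s * z j) ∈ Cell m c := by
  obtain ⟨h1, h2⟩ := h
  refine ⟨?_, fun j hj => ?_⟩
  · have := mul_pos hs h1
    simp only
    linarith
  · obtain ⟨h3, h4⟩ := h2 j hj
    have h5 := mul_le_mul_of_nonneg_left h3 hs.le
    have h6 := mul_le_mul_of_nonneg_left h4 hs.le
    constructor <;> simp only
    · linarith
    · linarith

lemma Cell_proj {d m : ℕ} (hm : 1 ≤ m) {c : Fin (d + 1) × (Fin (d + 1) → ℤ)} (hc : c ∈ Lab d m) {z : Fin (d + 1) → ℝ} (h : z ∈ Cell m c) :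
    ∃ v ∈ Ic m c, nz v = nz z := by
  obtain ⟨h1, h2⟩ := h
  have hs := Lab_sign hm hc
  set σ : ℝ := c.2 c.1 / m with hσ
  have hσσ : σ * σ = 1 := by rcases hs with h | h <;> rw [h] <;> norm_num
  set τ := σ * z c.1 with hτ
  refine ⟨fun j => τ⁻¹ * z j, ⟨?_, fun j hj => ?_⟩, nz_smul z (inv_pos.2 h1)⟩
  · simp only
    rw [← hσ, inv_mul_eq_iff_eq_mul₀ h1.ne', hτ]
    linear_combination (-z c.1) * hσσ
  · obtain ⟨h3, h4⟩ := h2 j hj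
    refine ⟨?_, ?_⟩
    · rw [le_inv_mul_iff₀ h1]; exact h3
    · rw [inv_mul_le_iff₀ h1]; exact h4

lemma Cell_cover {d m : ℕ} (hm : 1 ≤ m) (z : Fin (d + 1) → ℝ) (hz : q z ≠ 0) : ∃ c ∈ Lab d m, z ∈ Cell m c := by
  have hm0 : (0:ℝ) < m := by exact_mod_cast hm
  obtain ⟨i, -, hi⟩ := Finset.exists_max_image univ (fun j => |z j|) ⟨0, Finset.mem_univ _⟩
  have hzi : z i ≠ 0 := by
    intro h
    apply hz
    refine Finset.sum_eq_zero fun j _ => ?_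
    have := hi j (Finset.mem_univ j)
    simp only [h, abs_zero] at this
    have : z j = 0 := abs_eq_zero.1 (le_antisymm this (abs_nonneg _))
    simp [this]
  have hpos : 0 < |z i| := abs_pos.2 hzi
  obtain ⟨σ, hσ, hσz⟩ : ∃ σ : ℤ, |σ| = 1 ∧ (σ:ℝ) * z i = |z i| := by
    rcases lt_or_gt_of_ne hzi with h | h
    · exact ⟨-1, by norm_num, by rw [abs_of_neg h]; push_cast; ring⟩
    · exact ⟨1, by norm_num, by rw [abs_of_pos h]; push_cast; ring⟩
  have hm1 : ((m:ℤ) : ℝ) = m := by norm_cast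
  have hki : ((Function.update (fun j => ⌊m * (z j / |z i|)⌋) i (σ * m) : Fin (d+1) → ℤ) i : ℝ) / m = σ := by
    rw [Function.update_self]; push_cast; field_simp
  refine ⟨(i, Function.update (fun j => ⌊m * (z j / |z i|)⌋) i (σ * m)), Lab_mem.2 ⟨fun j => ?_, ?_⟩, ?_, fun j hj => ?_⟩
  · simp only
    by_cases hj : j = i
    · subst hj
      rw [Function.update_self]
      have h1 : |σ * m| = m := by rw [abs_mul, hσ]; simp
      exact abs_le.1 h1.le
    · rw [Function.update_of_ne hj]
      have hb := abs_le.1 (hi j (Finset.mem_univ j))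
      have h1 : z j / |z i| ≤ 1 := by rw [div_le_one hpos]; exact hb.2
      have h2 : -1 ≤ z j / |z i| := by rw [le_div_iff₀ hpos]; linarith [hb.1]
      constructor
      · rw [Int.le_floor]; push_cast; nlinarith
      · have : (⌊m * (z j / |z i|)⌋ : ℝ) ≤ m := (Int.floor_le _).trans (by nlinarith)
        exact_mod_cast this
  · simp only [Function.update_self]
    rw [abs_mul, hσ]; simp
  · simp only [hki]
    rw [hσz]; exact hpos
  · simp only [hki]
    rw [hσz, Function.update_of_ne hj]
    have e : z j = |z i| * (z j / |z i|) := by field_simp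
    have h1 := Int.floor_le (m * (z j / |z i|))
    have h2 := (Int.lt_floor_add_one (m * (z j / |z i|))).le
    constructor
    · conv_rhs => rw [e]
      refine mul_le_mul_of_nonneg_left ?_ hpos.le
      rw [div_le_iff₀ hm0]; linarith
    · conv_lhs => rw [e]
      refine mul_le_mul_of_nonneg_left ?_ hpos.le
      rw [le_div_iff₀ hm0]; linarith

lemma vol_slab {d : ℕ} (i : Fin (d + 1)) (ℓ : ℝ) (b : Fin (d + 1) → ℝ → ℝ) (hb : ∀ j, Continuous (b j)) :
    volume {z : Fin (d + 1) → ℝ | z i ∈ Set.Icc (-1:ℝ) 1 ∧ ∀ j, j ≠ i → z j ∈ Set.Icc (b j (z i)) (b j (z i) + ℓ)} ≤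
      2 * ENNReal.ofReal ℓ ^ d := by
  set W := {z : Fin (d + 1) → ℝ | z i ∈ Set.Icc (-1:ℝ) 1 ∧ ∀ j, j ≠ i → z j ∈ Set.Icc (b j (z i)) (b j (z i) + ℓ)} with hW
  have hWm : MeasurableSet W := by
    have : W = {z | z i ∈ Set.Icc (-1:ℝ) 1} ∩ ⋂ j, {z | j ≠ i → z j ∈ Set.Icc (b j (z i)) (b j (z i) + ℓ)} := by
      ext x; simp [hW]
    rw [this]
    refine IsClosed.measurableSet (IsClosed.inter ?_ (isClosed_iInter fun j => ?_))
    · exact isClosed_Icc.preimage (by fun_prop)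
    · by_cases hj : j = i
      · simp [hj]
      · simp only [ne_eq, hj, not_false_eq_true, forall_const, Set.mem_Icc]
        have hbj := hb j
        have h1 : IsClosed {x : Fin (d + 1) → ℝ | b j (x i) ≤ x j} := isClosed_le (by fun_prop) (by fun_prop)
        have h2 : IsClosed {x : Fin (d + 1) → ℝ | x j ≤ b j (x i) + ℓ} := isClosed_le (by fun_prop) (by fun_prop)
        exact h1.inter h2
  have hm : Measurable (W.indicator (1 : (Fin (d+1) → ℝ) → ℝ≥0∞)) := measurable_one.indicator hWm
  have hcard : (univ.erase i : Finset (Fin (d+1))).card = d := by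
    rw [Finset.card_erase_of_mem (Finset.mem_univ i)]; simp
  rw [← lintegral_indicator_one hWm,
    show (volume : Measure (Fin (d+1) → ℝ)) = Measure.pi (fun _ => volume) from rfl,
    lintegral_eq_lmarginal_univ (μ := fun _ => volume) 0,
    lmarginal_erase _ hm (Finset.mem_univ i)]
  calc _ ≤ ∫⁻ t : ℝ, (Set.Icc (-1:ℝ) 1).indicator (fun _ => ENNReal.ofReal ℓ ^ d) t := by
        refine lintegral_mono fun t => ?_
        by_cases ht : t ∈ Set.Icc (-1:ℝ) 1
        · rw [Set.indicator_of_mem ht]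
          simp only [lmarginal]
          calc _ ≤ ∫⁻ y, (Set.univ.pi fun j : (univ.erase i : Finset (Fin (d+1))) => Set.Icc (b j t) (b j t + ℓ)).indicator 1 y
                  ∂(Measure.pi fun _ : (univ.erase i : Finset (Fin (d+1))) => (volume : Measure ℝ)) := by
                refine lintegral_mono fun y => ?_
                by_cases hy : Function.updateFinset (Function.update (0 : Fin (d+1) → ℝ) i t) (univ.erase i) y ∈ W
                · rw [Set.indicator_of_mem hy, Set.indicator_of_mem]
                  · simp
                  · intro j _
                    have hj : (j : Fin (d+1)) ≠ i := Finset.ne_of_mem_erase j.2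
                    have := hy.2 j hj
                    simpa [Function.updateFinset, hj] using this
                · rw [Set.indicator_of_notMem hy]; exact zero_le
            _ = _ := by
                rw [lintegral_indicator_one (MeasurableSet.univ_pi fun _ => measurableSet_Icc), Measure.pi_pi]
                simp
        · rw [Set.indicator_of_notMem ht]
          simp only [lmarginal]
          refine le_of_eq ?_
          rw [lintegral_eq_zero_iff']
          · refine Filter.Eventually.of_forall fun y => ?_
            refine Set.indicator_of_notMem (fun hy => ht ?_) _
            have := hy.1
            simpa [Function.updateFinset] using this
          · exact (hm.comp measurable_updateFinset).aemeasurable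
    _ = _ := by
        rw [lintegral_indicator measurableSet_Icc, setLIntegral_const, Real.volume_Icc, mul_comm]
        norm_num

lemma Cell_meas (d : ℕ) : ∃ C : ℝ, 0 < C ∧ ∀ m : ℕ, 1 ≤ m → ∀ c ∈ Lab d m, (nu d).real (Cell m c) * m ^ d ≤ C := by
  set v := volume {z : Fin (d + 1) → ℝ | q z ≤ 1} with hv
  have hvt : v ≠ ⊤ := (vol_q_lt_top d 1).ne
  have hv0 : v ≠ 0 := (vol_q_pos d one_pos).ne'
  have hvr : 0 < v.toReal := ENNReal.toReal_pos hv0 hvt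
  refine ⟨2 / v.toReal, by positivity, fun m hm c hc => ?_⟩
  have hm0 : (0:ℝ) < m := by exact_mod_cast hm
  have hs := Lab_sign hm hc
  have h1 := polar_ball ((Cell m c).indicator 1) (measurable_one.indicator (measurableSet_Cell m c)) 1
  rw [lintegral_indicator_one (measurableSet_Cell m c)] at h1
  have hball : MeasurableSet {z : Fin (d + 1) → ℝ | q z ≤ 1} := measurable_q measurableSet_Iic
  have h2 : ∫⁻ z in {z : Fin (d + 1) → ℝ | q z ≤ 1}, (Cell m c).indicator 1 (nz z) ≤ 2 * ENNReal.ofReal (1 / m : ℝ) ^ d := by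
    refine le_trans ?_ (vol_slab c.1 (1 / m : ℝ) (fun j t => (c.2 c.1 / m : ℝ) * t * (c.2 j / m)) (fun j => by fun_prop))
    rw [← lintegral_indicator hball]
    refine (lintegral_mono fun z => ?_).trans (lintegral_indicator_one_le _)
    by_cases hz : q z ≤ 1
    swap
    · rw [Set.indicator_of_notMem (show z ∉ {z | q z ≤ 1} from hz)]; exact zero_le
    rw [Set.indicator_of_mem (show z ∈ {z | q z ≤ 1} from hz)]
    by_cases hzc : nz z ∈ Cell m c
    swap
    · rw [Set.indicator_of_notMem hzc]; exact zero_le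
    have hq : q z ≠ 0 := by
      intro h
      have := hzc.1
      simp [nz, h] at this
    have hzc' : z ∈ Cell m c := by
      have := Cell_smul (sqrt_q_pos hq) hzc
      convert this using 1
      funext j
      have := sqrt_q_pos hq
      simp only [nz]; field_simp
    rw [Set.indicator_of_mem hzc, Set.indicator_of_mem]
    · simp
    have hzi : |z c.1| ≤ 1 := by
      refine (Real.abs_le_sqrt (y := 1) ?_).trans (by simp)
      refine le_trans ?_ hz
      exact Finset.single_le_sum (f := fun i => z i ^ 2) (fun i _ => sq_nonneg _) (Finset.mem_univ c.1)
    have hτ : (c.2 c.1 / m : ℝ) * z c.1 ≤ 1 := by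
      have := abs_le.1 hzi
      rcases hs with h | h <;> rw [h] <;> linarith
    refine ⟨abs_le.1 hzi, fun j hj => ?_⟩
    obtain ⟨h3, h4⟩ := hzc'.2 j hj
    refine ⟨h3, h4.trans ?_⟩
    have : (c.2 c.1 / m : ℝ) * z c.1 * ((c.2 j + 1) / m) = (c.2 c.1 / m : ℝ) * z c.1 * (c.2 j / m) + (c.2 c.1 / m : ℝ) * z c.1 * (1 / m) := by ring
    rw [this]
    have : (c.2 c.1 / m : ℝ) * z c.1 * (1 / m) ≤ 1 * (1 / m) := by gcongr
    linarith
  rw [h1] at h2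
  have h3 := ENNReal.toReal_mono (by finiteness) h2
  rw [ENNReal.toReal_mul, ENNReal.toReal_mul, ENNReal.toReal_pow, ENNReal.toReal_ofReal (by positivity)] at h3
  rw [le_div_iff₀ hvr, Measure.real]
  have h4 := mul_le_mul_of_nonneg_right h3 (by positivity : (0:ℝ) ≤ m ^ d)
  rw [mul_assoc (ENNReal.toReal 2), ← mul_pow, one_div, inv_mul_cancel₀ hm0.ne', one_pow] at h4
  simp only [ENNReal.toReal_ofNat, mul_one] at h4
  linarith

end SD

end

section

open MeasureTheory Finset
open scoped ENNReal

namespace SD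

lemma partition {d m : ℕ} (hm : 1 ≤ m) : ∃ ρ : Fin (d + 1) × (Fin (d + 1) → ℤ) → (Fin (d + 1) → ℝ) → ℝ,
    (∀ c, Measurable (ρ c)) ∧ (∀ c ∈ Lab d m, ∀ z, 0 ≤ ρ c z ∧ ρ c z ≤ (Cell m c).indicator 1 z) ∧
    ∀ z, q z ≠ 0 → ∑ c ∈ Lab d m, ρ c z = 1 := by
  have hi0 : ∀ c (z : Fin (d + 1) → ℝ), 0 ≤ (Cell m c).indicator (1 : (Fin (d + 1) → ℝ) → ℝ) z := fun c z =>
    Set.indicator_nonneg (fun _ _ => zero_le_one) z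
  have h1 : ∀ c ∈ Lab d m, ∀ z, z ∈ Cell m c → 1 ≤ ∑ c ∈ Lab d m, (Cell m c).indicator (1 : (Fin (d + 1) → ℝ) → ℝ) z := by
    intro c hc z hz
    calc (1:ℝ) = (Cell m c).indicator (1 : (Fin (d + 1) → ℝ) → ℝ) z := by rw [Set.indicator_of_mem hz]; rfl
      _ ≤ _ := Finset.single_le_sum (f := fun c => (Cell m c).indicator (1 : (Fin (d + 1) → ℝ) → ℝ) z) (fun c _ => hi0 c z) hc
  refine ⟨fun c z => (Cell m c).indicator 1 z / ∑ c ∈ Lab d m, (Cell m c).indicator (1 : (Fin (d + 1) → ℝ) → ℝ) z, fun c => ?_, fun c hc z => ⟨?_, ?_⟩, fun z hz => ?_⟩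
  · exact (measurable_one.indicator (measurableSet_Cell m c)).div
      (Finset.measurable_fun_sum _ fun c _ => measurable_one.indicator (measurableSet_Cell m c))
  · exact div_nonneg (hi0 c z) (Finset.sum_nonneg fun c _ => hi0 c z)
  · by_cases h : z ∈ Cell m c
    · exact div_le_self (hi0 c z) (h1 c hc z h)
    · simp [Set.indicator_of_notMem h]
  · obtain ⟨c, hc, hcz⟩ := Cell_cover hm z hz
    have := h1 c hc z hcz
    simp only
    rw [← Finset.sum_div, div_self (by linarith)]

lemma Ic_sub_Kc {d m : ℕ} (hm : 1 ≤ m) (c : Fin (d + 1) × (Fin (d + 1) → ℤ)) : Ic m c ⊆ Kc m c := by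
  have hm0 : (0:ℝ) < m := by exact_mod_cast hm
  rintro u ⟨h1, h2⟩
  refine ⟨h1, fun j hj => ?_⟩
  obtain ⟨h3, h4⟩ := h2 j hj
  refine ⟨le_trans ?_ h3, h4.trans ?_⟩ <;> gcongr <;> linarith

lemma Kc_sign {d m : ℕ} (hm : 1 ≤ m) {c : Fin (d + 1) × (Fin (d + 1) → ℤ)} (hc : c ∈ Lab d m) {u : Fin (d + 1) → ℝ}
    (hu : u ∈ Kc m c) : |u c.1| = 1 := by
  rw [hu.1]; rcases Lab_sign hm hc with h | h <;> rw [h] <;> norm_num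

lemma Kc_q {d m : ℕ} (hm : 1 ≤ m) {c : Fin (d + 1) × (Fin (d + 1) → ℤ)} (hc : c ∈ Lab d m) {u : Fin (d + 1) → ℝ}
    (hu : u ∈ Kc m c) : 1 ≤ q u := by
  have h : u c.1 ^ 2 ≤ q u := Finset.single_le_sum (f := fun i => u i ^ 2) (fun i _ => sq_nonneg _) (Finset.mem_univ c.1)
  rw [← sq_abs, Kc_sign hm hc hu] at h
  linarith

lemma Kc_bound {d m : ℕ} (hm : 1 ≤ m) {c : Fin (d + 1) × (Fin (d + 1) → ℤ)} (hc : c ∈ Lab d m) {u : Fin (d + 1) → ℝ}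
    (hu : u ∈ Kc m c) (a : Fin (d + 1)) : |u a| ≤ 3 := by
  have hm1 : (1:ℝ) ≤ m := by exact_mod_cast hm
  have hm0 : (0:ℝ) < m := by linarith
  by_cases ha : a = c.1
  · rw [ha, Kc_sign hm hc hu]; norm_num
  · obtain ⟨h1, h2⟩ := hu.2 a ha
    have hk := (Lab_mem.1 hc).1 a
    have hk1 : -(m:ℝ) ≤ c.2 a := by exact_mod_cast hk.1
    have hk2 : (c.2 a : ℝ) ≤ m := by exact_mod_cast hk.2
    rw [div_le_iff₀ hm0] at h1
    rw [le_div_iff₀ hm0] at h2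
    rw [abs_le]
    constructor <;> nlinarith

lemma Kc_convex {d : ℕ} (m : ℕ) (c : Fin (d + 1) × (Fin (d + 1) → ℤ)) {z v : Fin (d + 1) → ℝ} (hz : z ∈ Kc m c) (hv : v ∈ Kc m c)
    {t : ℝ} (ht : t ∈ Set.Icc (0:ℝ) 1) : ln z (fun a => v a - z a) t ∈ Kc m c := by
  obtain ⟨t0, t1⟩ := ht
  refine ⟨?_, fun j hj => ?_⟩
  · simp only [ln]; rw [hz.1, hv.1]; ring
  · obtain ⟨h1, h2⟩ := hz.2 j hj
    obtain ⟨h3, h4⟩ := hv.2 j hj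
    simp only [ln]
    constructor <;> nlinarith

lemma local_ineq {d m : ℕ} (hm : 1 ≤ m) (P : MvPolynomial (Fin (d + 1)) ℝ) {c : Fin (d + 1) × (Fin (d + 1) → ℤ)} (hc : c ∈ Lab d m)
    {z v : Fin (d + 1) → ℝ} (hz : z ∈ Kc m c) (hfirst : ∀ v ∈ Kc m c, 0 ≤ ∑ a, (v a - z a) * Bv P z a)
    {M : ℝ} (hM : ∀ u ∈ Kc m c, G1 P u + G2 P u ≤ M) (hv : v ∈ Ic m c) :
    H P z ≤ H P v - 1 / (24 * (d + 1)) * (1 / m) * G1 P v + (9 * (2 * d + 3) + 3 * (d + 1) ^ 2) * (1 / m) ^ 2 * M := by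
  have hm1 : (1:ℝ) ≤ m := by exact_mod_cast hm
  have hm0 : (0:ℝ) < m := by linarith
  set η : ℝ := 1 / m with hη
  have hη0 : 0 < η := by positivity
  have hηk : ∀ k : ℝ, k / m = k * η := fun k => by rw [hη]; ring
  have hvK := Ic_sub_Kc hm c hv
  set w : Fin (d + 1) → ℝ := fun a => v a - z a with hw
  have hseg : ∀ t ∈ Set.Icc (0:ℝ) 1, ln z w t ∈ Kc m c := fun t ht => Kc_convex m c hz hvK ht
  have hln1 : ln z w 1 = v := by funext a; simp [ln, hw]
  have hwb : ∀ a, |w a| ≤ 3 * η := by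
    intro a
    by_cases ha : a = c.1
    · simp only [hw, ha]; rw [hz.1, hv.1, sub_self, abs_zero]; positivity
    · obtain ⟨h1, h2⟩ := hz.2 a ha
      obtain ⟨h3, h4⟩ := hv.2 a ha
      rw [hηk] at h1 h2 h3 h4
      simp only [hw]
      rw [abs_le]; constructor <;> linarith
  have hT := taylor P z w (3 * η) M hwb (fun t ht => Kc_q hm hc (hseg t ht)) (fun t ht => hM _ (hseg t ht))
  rw [hln1] at hT
  have hM0 : 0 ≤ M := (add_nonneg (G1_nonneg P z) (G2_nonneg P z)).trans (hM z hz)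
  -- first order gain
  have hgain : η * ∑ a ∈ univ.erase c.1, |Bv P z a| ≤ ∑ a, w a * Bv P z a := by
    have h1 := hfirst (fun a => if a = c.1 then v a else v a - η * SignType.sign (Bv P z a)) (by
      refine ⟨by simp [hv.1], fun j hj => ?_⟩
      obtain ⟨h3, h4⟩ := hv.2 j hj
      simp only [if_neg hj]
      rw [hηk] at h3 h4
      rw [hηk, hηk]
      have hs : |((SignType.sign (Bv P z j) : SignType) : ℝ)| ≤ 1 := by
        rcases SignType.sign (Bv P z j) <;> simp
      have hs' := abs_le.1 hs
      constructor <;> nlinarith)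
    have e : ∑ a, ((if a = c.1 then v a else v a - η * SignType.sign (Bv P z a)) - z a) * Bv P z a =
        ∑ a, w a * Bv P z a - η * ∑ a ∈ univ.erase c.1, |Bv P z a| := by
      rw [← Finset.add_sum_erase univ _ (Finset.mem_univ c.1), ← Finset.add_sum_erase univ (fun a => w a * Bv P z a) (Finset.mem_univ c.1)]
      rw [if_pos rfl, Finset.mul_sum, add_sub_assoc, ← Finset.sum_sub_distrib]
      congr 1
      refine Finset.sum_congr rfl fun a ha => ?_
      rw [if_neg (Finset.ne_of_mem_erase ha)]
      have := sign_mul_self (Bv P z a)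
      simp only [hw]
      linear_combination (-η) * this
    rw [e] at h1
    linarith
  have hfg := face_grad P z c.1 (Kc_sign hm hc hz) (fun a => Kc_bound hm hc hz a)
  have hd0 : (0:ℝ) < 24 * (d + 1) := by positivity
  have hfg' : 1 / (24 * (d + 1)) * G1 P z ≤ ∑ a ∈ univ.erase c.1, |Bv P z a| := by
    rw [one_div, inv_mul_le_iff₀ hd0]; exact hfg
  -- Lipschitz bound
  have hL : G1 P v ≤ G1 P z + (d + 1) ^ 2 * (3 * η * M) := by
    have h1 : ∀ a b, |H (Dop a b P) v| ≤ |H (Dop a b P) z| + 3 * η * M := by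
      intro a b
      have h2 := lip (Dop a b P) z w (3 * η) M hwb (fun t ht => Kc_q hm hc (hseg t ht)) (fun t ht => by
        have h3 := hM _ (hseg t ht)
        have h4 : G1 (Dop a b P) (ln z w t) ≤ G2 P (ln z w t) := by
          refine le_trans ?_ (Finset.single_le_sum (f := fun a => ∑ b, G1 (Dop a b P) (ln z w t)) (fun a _ => Finset.sum_nonneg fun b _ => G1_nonneg _ _) (Finset.mem_univ a))
          exact Finset.single_le_sum (f := fun b => G1 (Dop a b P) (ln z w t)) (fun b _ => G1_nonneg _ _) (Finset.mem_univ b)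
        linarith [G1_nonneg P (ln z w t)])
      rw [hln1] at h2
      have := abs_sub_abs_le_abs_sub (H (Dop a b P) v) (H (Dop a b P) z)
      linarith
    calc G1 P v ≤ ∑ a, ∑ b, (|H (Dop a b P) z| + 3 * η * M) := Finset.sum_le_sum fun a _ => Finset.sum_le_sum fun b _ => h1 a b
      _ = _ := by
        simp only [Finset.sum_add_distrib, Finset.sum_const, Finset.card_univ, Fintype.card_fin, nsmul_eq_mul, G1]
        push_cast; ring
  have hT' := abs_le.1 hT
  have hc1 : 1 / (24 * ((d:ℝ) + 1)) ≤ 1 := by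
    rw [div_le_one hd0]; nlinarith [(Nat.cast_nonneg d : (0:ℝ) ≤ d)]
  have hc0 : 0 < 1 / (24 * ((d:ℝ) + 1)) := by positivity
  set c1 := 1 / (24 * ((d:ℝ) + 1)) with hc1d
  have s1 : η * (c1 * G1 P z) ≤ η * ∑ a ∈ univ.erase c.1, |Bv P z a| := mul_le_mul_of_nonneg_left hfg' hη0.le
  have s2 : c1 * η * G1 P v ≤ c1 * η * (G1 P z + (d + 1) ^ 2 * (3 * η * M)) := mul_le_mul_of_nonneg_left hL (by positivity)
  have s3 : c1 * ((d + 1) ^ 2 * 3 * η ^ 2 * M) ≤ 1 * ((d + 1) ^ 2 * 3 * η ^ 2 * M) := mul_le_mul_of_nonneg_right hc1 (by positivity)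
  nlinarith [hT'.1, hT'.2]

end SD

end

section

open MeasureTheory Finset
open scoped ENNReal

namespace SD

lemma rounding {α : Type*} [DecidableEq α] (s : Finset α) (x : α → ℝ) (hx : ∀ c ∈ s, 0 ≤ x c) :
    ∃ k : α → ℕ, (∀ c ∈ s, |(k c : ℝ) - x c| ≤ 1) ∧ ∑ c ∈ s, k c = ⌊∑ c ∈ s, x c⌋₊ := by
  induction s using Finset.induction_on with
  | empty => exact ⟨fun _ => 0, by simp, by simp⟩
  | insert a s ha ih =>
    obtain ⟨k, hk, hs⟩ := ih fun c hc => hx c (mem_insert_of_mem hc)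
    have hA : 0 ≤ ∑ c ∈ s, x c := Finset.sum_nonneg fun c hc => hx c (mem_insert_of_mem hc)
    have ha0 : 0 ≤ x a := hx a (mem_insert_self _ _)
    have hle : ⌊∑ c ∈ s, x c⌋₊ ≤ ⌊x a + ∑ c ∈ s, x c⌋₊ := Nat.floor_mono (by linarith)
    refine ⟨Function.update k a (⌊x a + ∑ c ∈ s, x c⌋₊ - ⌊∑ c ∈ s, x c⌋₊), ?_, ?_⟩
    · intro c hc
      rcases Finset.mem_insert.1 hc with rfl | hc2
      · rw [Function.update_self, Nat.cast_sub hle]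
        have h1 := Nat.floor_le hA
        have h2 := Nat.lt_floor_add_one (∑ c ∈ s, x c)
        have h3 := Nat.floor_le (add_nonneg ha0 hA)
        have h4 := Nat.lt_floor_add_one (x c + ∑ c ∈ s, x c)
        rw [abs_le]; constructor <;> linarith
      · rw [Function.update_of_ne (by rintro rfl; exact ha hc2)]
        exact hk c hc2
    · have h5 : ∑ c ∈ s, Function.update k a (⌊x a + ∑ c ∈ s, x c⌋₊ - ⌊∑ c ∈ s, x c⌋₊) c = ∑ c ∈ s, k c :=
        Finset.sum_congr rfl fun c hc => Function.update_of_ne (by rintro rfl; exact ha hc) _ _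
      rw [Finset.sum_insert ha, Finset.sum_insert ha, Function.update_self, h5, hs]
      omega

lemma labelling {α : Type*} [DecidableEq α] (s : Finset α) (p : α → ℝ) (hp : ∀ c ∈ s, 0 ≤ p c) (h1 : ∑ c ∈ s, p c = 1) (N : ℕ) :
    ∃ lab : Fin N → α, (∀ j, lab j ∈ s) ∧
      ∀ c ∈ s, |((univ.filter fun j => lab j = c).card : ℝ) - N * p c| ≤ 1 := by
  obtain ⟨k, hk, hs⟩ := rounding s (fun c => N * p c) fun c hc => mul_nonneg (Nat.cast_nonneg _) (hp c hc)
  rw [← Finset.mul_sum, h1, mul_one, Nat.floor_natCast] at hs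
  have hcard : Fintype.card (Σ c : s, Fin (k c)) = N := by
    rw [Fintype.card_sigma]
    simp only [Fintype.card_fin]
    rw [← hs, ← Finset.sum_coe_sort s k]
  let e : Fin N ≃ (Σ c : s, Fin (k c)) := (Fintype.equivFinOfCardEq hcard).symm
  refine ⟨fun j => (e j).1, fun j => (e j).1.2, fun c hc => ?_⟩
  have : (univ.filter fun j => ((e j).1 : α) = c).card = k c := by
    have h2 : (univ.filter fun j => ((e j).1 : α) = c).card =
        (univ.filter fun y : (Σ c : s, Fin (k c)) => (y.1 : α) = c).card := by
      apply Finset.card_bij (fun j _ => e j)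
      · intro j hj; simpa using hj
      · intro a _ b _ h; exact e.injective h
      · intro b hb; exact ⟨e.symm b, by simpa using hb, by simp⟩
    rw [h2]
    have h3 : (univ.filter fun y : (Σ c : s, Fin (k c)) => (y.1 : α) = c) =
        (univ : Finset (Fin (k c))).map ⟨fun i => (⟨⟨c, hc⟩, i⟩ : Σ c : s, Fin (k c)), by
          intro a b h; simpa using h⟩ := by
      ext ⟨⟨c', hc'⟩, i⟩
      simp only [mem_filter, mem_univ, true_and, mem_map, Function.Embedding.coeFn_mk]
      constructor
      · rintro rfl; exact ⟨i, rfl⟩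
      · rintro ⟨i', h⟩
        have := congrArg (fun y => (y.1 : α)) h
        exact this.symm
    rw [h3, Finset.card_map, Finset.card_univ, Fintype.card_fin]
  rw [this]
  exact hk c hc

lemma compact_box {d : ℕ} (i : Fin (d + 1)) (r : ℝ) (lo hi : Fin (d + 1) → ℝ) :
    IsCompact {u : Fin (d + 1) → ℝ | u i = r ∧ ∀ j, j ≠ i → u j ∈ Set.Icc (lo j) (hi j)} := by
  have : {u : Fin (d + 1) → ℝ | u i = r ∧ ∀ j, j ≠ i → u j ∈ Set.Icc (lo j) (hi j)} =
      Set.pi Set.univ (fun j => if j = i then {r} else Set.Icc (lo j) (hi j)) := by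
    ext u
    simp only [Set.mem_ofPred_eq, Set.mem_pi, Set.mem_univ, true_imp_iff]
    constructor
    · rintro ⟨h1, h2⟩ j
      by_cases h : j = i
      · rw [if_pos h, h]; exact h1
      · rw [if_neg h]; exact h2 j h
    · intro h
      refine ⟨by simpa using h i, fun j hj => by simpa only [if_neg hj] using h j⟩
  rw [this]
  refine isCompact_univ_pi fun j => ?_
  split_ifs
  · exact isCompact_singleton
  · exact isCompact_Icc

lemma Kc_compact {d : ℕ} (m : ℕ) (c : Fin (d + 1) × (Fin (d + 1) → ℤ)) : IsCompact (Kc m c) := compact_box _ _ _ _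

lemma Ic_compact {d : ℕ} (m : ℕ) (c : Fin (d + 1) × (Fin (d + 1) → ℤ)) : IsCompact (Ic m c) := compact_box _ _ _ _

lemma Ic_nonempty {d m : ℕ} (hm : 1 ≤ m) (c : Fin (d + 1) × (Fin (d + 1) → ℤ)) : (Ic m c).Nonempty := by
  have hm0 : (0:ℝ) < m := by exact_mod_cast hm
  refine ⟨fun j => (c.2 j : ℝ) / m, rfl, fun j _ => ⟨le_rfl, ?_⟩⟩
  exact div_le_div_of_nonneg_right (by linarith) hm0.le

lemma deriv_nonneg_of_min {F : ℝ → ℝ} {D : ℝ} (h : HasDerivAt F D 0) (h0 : F 0 = 0) (hF : ∀ t ∈ Set.Icc (0:ℝ) 1, 0 ≤ F t) : 0 ≤ D := by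
  have := h.tendsto_slope_zero_right
  refine ge_of_tendsto this ?_
  have h1 : Set.Ioo (0:ℝ) 1 ∈ nhdsWithin (0:ℝ) (Set.Ioi 0) := Ioo_mem_nhdsGT one_pos
  filter_upwards [h1] with t ht
  rw [zero_add, h0, sub_zero, smul_eq_mul]
  exact mul_nonneg (inv_nonneg.2 ht.1.le) (hF t ⟨ht.1.le, ht.2.le⟩)

lemma H_sum {d : ℕ} {ι : Type*} (T : Finset ι) (s : ι → ℝ) (e : ι → MvPolynomial (Fin (d + 1)) ℝ) (z : Fin (d + 1) → ℝ) :
    H (∑ α ∈ T, MvPolynomial.C (s α) * e α) z = ∑ α ∈ T, s α * H (e α) z := by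
  simp [H, map_sum]

lemma minimize {d m N : ℕ} (hm : 1 ≤ m) (lab : Fin N → Fin (d + 1) × (Fin (d + 1) → ℤ)) (hlab : ∀ j, lab j ∈ Lab d m)
    {ι : Type*} (T : Finset ι) (e : ι → MvPolynomial (Fin (d + 1)) ℝ) :
    ∃ z : Fin N → Fin (d + 1) → ℝ, (∀ j, z j ∈ Kc m (lab j)) ∧
      ∀ j, ∀ v ∈ Kc m (lab j), 0 ≤ ∑ a, (v a - z j a) *
        Bv (∑ α ∈ T, MvPolynomial.C (∑ j, H (e α) (z j)) * e α) (z j) a := by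
  have hcomp : IsCompact (Set.pi Set.univ (fun j => Kc m (lab j))) := isCompact_univ_pi fun j => Kc_compact m (lab j)
  have hne : (Set.pi Set.univ (fun j => Kc m (lab j))).Nonempty :=
    Set.univ_pi_nonempty_iff.2 fun j => (Ic_nonempty hm (lab j)).mono (Ic_sub_Kc hm _)
  have hq : ∀ j, ∀ u ∈ Kc m (lab j), q u ≠ 0 := fun j u hu => by
    have := Kc_q hm (hlab j) hu; linarith
  have hcont : ContinuousOn (fun z : Fin N → Fin (d + 1) → ℝ => ∑ α ∈ T, (∑ j, H (e α) (z j)) ^ 2)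
      (Set.pi Set.univ (fun j => Kc m (lab j))) := by
    intro z hz
    apply ContinuousAt.continuousWithinAt
    refine tendsto_finsetSum _ fun α _ => Filter.Tendsto.pow (tendsto_finsetSum _ fun j _ => ?_) 2
    exact (continuousAt_H (e α) (hq j (z j) (hz j trivial))).comp (f := fun z : Fin N → Fin (d + 1) → ℝ => z j)
      (continuous_apply j).continuousAt
  obtain ⟨z, hz, hmin⟩ := hcomp.exists_isMinOn hne hcont
  have hzj : ∀ j, z j ∈ Kc m (lab j) := fun j => hz j trivial
  refine ⟨z, hzj, fun j v hv => ?_⟩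
  set s : ι → ℝ := fun α => ∑ j, H (e α) (z j) with hs
  set Φ := ∑ α ∈ T, MvPolynomial.C (s α) * e α with hΦ
  set w : Fin (d + 1) → ℝ := fun a => v a - z j a with hw
  let F : ℝ → ℝ := fun t => 2 * (H Φ (ln (z j) w t) - H Φ (z j)) +
    ∑ α ∈ T, (H (e α) (ln (z j) w t) - H (e α) (z j)) ^ 2
  have hl0 : ln (z j) w 0 = z j := ln_zero _ _
  have hd : ∀ P : MvPolynomial (Fin (d + 1)) ℝ, HasDerivAt (fun t => H P (ln (z j) w t)) (∑ a, w a * Bv P (z j) a) 0 := by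
    intro P
    have := hasDerivAt_H P (fun t => ln (z j) w t) w 0 (hasDerivAt_ln (z j) w 0) (by simp only [hl0]; exact hq j _ (hzj j))
    simpa only [hl0] using this
  have hF : HasDerivAt F (2 * (∑ a, w a * Bv Φ (z j) a)) 0 := by
    have h1 := ((hd Φ).sub_const (H Φ (z j))).const_mul 2
    have h2 : HasDerivAt (fun t => ∑ α ∈ T, (H (e α) (ln (z j) w t) - H (e α) (z j)) ^ 2) (∑ α ∈ T, 0) 0 := by
      refine HasDerivAt.fun_sum fun α _ => ?_
      have := ((hd (e α)).sub_const (H (e α) (z j))).fun_pow 2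
      simpa [hl0] using this
    have := h1.add h2
    simp only [Finset.sum_const_zero, add_zero] at this
    exact this
  have h0 : F 0 = 0 := by simp [F, hl0]
  have hnn := deriv_nonneg_of_min hF h0 fun t ht => ?_
  · linarith
  · have hmem : Function.update z j (ln (z j) w t) ∈ Set.pi Set.univ (fun j => Kc m (lab j)) := by
      intro i _
      by_cases hij : i = j
      · subst hij; rw [Function.update_self]; exact Kc_convex m _ (hzj i) hv ht
      · rw [Function.update_of_ne hij]; exact hzj i
    have h1 := hmin hmem
    simp only [Set.mem_ofPred_eq] at h1
    have h2 : ∀ α, ∑ i, H (e α) (Function.update z j (ln (z j) w t) i) = s α + (H (e α) (ln (z j) w t) - H (e α) (z j)) := by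
      intro α
      rw [hs]
      simp only
      rw [← Finset.add_sum_erase univ _ (Finset.mem_univ j), ← Finset.add_sum_erase univ (fun j => H (e α) (z j)) (Finset.mem_univ j),
        Function.update_self, Finset.sum_congr rfl (fun i hi => by rw [Function.update_of_ne (Finset.ne_of_mem_erase hi)])]
      ring
    simp only [h2] at h1
    have h3 : F t = ∑ α ∈ T, (s α + (H (e α) (ln (z j) w t) - H (e α) (z j))) ^ 2 - ∑ α ∈ T, (s α) ^ 2 := by
      simp only [F, hΦ, H_sum]
      rw [← Finset.sum_sub_distrib, Finset.mul_sum, ← Finset.sum_add_distrib, ← Finset.sum_sub_distrib]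
      exact Finset.sum_congr rfl fun α _ => by ring
    rw [h3]
    have h4 : ∑ α ∈ T, (s α) ^ 2 = ∑ α ∈ T, (∑ j, H (e α) (z j)) ^ 2 := rfl
    linarith

end SD

end

section

open MeasureTheory Finset
open scoped ENNReal

namespace SD

lemma energy {d n m N : ℕ} (hm : 1 ≤ m) (hn : 1 ≤ n)
    {CM C3 C5 : ℝ} (hCM : 0 < CM)
    (hMZ : ∀ u : Fin (d + 1) × (Fin (d + 1) → ℤ) → Fin (d + 1) → ℝ, (∀ c ∈ Lab d m, u c ∈ Kc m c) →
      ∀ Q : MvPolynomial (Fin (d + 1)) ℝ, Q.totalDegree ≤ n → ∑ c ∈ Lab d m, |H Q (u c)| ≤ CM * m ^ d * J Q)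
    (hC3 : ∀ c ∈ Lab d m, (nu d).real (Cell m c) * m ^ d ≤ C3)
    (ρ : Fin (d + 1) × (Fin (d + 1) → ℤ) → (Fin (d + 1) → ℝ) → ℝ)
    (hρm : ∀ c, Measurable (ρ c))
    (hρ : ∀ c ∈ Lab d m, ∀ z, 0 ≤ ρ c z ∧ ρ c z ≤ (Cell m c).indicator 1 z)
    (hρ1 : ∀ z, q z ≠ 0 → ∑ c ∈ Lab d m, ρ c z = 1)
    (lab : Fin N → Fin (d + 1) × (Fin (d + 1) → ℤ)) (hlab : ∀ j, lab j ∈ Lab d m)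
    (hcard : ∀ c ∈ Lab d m, |((univ.filter fun j => lab j = c).card : ℝ) - N * ∫ y, ρ c y ∂nu d| ≤ 1)
    (P : MvPolynomial (Fin (d + 1)) ℝ) (hP : P.totalDegree ≤ n) (hP0 : ∫ y, MvPolynomial.eval y P ∂nu d = 0)
    (hC5 : J P ≤ C5 * S P)
    (z : Fin N → Fin (d + 1) → ℝ) (hz : ∀ j, z j ∈ Kc m (lab j))
    (hfirst : ∀ j, ∀ v ∈ Kc m (lab j), 0 ≤ ∑ a, (v a - z j a) * Bv P (z j) a)
    {c1 C2 : ℝ} (hc1 : c1 = 1 / (24 * (d + 1))) (hC2 : C2 = 9 * (2 * d + 3) + 3 * (d + 1) ^ 2) :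
    ∑ j, H P (z j) ≤ S P * (N * (-(c1 * (1 / m)) + C2 * (1 / m) ^ 2 * C3 * CM * (1 + (d + 1) ^ 2 * (2 * n))) +
      CM * m ^ d * (C5 + c1 * (1 / m) + C2 * (1 / m) ^ 2 * (1 + (d + 1) ^ 2 * (2 * n)))) := by
  have hm0 : (0:ℝ) < m := by exact_mod_cast hm
  obtain ⟨η, hη⟩ : ∃ η : ℝ, η = 1 / m := ⟨_, rfl⟩
  have hη0 : 0 < η := by rw [hη]; positivity
  have hc10 : 0 < c1 := by rw [hc1]; positivity
  have hC20 : 0 < C2 := by rw [hC2]; positivity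
  rw [← hη]
  obtain ⟨R, hR⟩ : ∃ R : ℝ, R = 1 + (d + 1) ^ 2 * (2 * n) := ⟨_, rfl⟩
  have hR0 : 0 < R := by rw [hR]; positivity
  rw [← hR]
  have hq : ∀ c ∈ Lab d m, ∀ u ∈ Kc m c, q u ≠ 0 := fun c hc u hu => by
    have := Kc_q hm hc hu; linarith
  -- maxima of the derivatives
  have hu : ∀ c, ∃ u, c ∈ Lab d m → u ∈ Kc m c ∧ ∀ u' ∈ Kc m c, G1 P u' + G2 P u' ≤ G1 P u + G2 P u := by
    intro c
    by_cases hc : c ∈ Lab d m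
    · obtain ⟨u, hu, hmax⟩ := (Kc_compact m c).exists_isMaxOn ((Ic_nonempty hm c).mono (Ic_sub_Kc hm c))
        (f := fun u => G1 P u + G2 P u) (fun u hu => ((continuousAt_G1 P (hq c hc u hu)).add
          (continuousAt_G2 P (hq c hc u hu))).continuousWithinAt)
      exact ⟨u, fun _ => ⟨hu, fun u' hu' => hmax hu'⟩⟩
    · exact ⟨0, fun h => absurd h hc⟩
  choose u hu using hu
  have hmax := fun c hc => (hu c hc).2
  have huK := fun c hc => (hu c hc).1
  obtain ⟨M, hM⟩ : ∃ M : Fin (d + 1) × (Fin (d + 1) → ℤ) → ℝ, M = fun c => G1 P (u c) + G2 P (u c) := ⟨_, rfl⟩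
  have hM0 : ∀ c, 0 ≤ M c := fun c => by rw [hM]; exact add_nonneg (G1_nonneg _ _) (G2_nonneg _ _)
  have hMle : ∀ c ∈ Lab d m, ∀ u' ∈ Kc m c, G1 P u' + G2 P u' ≤ M c := fun c hc u' hu' => by
    rw [hM]; exact hmax c hc u' hu'
  have hMsum : ∑ c ∈ Lab d m, M c ≤ CM * m ^ d * (R * S P) := by
    have h1 := MZ1 hCM hn u (hMZ u huK) P hP
    have h2 := MZ2 hCM hn u (hMZ u huK) P hP
    rw [hM, Finset.sum_add_distrib]
    calc _ ≤ _ := add_le_add h1 h2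
      _ = _ := by rw [hR]; ring
  -- minimisers of the comparison function
  obtain ⟨φ, hφ⟩ : ∃ φ : Fin (d + 1) × (Fin (d + 1) → ℤ) → (Fin (d + 1) → ℝ) → ℝ,
      φ = fun c v => H P v - c1 * η * G1 P v + C2 * η ^ 2 * M c := ⟨_, rfl⟩
  have hv : ∀ c, ∃ v, c ∈ Lab d m → v ∈ Ic m c ∧ ∀ v' ∈ Ic m c, φ c v ≤ φ c v' := by
    intro c
    by_cases hc : c ∈ Lab d m
    · obtain ⟨v, hv, hmin⟩ := (Ic_compact m c).exists_isMinOn (Ic_nonempty hm c)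
        (f := φ c) (fun v hv => by
          have hqv := hq c hc v (Ic_sub_Kc hm c hv)
          rw [hφ]
          exact (((continuousAt_H P hqv).sub (continuousAt_const.mul (continuousAt_G1 P hqv))).add
            continuousAt_const).continuousWithinAt)
      exact ⟨v, fun _ => ⟨hv, fun v' hv' => hmin hv'⟩⟩
    · exact ⟨0, fun h => absurd h hc⟩
  choose v hv using hv
  have hvK : ∀ c ∈ Lab d m, v c ∈ Kc m c := fun c hc => Ic_sub_Kc hm c (hv c hc).1
  obtain ⟨f, hf⟩ : ∃ f : Fin (d + 1) × (Fin (d + 1) → ℤ) → ℝ, f = fun c => φ c (v c) := ⟨_, rfl⟩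
  obtain ⟨p, hp⟩ : ∃ p : Fin (d + 1) × (Fin (d + 1) → ℤ) → ℝ, p = fun c => ∫ y, ρ c y ∂nu d := ⟨_, rfl⟩
  -- local inequality
  have hloc : ∀ j, H P (z j) ≤ f (lab j) := by
    intro j
    have := local_ineq hm P (hlab j) (hz j) (hfirst j) (hMle _ (hlab j)) (hv _ (hlab j)).1
    rw [hf, hφ, hη, hc1, hC2]
    exact this
  have hstep1 : ∑ j, H P (z j) ≤ ∑ c ∈ Lab d m, ((univ.filter fun j => lab j = c).card : ℝ) * f c := by
    rw [← Finset.sum_fiberwise_of_maps_to (fun j _ => hlab j)]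
    refine Finset.sum_le_sum fun c hc => ?_
    calc _ ≤ ∑ j ∈ univ.filter (fun j => lab j = c), f c := by
          refine Finset.sum_le_sum fun j hj => ?_
          rw [← (Finset.mem_filter.1 hj).2]; exact hloc j
      _ = _ := by rw [Finset.sum_const, nsmul_eq_mul]
  have hstep2 : ∀ c ∈ Lab d m, ((univ.filter fun j => lab j = c).card : ℝ) * f c ≤ N * (p c * f c) + |f c| := by
    intro c hc
    have h1 := hcard c hc
    have h2 : (((univ.filter fun j => lab j = c).card : ℝ) - N * p c) * f c ≤ |f c| := by
      calc _ ≤ |(((univ.filter fun j => lab j = c).card : ℝ) - N * p c) * f c| := le_abs_self _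
        _ = |((univ.filter fun j => lab j = c).card : ℝ) - N * p c| * |f c| := abs_mul _ _
        _ ≤ 1 * |f c| := by rw [hp]; exact mul_le_mul_of_nonneg_right h1 (abs_nonneg _)
        _ = _ := one_mul _
    linarith
  -- the integral
  have hgi : Integrable (fun y => MvPolynomial.eval y P - c1 * η * g1 P y) (nu d) :=
    (integrable_eval P).sub ((integrable_g1 P).const_mul _)
  have hρle : ∀ c ∈ Lab d m, ∀ y, ‖ρ c y‖ ≤ 1 := by
    intro c hc y
    rw [Real.norm_of_nonneg (hρ c hc y).1]
    exact (hρ c hc y).2.trans (Set.indicator_le_self' (fun _ _ => zero_le_one) y)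
  have hρi : ∀ c ∈ Lab d m, Integrable (ρ c) (nu d) := fun c hc =>
    Integrable.of_bound (hρm c).aestronglyMeasurable 1 (Filter.Eventually.of_forall (hρle c hc))
  have hρgi : ∀ c ∈ Lab d m, Integrable (fun y => ρ c y * (MvPolynomial.eval y P - c1 * η * g1 P y)) (nu d) := fun c hc =>
    hgi.bdd_mul (hρm c).aestronglyMeasurable (Filter.Eventually.of_forall (hρle c hc))
  have hintg : ∀ c ∈ Lab d m, p c * f c ≤ ∫ y, ρ c y * (MvPolynomial.eval y P - c1 * η * g1 P y) ∂nu d + C2 * η ^ 2 * M c * p c := by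
    intro c hc
    have h1 : p c * f c = ∫ y, ρ c y * f c ∂nu d := by rw [integral_mul_const, hp]
    have h2 : ∫ y, ρ c y * (MvPolynomial.eval y P - c1 * η * g1 P y) ∂nu d + C2 * η ^ 2 * M c * p c =
        ∫ y, (ρ c y * (MvPolynomial.eval y P - c1 * η * g1 P y) + C2 * η ^ 2 * M c * ρ c y) ∂nu d := by
      rw [integral_add (hρgi c hc) ((hρi c hc).const_mul _), integral_const_mul, hp]
    rw [h1, h2]
    refine integral_mono_ae ((hρi c hc).mul_const _) ((hρgi c hc).add ((hρi c hc).const_mul _)) ?_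
    filter_upwards [nu_ae d] with y hy
    by_cases hyc : y ∈ Cell m c
    · obtain ⟨w, hw, hwy⟩ := Cell_proj hm hc hyc
      rw [nz_of_q hy] at hwy
      have h3 := (hv c hc).2 w hw
      have h4 : φ c w = MvPolynomial.eval y P - c1 * η * g1 P y + C2 * η ^ 2 * M c := by
        have h5 : H P w = MvPolynomial.eval y P := by unfold H; rw [hwy]
        have h6 : G1 P w = g1 P y := by rw [← hwy]; rfl
        rw [hφ]; simp only; rw [h5, h6]
      have h7 : f c ≤ MvPolynomial.eval y P - c1 * η * g1 P y + C2 * η ^ 2 * M c := by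
        rw [← h4, hf]; exact h3
      calc _ ≤ _ := mul_le_mul_of_nonneg_left h7 (hρ c hc y).1
        _ = _ := by ring
    · have h0 : ρ c y = 0 := by
        have := hρ c hc y
        rw [Set.indicator_of_notMem hyc] at this
        linarith [this.1, this.2]
      simp [h0]
  have hsumint : ∑ c ∈ Lab d m, ∫ y, ρ c y * (MvPolynomial.eval y P - c1 * η * g1 P y) ∂nu d = -(c1 * η) * S P := by
    rw [← integral_finsetSum _ hρgi]
    have : ∫ y, ∑ c ∈ Lab d m, ρ c y * (MvPolynomial.eval y P - c1 * η * g1 P y) ∂nu d =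
        ∫ y, (MvPolynomial.eval y P - c1 * η * g1 P y) ∂nu d := by
      refine integral_congr_ae ?_
      filter_upwards [nu_ae d] with y hy
      rw [← Finset.sum_mul, hρ1 y (by rw [hy]; exact one_ne_zero), one_mul]
    rw [this, integral_sub (integrable_eval P) ((integrable_g1 P).const_mul _), hP0, integral_const_mul, integral_g1]
    ring
  have hpm : ∀ c ∈ Lab d m, p c ≤ C3 * η ^ d := by
    intro c hc
    have h1 : p c ≤ (nu d).real (Cell m c) := by
      have h2 : ∫ y, (Cell m c).indicator (1 : (Fin (d + 1) → ℝ) → ℝ) y ∂nu d = (nu d).real (Cell m c) :=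
        integral_indicator_one (measurableSet_Cell m c)
      rw [← h2, hp]
      exact integral_mono (hρi c hc) ((integrable_const (1:ℝ)).indicator (measurableSet_Cell m c)) fun y => (hρ c hc y).2
    have h2 := hC3 c hc
    have h3 : (m:ℝ) ^ d * η ^ d = 1 := by rw [← mul_pow, hη, mul_one_div_cancel hm0.ne', one_pow]
    calc p c ≤ (nu d).real (Cell m c) := h1
      _ = (nu d).real (Cell m c) * m ^ d * η ^ d := by rw [mul_assoc, h3, mul_one]
      _ ≤ _ := mul_le_mul_of_nonneg_right h2 (by positivity)
  have hA : ∑ c ∈ Lab d m, p c * f c ≤ -(c1 * η) * S P + C2 * η ^ 2 * C3 * CM * R * S P := by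
    have hC30 : ∀ c ∈ Lab d m, 0 ≤ C3 := fun c hc => le_trans (by positivity) (hC3 c hc)
    have h3 : η ^ d * (m:ℝ) ^ d = 1 := by rw [← mul_pow, hη, one_div_mul_cancel hm0.ne', one_pow]
    have h4 : ∑ c ∈ Lab d m, C2 * η ^ 2 * M c * p c ≤ C2 * η ^ 2 * C3 * CM * R * S P := by
      rcases (Lab d m).eq_empty_or_nonempty with he | ⟨c0, hc0⟩
      · have := hρ1 1 (by unfold q; simp; positivity)
        rw [he] at this; simp at this
      · have hC3' := hC30 c0 hc0
        calc _ ≤ ∑ c ∈ Lab d m, C2 * η ^ 2 * M c * (C3 * η ^ d) :=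
              Finset.sum_le_sum fun c hc => mul_le_mul_of_nonneg_left (hpm c hc) (mul_nonneg (by positivity) (hM0 c))
          _ = C2 * η ^ 2 * (C3 * η ^ d) * ∑ c ∈ Lab d m, M c := by
              rw [Finset.mul_sum]; exact Finset.sum_congr rfl fun c _ => by ring
          _ ≤ C2 * η ^ 2 * (C3 * η ^ d) * (CM * m ^ d * (R * S P)) := mul_le_mul_of_nonneg_left hMsum (by positivity)
          _ = C2 * η ^ 2 * C3 * CM * R * S P * (η ^ d * m ^ d) := by ring
          _ = _ := by rw [h3, mul_one]
    calc _ ≤ _ := Finset.sum_le_sum hintg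
      _ = _ := Finset.sum_add_distrib
      _ ≤ _ := by rw [hsumint]; linarith
  have hB : ∑ c ∈ Lab d m, |f c| ≤ CM * m ^ d * (C5 * S P) + c1 * η * (CM * m ^ d * S P) + C2 * η ^ 2 * (CM * m ^ d * (R * S P)) := by
    have h1 := hMZ v hvK P hP
    have h2 := MZ1 hCM hn v (hMZ v hvK) P hP
    have h3 : ∀ c ∈ Lab d m, |f c| ≤ |H P (v c)| + c1 * η * G1 P (v c) + C2 * η ^ 2 * M c := by
      intro c _
      have ha : 0 ≤ c1 * η * G1 P (v c) := mul_nonneg (by positivity) (G1_nonneg _ _)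
      have hb : 0 ≤ C2 * η ^ 2 * M c := mul_nonneg (by positivity) (hM0 c)
      have hc := neg_abs_le (H P (v c))
      have hd := le_abs_self (H P (v c))
      rw [hf, hφ, abs_le]; constructor <;> simp only <;> linarith
    calc _ ≤ _ := Finset.sum_le_sum h3
      _ = ∑ c ∈ Lab d m, |H P (v c)| + c1 * η * ∑ c ∈ Lab d m, G1 P (v c) + C2 * η ^ 2 * ∑ c ∈ Lab d m, M c := by
          rw [Finset.sum_add_distrib, Finset.sum_add_distrib, ← Finset.mul_sum, ← Finset.mul_sum]
      _ ≤ _ := by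
          refine add_le_add (add_le_add (h1.trans (mul_le_mul_of_nonneg_left hC5 (by positivity))) ?_) ?_
          · exact mul_le_mul_of_nonneg_left h2 (by positivity)
          · exact mul_le_mul_of_nonneg_left hMsum (by positivity)
  calc _ ≤ _ := hstep1
    _ ≤ _ := Finset.sum_le_sum hstep2
    _ = N * ∑ c ∈ Lab d m, p c * f c + ∑ c ∈ Lab d m, |f c| := by rw [Finset.sum_add_distrib, ← Finset.mul_sum]
    _ ≤ N * (-(c1 * η) * S P + C2 * η ^ 2 * C3 * CM * R * S P) + (CM * m ^ d * (C5 * S P) + c1 * η * (CM * m ^ d * S P) + C2 * η ^ 2 * (CM * m ^ d * (R * S P))) :=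
        add_le_add (mul_le_mul_of_nonneg_left hA (Nat.cast_nonneg _)) hB
    _ = _ := by ring

end SD

end

section

open MeasureTheory Finset
open scoped ENNReal

namespace SD

/-- Exponents of degree at most `n`. -/
noncomputable def Texp (d n : ℕ) : Finset (Fin (d + 1) →₀ ℕ) := (range (n + 1)).biUnion fun k => finsuppAntidiag univ k

lemma mem_Texp {d n : ℕ} {α : Fin (d + 1) →₀ ℕ} : α ∈ Texp d n ↔ (α.sum fun _ e => e) ≤ n := by
  unfold Texp
  rw [Finsupp.sum_fintype _ _ (fun _ => rfl)]
  simp [mem_finsuppAntidiag]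

/-- Mean-zero monomials. -/
noncomputable def em {d : ℕ} (α : Fin (d + 1) →₀ ℕ) : MvPolynomial (Fin (d + 1)) ℝ :=
  MvPolynomial.monomial α 1 - MvPolynomial.C (∫ y, MvPolynomial.eval y (MvPolynomial.monomial α (1:ℝ)) ∂nu d)

lemma em_degree {d n : ℕ} {α : Fin (d + 1) →₀ ℕ} (h : α ∈ Texp d n) : (em α).totalDegree ≤ n := by
  unfold em
  refine (MvPolynomial.totalDegree_sub _ _).trans (max_le ?_ ?_)
  · rw [MvPolynomial.totalDegree_monomial _ one_ne_zero]
    exact mem_Texp.1 h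
  · simp

lemma em_int {d : ℕ} (α : Fin (d + 1) →₀ ℕ) : ∫ y, MvPolynomial.eval y (em α) ∂nu d = 0 := by
  unfold em
  simp only [map_sub, MvPolynomial.eval_C]
  rw [integral_sub (integrable_eval _) (integrable_const _)]
  simp

lemma eval_expand {d : ℕ} (P : MvPolynomial (Fin (d + 1)) ℝ) (y : Fin (d + 1) → ℝ) :
    MvPolynomial.eval y P = ∑ α ∈ P.support, P.coeff α * MvPolynomial.eval y (MvPolynomial.monomial α (1:ℝ)) := by
  conv_lhs => rw [P.as_sum, map_sum]
  exact Finset.sum_congr rfl fun α _ => by simp [MvPolynomial.eval_monomial]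

lemma design_of {d n N : ℕ} (hN : 0 < N) (z : Fin N → Fin (d + 1) → ℝ) (hz : ∀ j, q (z j) ≠ 0)
    (h : ∀ α ∈ Texp d n, ∑ j, H (em α) (z j) = 0) : ∃ x : Fin N → Sph d, IsSphericalDesign d n N x := by
  have hq : ∀ j, q (nz (z j)) = 1 := fun j => by
    rw [← nz_sq (hz j)]; unfold q; exact Finset.sum_congr rfl fun _ _ => pow_two _
  refine ⟨fun j => mkS (nz (z j)) (hq j), fun P hP => ?_⟩
  rw [integral_muSph]
  have h0 : ∀ j, MvPolynomial.eval (fun i => ((mkS (nz (z j)) (hq j) : Sph d) : Euc d) i) P = MvPolynomial.eval (nz (z j)) P :=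
    fun j => rfl
  simp only [h0]
  have hN0 : (N:ℝ) ≠ 0 := by positivity
  have h1 : ∀ α ∈ Texp d n, ∑ j, MvPolynomial.eval (nz (z j)) (MvPolynomial.monomial α (1:ℝ)) =
      N * ∫ y, MvPolynomial.eval y (MvPolynomial.monomial α (1:ℝ)) ∂nu d := by
    intro α hα
    have := h α hα
    unfold H em at this
    simp only [map_sub, MvPolynomial.eval_C, Finset.sum_sub_distrib, Finset.sum_const, Finset.card_univ, Fintype.card_fin, nsmul_eq_mul] at this
    linarith
  have h2 : ∑ j, MvPolynomial.eval (nz (z j)) P = N * ∫ y, MvPolynomial.eval y P ∂nu d := by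
    simp only [eval_expand P]
    rw [integral_finsetSum _ (fun α _ => (integrable_eval _).const_mul _), Finset.sum_comm, Finset.mul_sum]
    refine Finset.sum_congr rfl fun α hα => ?_
    rw [← Finset.mul_sum, h1 α (mem_Texp.2 ((MvPolynomial.le_totalDegree hα).trans hP)), integral_const_mul]
    ring
  rw [h2, inv_mul_cancel_left₀ hN0]

set_option maxHeartbeats 2000000 in
lemma core {d : ℕ} (hd : 1 ≤ d) : ∃ c : ℝ, 0 < c ∧ ∀ n N : ℕ, 1 ≤ n → c * (n:ℝ) ^ (d + 1) ≤ N →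
    ∃ x : Fin N → Sph d, IsSphericalDesign d n N x := by
  classical
  obtain ⟨CM, hCM, hMZ⟩ := MZR d
  obtain ⟨C3, hC3, hcell⟩ := Cell_meas d
  obtain ⟨C5, hC5, hpoin⟩ := poincareR hd
  obtain ⟨c1, hc1⟩ : ∃ c1 : ℝ, c1 = 1 / (24 * (d + 1)) := ⟨_, rfl⟩
  obtain ⟨C2, hC2⟩ : ∃ C2 : ℝ, C2 = 9 * (2 * d + 3) + 3 * (d + 1) ^ 2 := ⟨_, rfl⟩
  have hc10 : 0 < c1 := by rw [hc1]; positivity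
  have hC20 : 0 < C2 := by rw [hC2]; positivity
  obtain ⟨B, hB⟩ : ∃ B : ℝ, B = 1 + (d + 1) ^ 2 * 2 := ⟨_, rfl⟩
  have hB0 : 0 < B := by rw [hB]; positivity
  obtain ⟨A, hA⟩ := exists_nat_gt (2 * (C2 * C3 * CM * B) / c1)
  have hA0 : (0:ℝ) < A := lt_trans (by positivity) hA
  have hA1 : 1 ≤ A := by exact_mod_cast hA0
  obtain ⟨K, hK⟩ : ∃ K : ℝ, K = C5 + c1 + C2 * B := ⟨_, rfl⟩
  have hK0 : 0 < K := by rw [hK]; positivity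
  refine ⟨2 * CM * K * A ^ (d + 1) / c1, by positivity, fun n N hn hN => ?_⟩
  have hn0 : (1:ℝ) ≤ n := by exact_mod_cast hn
  have hNpos : 0 < N := by
    have : (0:ℝ) < N := lt_of_lt_of_le (by positivity) hN
    exact_mod_cast this
  obtain ⟨m, hm⟩ : ∃ m : ℕ, m = A * n := ⟨_, rfl⟩
  have hm1 : 1 ≤ m := by rw [hm]; exact Nat.mul_pos hA1 hn
  have hnm : n ≤ m := by rw [hm]; exact Nat.le_mul_of_pos_left n hA1
  have hm0 : (0:ℝ) < m := by exact_mod_cast hm1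
  obtain ⟨ρ, hρm, hρ, hρ1⟩ := partition (d := d) hm1
  have hρle : ∀ c ∈ Lab d m, ∀ y, ‖ρ c y‖ ≤ 1 := by
    intro c hc y
    rw [Real.norm_of_nonneg (hρ c hc y).1]
    exact (hρ c hc y).2.trans (Set.indicator_le_self' (fun _ _ => zero_le_one) y)
  have hρi : ∀ c ∈ Lab d m, Integrable (ρ c) (nu d) := fun c hc =>
    Integrable.of_bound (hρm c).aestronglyMeasurable 1 (Filter.Eventually.of_forall (hρle c hc))
  have hp1 : ∑ c ∈ Lab d m, ∫ y, ρ c y ∂nu d = 1 := by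
    rw [← integral_finsetSum _ hρi]
    have : ∫ y, ∑ c ∈ Lab d m, ρ c y ∂nu d = ∫ y, (1:ℝ) ∂nu d := by
      refine integral_congr_ae ?_
      filter_upwards [nu_ae d] with y hy
      exact hρ1 y (by rw [hy]; exact one_ne_zero)
    rw [this]; simp
  obtain ⟨lab, hlab, hcard⟩ := labelling (Lab d m) (fun c => ∫ y, ρ c y ∂nu d)
    (fun c hc => integral_nonneg fun y => (hρ c hc y).1) hp1 N
  obtain ⟨z, hz, hfirst⟩ := minimize hm1 lab hlab (Texp d n) em
  obtain ⟨s, hs⟩ : ∃ s : (Fin (d + 1) →₀ ℕ) → ℝ, s = fun α => ∑ j, H (em α) (z j) := ⟨_, rfl⟩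
  obtain ⟨P, hP⟩ : ∃ P, P = ∑ α ∈ Texp d n, MvPolynomial.C (s α) * em α := ⟨_, rfl⟩
  have hfirst' : ∀ j, ∀ v ∈ Kc m (lab j), 0 ≤ ∑ a, (v a - z j a) * Bv P (z j) a := by
    rw [hP, hs]; exact hfirst
  have hPdeg : P.totalDegree ≤ n := by
    rw [hP]
    refine MvPolynomial.totalDegree_finsetSum_le fun α hα => ?_
    refine (MvPolynomial.totalDegree_mul _ _).trans ?_
    rw [MvPolynomial.totalDegree_C, zero_add]
    exact em_degree hα
  have hPint : ∫ y, MvPolynomial.eval y P ∂nu d = 0 := by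
    rw [hP]
    simp only [map_sum, map_mul, MvPolynomial.eval_C]
    rw [integral_finsetSum _ (fun α _ => (integrable_eval _).const_mul _)]
    exact Finset.sum_eq_zero fun α _ => by rw [integral_const_mul, em_int, mul_zero]
  have hen := energy hm1 hn hCM (hMZ m n hn hnm) (hcell m hm1) ρ hρm hρ hρ1 lab hlab hcard P hPdeg hPint
    (hpoin P hPint) z hz hfirst' hc1 hC2
  have hE : ∑ j, H P (z j) = ∑ α ∈ Texp d n, s α ^ 2 := by
    rw [hP]
    simp only [H_sum]
    rw [Finset.sum_comm]
    refine Finset.sum_congr rfl fun α _ => ?_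
    rw [← Finset.mul_sum, pow_two, hs]
  have hneg : N * (-(c1 * (1 / m)) + C2 * (1 / m) ^ 2 * C3 * CM * (1 + (d + 1) ^ 2 * (2 * n))) +
      CM * m ^ d * (C5 + c1 * (1 / m) + C2 * (1 / m) ^ 2 * (1 + (d + 1) ^ 2 * (2 * n))) ≤ 0 := by
    obtain ⟨η, hη⟩ : ∃ η : ℝ, η = 1 / m := ⟨_, rfl⟩
    have hη0 : 0 < η := by rw [hη]; positivity
    have hηm : η * m = 1 := by rw [hη]; exact one_div_mul_cancel hm0.ne'
    have hηA : η * n * A = 1 := by rw [← hηm, hm]; push_cast; ring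
    have hη1 : η ≤ 1 := by rw [hη, div_le_one hm0]; exact_mod_cast hm1
    have hηn : η * n ≤ 1 := by
      have : (1:ℝ) ≤ A := by exact_mod_cast hA1
      nlinarith [mul_nonneg hη0.le (zero_le_one.trans hn0)]
    have hR : (1 + (d + 1) ^ 2 * (2 * n) : ℝ) ≤ B * n := by rw [hB]; nlinarith [hn0]
    rw [← hη]
    have e1 : C2 * η ^ 2 * C3 * CM * (1 + (d + 1) ^ 2 * (2 * n)) ≤ c1 * η / 2 := by
      calc _ ≤ C2 * η ^ 2 * C3 * CM * (B * n) := mul_le_mul_of_nonneg_left hR (by positivity)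
        _ = η * (η * n) * (C2 * C3 * CM * B) := by ring
        _ ≤ η * (η * n) * (A * c1 / 2) := by
            refine mul_le_mul_of_nonneg_left ?_ (by positivity)
            rw [div_lt_iff₀ hc10] at hA; linarith
        _ = c1 * η / 2 * (η * n * A) := by ring
        _ = _ := by rw [hηA, mul_one]
    have e2 : C5 + c1 * η + C2 * η ^ 2 * (1 + (d + 1) ^ 2 * (2 * n)) ≤ K := by
      have : C2 * η ^ 2 * (1 + (d + 1) ^ 2 * (2 * n)) ≤ C2 * B := by
        calc _ ≤ C2 * η ^ 2 * (B * n) := mul_le_mul_of_nonneg_left hR (by positivity)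
          _ = C2 * B * (η * (η * n)) := by ring
          _ ≤ C2 * B * (1 * 1) := by gcongr
          _ = _ := by ring
      have h2 : c1 * η ≤ c1 := by nlinarith
      rw [hK]; linarith
    have e3 : CM * m ^ d * K ≤ N * (c1 * η / 2) := by
      have h1 : 2 * CM * K * (m:ℝ) ^ (d + 1) ≤ N * c1 := by
        have : 2 * CM * K * A ^ (d + 1) / c1 * (n:ℝ) ^ (d + 1) = 2 * CM * K * (m:ℝ) ^ (d + 1) / c1 := by
          rw [hm]; push_cast; rw [mul_pow]; ring
        rw [this, div_le_iff₀ hc10] at hN; exact hN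
      calc CM * m ^ d * K = (2 * CM * K * (m:ℝ) ^ (d + 1)) * (η / 2) + CM * m ^ d * K * (1 - η * m) := by ring
        _ = (2 * CM * K * (m:ℝ) ^ (d + 1)) * (η / 2) := by rw [hηm]; ring
        _ ≤ N * c1 * (η / 2) := mul_le_mul_of_nonneg_right h1 (by positivity)
        _ = _ := by ring
    calc _ ≤ N * (-(c1 * η) + c1 * η / 2) + CM * m ^ d * K := by gcongr
      _ ≤ 0 := by linarith
  have hfin : ∑ α ∈ Texp d n, s α ^ 2 ≤ 0 := by
    rw [← hE]
    exact hen.trans (mul_nonpos_of_nonneg_of_nonpos (S_nonneg P) hneg)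
  have hzero : ∀ α ∈ Texp d n, s α ^ 2 = 0 :=
    (Finset.sum_eq_zero_iff_of_nonneg fun α _ => sq_nonneg _).1 (le_antisymm hfin (Finset.sum_nonneg fun α _ => sq_nonneg _))
  refine design_of hNpos z (fun j => ?_) fun α hα => ?_
  · have := Kc_q hm1 (hlab j) (hz j); linarith
  · have := pow_eq_zero_iff (two_ne_zero) |>.1 (hzero α hα)
    rw [hs] at this; exact this

theorem main (d : ℕ) (hd : 1 ≤ d) :
    ∃ c : ℝ, 0 < c ∧ ∀ n N : ℕ, 1 ≤ n →
      c * (n : ℝ) ^ ((2 * (d : ℝ) * (d + 1)) / (d + 2)) ≤ (N : ℝ) →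
      ∃ x : Fin N → Sph d, IsSphericalDesign d n N x := by
  rcases hd.eq_or_lt with rfl | hd2
  · exact case_one
  · obtain ⟨c, hc, h⟩ := core hd
    refine ⟨c, hc, fun n N hn hN => h n N hn (le_trans ?_ hN)⟩
    refine mul_le_mul_of_nonneg_left ?_ hc.le
    rw [← Real.rpow_natCast]
    refine Real.rpow_le_rpow_of_exponent_le (by exact_mod_cast hn) ?_
    have : (2:ℝ) ≤ d := by exact_mod_cast hd2
    rw [le_div_iff₀ (by positivity)]
    push_cast
    nlinarith

end SD

end

/-- For every `d ≥ 1` there is a constant `c_d > 0` such that for every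
`n ≥ 1` and every `N ≥ c_d · n^{2d(d+1)/(d+2)}` there exist `N` points on `S^d` forming a
spherical `n`-design. -/
theorem statement0 (d : ℕ) (hd : 1 ≤ d) :
    ∃ c : ℝ, 0 < c ∧ ∀ n N : ℕ, 1 ≤ n →
      c * (n : ℝ) ^ ((2 * (d : ℝ) * (d + 1)) / (d + 2)) ≤ (N : ℝ) →
      ∃ x : Fin N → Sph d, IsSphericalDesign d n N x := by
  exact SD.main d hd
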